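/- For all n sufficiently large (n a multiple of 4) there exists a distribution in an NSSBM family on which unnormalized spectral bisection is strongly consistent, while normalized spectral bisection (with either the symmetric normalized Laplacian 𝓛_sym or the random-walk Laplacian 𝓛_rw) misclassifies at least a 24% fraction of the vertices with probability at least 1 − 1/n. Concretely, this holds for the nested block instance with parameters p ≥ c·log n / n, p/q = α ≥ 2 a constant, K ≥ 3α, where edges within L1 and within L2 appear independently with probability Kp, edges between L1 and L2 and within R appear independently with probability p, and edges between L = L1 ∪ L2 and R appear independently with probability q. -/

import Mathlib

open Matrix MeasureTheory
open scoped BigOperators ENNReal Classical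

noncomputable section

instance measSG {n : ℕ} : MeasurableSpace (SimpleGraph (Fin n)) := ⊤

variable {n : ℕ}

/-- Adjacency matrix of a graph, over `ℝ`. -/
def adjM (G : SimpleGraph (Fin n)) : Matrix (Fin n) (Fin n) ℝ :=
  Matrix.of fun v w => if G.Adj v w then 1 else 0

/-- Laplacian of a weighted adjacency matrix. -/
def wlap (W : Matrix (Fin n) (Fin n) ℝ) : Matrix (Fin n) (Fin n) ℝ :=
  Matrix.diagonal (fun v => ∑ w, W v w) - W

/-- Unnormalized Laplacian of a graph. -/
def lap (G : SimpleGraph (Fin n)) : Matrix (Fin n) (Fin n) ℝ := wlap (adjM G)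

/-- `eig M k` is the `(k+1)`-st smallest eigenvalue (root of the characteristic
polynomial, with multiplicity) of `M`; e.g. `eig M 1 = λ₂`. -/
def eig (M : Matrix (Fin n) (Fin n) ℝ) (k : ℕ) : ℝ :=
  (M.charpoly.roots.sort (· ≤ ·)).getD k 0

def IsUnitEigenvector (M : Matrix (Fin n) (Fin n) ℝ) (t : ℝ) (u : Fin n → ℝ) : Prop :=
  M.mulVec u = t • u ∧ ∑ v, (u v) ^ 2 = 1

/-- Membership in the first community `P₁ = {1, …, n/2}`. -/
def inP1 (n : ℕ) (v : Fin n) : Prop := (v : ℕ) < n / 2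

/-- `v` and `w` are in the same community. -/
def sameSide (n : ℕ) (v w : Fin n) : Prop := inP1 n v ↔ inP1 n w

/-- Number of neighbours of `v` in its own community. -/
def din (G : SimpleGraph (Fin n)) (v : Fin n) : ℕ :=
  Nat.card {w : Fin n // G.Adj v w ∧ sameSide n v w}

/-- Number of neighbours of `v` in the other community. -/
def dout (G : SimpleGraph (Fin n)) (v : Fin n) : ℕ :=
  Nat.card {w : Fin n // G.Adj v w ∧ ¬ sameSide n v w}

/-- Degree of `v`. -/
def deg (G : SimpleGraph (Fin n)) (v : Fin n) : ℕ :=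
  Nat.card {w : Fin n // G.Adj v w}

/-- `μ` samples each pair `(v,w)`, `v < w`, as an edge independently with probability `P v w`. -/
def IsEdgeProduct (P : Fin n → Fin n → ℝ) (μ : PMF (SimpleGraph (Fin n))) : Prop :=
  ∀ G : SimpleGraph (Fin n),
    μ G = ∏ e ∈ Finset.univ.filter (fun e : Fin n × Fin n => e.1 < e.2),
      (if G.Adj e.1 e.2 then ENNReal.ofReal (P e.1 e.2) else ENNReal.ofReal (1 - P e.1 e.2))

/-- The edge-probability matrix of a member of the `NSSBM(n,p,p̄,q)` family. -/
def NSSBMprob (n : ℕ) (p pbar q : ℝ) (P : Fin n → Fin n → ℝ) : Prop :=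
  (∀ v w, P v w = P w v) ∧
  (∀ v w : Fin n, v ≠ w → sameSide n v w → p ≤ P v w ∧ P v w ≤ pbar) ∧
  (∀ v w : Fin n, ¬ sameSide n v w → P v w = q)

/-- The ideal second eigenvector `u₂⋆`. -/
def u2star (n : ℕ) : Fin n → ℝ :=
  fun v => if inP1 n v then 1 / Real.sqrt n else -(1 / Real.sqrt n)

/-- Spectral bisection with matrix `M` recovers the planted partition of `G`. -/
def BisectCorrect (n : ℕ) (M : Matrix (Fin n) (Fin n) ℝ) : Prop :=
  ∀ u : Fin n → ℝ, IsUnitEigenvector M (eig M 1) u →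
    ({v : Fin n | u v < 0} = {v : Fin n | inP1 n v} ∨
     {v : Fin n | u v < 0} = {v : Fin n | ¬ inP1 n v})

/-- Off-diagonal part of the probability matrix: the expected adjacency matrix. -/
def offP (P : Fin n → Fin n → ℝ) : Matrix (Fin n) (Fin n) ℝ :=
  Matrix.of fun v w => if v = w then 0 else P v w

/-- Expected unnormalized Laplacian. -/
def expLap (P : Fin n → Fin n → ℝ) : Matrix (Fin n) (Fin n) ℝ := wlap (offP P)

/-- Euclidean norm. -/
def l2 (x : Fin n → ℝ) : ℝ := Real.sqrt (∑ v, (x v) ^ 2)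

/-- Inner product. -/
def dotp (x y : Fin n → ℝ) : ℝ := ∑ v, x v * y v

/-- Entrywise max (ℓ∞) norm. -/
def linf (x : Fin n → ℝ) : ℝ := ⨆ v, |x v|

/-- ℓ2 → ℓ2 operator norm of a matrix. -/
def opNorm (M : Matrix (Fin n) (Fin n) ℝ) : ℝ :=
  ‖LinearMap.toContinuousLinearMap (Matrix.toEuclideanLin M)‖

/-- The crossing edges of `μ` are independent `Bernoulli(q)`, while the internal
edges are arbitrary (possibly depending on the crossing edges). -/
def CrossingProduct (n : ℕ) (q : ℝ) (μ : PMF (SimpleGraph (Fin n))) : Prop :=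
  ∃ (ν : PMF (SimpleGraph (Fin n))) (κ : SimpleGraph (Fin n) → PMF (SimpleGraph (Fin n))),
    IsEdgeProduct (fun v w => if sameSide n v w then 0 else q) ν ∧
    (∀ H, ∀ G ∈ (κ H).support, ∀ v w, ¬ sameSide n v w → ((G.Adj v w) ↔ H.Adj v w)) ∧
    μ = ν.bind κ

/-- Symmetric normalized Laplacian `I - D^{-1/2} A D^{-1/2}` of a graph. -/
def lapSym (G : SimpleGraph (Fin n)) : Matrix (Fin n) (Fin n) ℝ :=
  1 - Matrix.diagonal (fun v => 1 / Real.sqrt (deg G v)) * adjM G *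
      Matrix.diagonal (fun v => 1 / Real.sqrt (deg G v))

/-- Random-walk normalized Laplacian `I - D⁻¹ A` of a graph. -/
def lapRW (G : SimpleGraph (Fin n)) : Matrix (Fin n) (Fin n) ℝ :=
  1 - Matrix.diagonal (fun v => ((deg G v : ℝ))⁻¹) * adjM G

/-- Membership in `L₁ = {1, …, n/4}`. -/
def inL1 (n : ℕ) (v : Fin n) : Prop := (v : ℕ) < n / 4

/-- Membership in `L₂ = {n/4+1, …, n/2}`. -/
def inL2 (n : ℕ) (v : Fin n) : Prop := n / 4 ≤ (v : ℕ) ∧ (v : ℕ) < n / 2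

/-- Edge probabilities of the nested block instance: `Kp` within `L₁` and within `L₂`,
`p` between `L₁` and `L₂` and within `R`, and `q` between `L = L₁ ∪ L₂` and `R`. -/
def nestedP (n : ℕ) (p q K : ℝ) : Fin n → Fin n → ℝ := fun v w =>
  if (inL1 n v ∧ inL1 n w) ∨ (inL2 n v ∧ inL2 n w) then K * p
  else if inP1 n v ∧ inP1 n w then p
  else if ¬ inP1 n v ∧ ¬ inP1 n w then p
  else q

/-- Misclassification rate of the bipartition `{S, Sᶜ}` with respect to the planted
partition `{P₁, P₂}`: the minimum over the two matchings of the fraction of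
incorrectly assigned vertices. -/
def misclassRate (n : ℕ) (S : Set (Fin n)) : ℝ :=
  ((min (symmDiff S {v : Fin n | inP1 n v}).ncard
        (symmDiff S {v : Fin n | ¬ inP1 n v}).ncard : ℕ) : ℝ) / n

/-- An orthonormal eigenbasis `b` of `M` with eigenvalues `l`. -/
structure IsEigenbasis (M : Matrix (Fin n) (Fin n) ℝ) (b : Fin n → Fin n → ℝ)
    (l : Fin n → ℝ) : Prop where
  mulVec_eq : ∀ i, M *ᵥ b i = l i • b i
  orthonormal : ∀ i j, b i ⬝ᵥ b j = if i = j then 1 else 0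
  expand : ∀ x : Fin n → ℝ, x = ∑ i, (x ⬝ᵥ b i) • b i
  roots_eq : M.charpoly.roots = Finset.univ.val.map l

theorem exists_isEigenbasis {M : Matrix (Fin n) (Fin n) ℝ} (hM : M.IsSymm) :
    ∃ b l, IsEigenbasis M b l := by
  have hH : M.IsHermitian := by
    rw [Matrix.IsHermitian, Matrix.conjTranspose_eq_transpose_of_trivial]; exact hM
  have hdot : ∀ x y : EuclideanSpace ℝ (Fin n), inner ℝ x y = x.ofLp ⬝ᵥ y.ofLp := by
    intro x y
    simp [PiLp.inner_apply, dotProduct, mul_comm]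
  refine ⟨fun i => (hH.eigenvectorBasis i).ofLp, hH.eigenvalues, ?_, ?_, ?_, ?_⟩
  · intro i
    exact hH.mulVec_eigenvectorBasis i
  · intro i j
    rw [← hdot]
    exact orthonormal_iff_ite.mp hH.eigenvectorBasis.orthonormal i j
  · intro x
    have h := hH.eigenvectorBasis.sum_repr' (WithLp.toLp 2 x)
    have h2 := congrArg WithLp.ofLp h
    simp only [WithLp.ofLp_sum, WithLp.ofLp_smul, hdot] at h2
    conv_lhs => rw [← h2]
    simp only [dotProduct_comm x]
  · have := hH.roots_charpoly_eq_eigenvalues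
    simpa [Function.comp_def] using this

namespace IsEigenbasis

variable {M : Matrix (Fin n) (Fin n) ℝ} {b : Fin n → Fin n → ℝ} {l : Fin n → ℝ}

theorem dot_eq (h : IsEigenbasis M b l) (x y : Fin n → ℝ) :
    x ⬝ᵥ y = ∑ i, (x ⬝ᵥ b i) * (y ⬝ᵥ b i) := by
  conv_lhs => rw [h.expand x]
  rw [sum_dotProduct]
  refine Finset.sum_congr rfl fun i _ => ?_
  rw [smul_dotProduct, smul_eq_mul, dotProduct_comm y]

theorem mulVec_dot (h : IsEigenbasis M b l) (hM : M.IsSymm) (x : Fin n → ℝ) (i : Fin n) :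
    (M *ᵥ x) ⬝ᵥ b i = l i * (x ⬝ᵥ b i) := by
  rw [dotProduct_comm, dotProduct_mulVec, ← mulVec_transpose, hM.eq, h.mulVec_eq i,
    smul_dotProduct, smul_eq_mul, dotProduct_comm]

theorem form_eq (h : IsEigenbasis M b l) (hM : M.IsSymm) (x : Fin n → ℝ) :
    x ⬝ᵥ M *ᵥ x = ∑ i, l i * (x ⬝ᵥ b i) ^ 2 := by
  rw [h.dot_eq]
  refine Finset.sum_congr rfl fun i _ => ?_
  rw [h.mulVec_dot hM]; ring

end IsEigenbasis

theorem symm_dot {M : Matrix (Fin n) (Fin n) ℝ} (hM : M.IsSymm) (x y : Fin n → ℝ) :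
    (M *ᵥ x) ⬝ᵥ y = x ⬝ᵥ M *ᵥ y := by
  rw [dotProduct_comm, dotProduct_mulVec, ← mulVec_transpose, hM.eq, dotProduct_comm]

theorem dot_self_nonneg (x : Fin n → ℝ) : 0 ≤ x ⬝ᵥ x :=
  Finset.sum_nonneg fun i _ => mul_self_nonneg (x i)

theorem dot_self_pos {x : Fin n → ℝ} (hx : x ≠ 0) : 0 < x ⬝ᵥ x := by
  refine lt_of_le_of_ne (dot_self_nonneg x) fun h => hx ?_
  exact dotProduct_self_eq_zero.mp h.symm

/-- If `l` has at least two indices with value at most `t`, the second smallest is at most `t`. -/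
theorem sort_getD_one_le {s : Multiset ℝ} {t : ℝ} (h : 2 ≤ (s.filter (· ≤ t)).card) :
    (s.sort (· ≤ ·)).getD 1 0 ≤ t := by
  set L := s.sort (· ≤ ·) with hL
  have hs : (L : Multiset ℝ) = s := Multiset.sort_eq _ _
  have hp : L.Pairwise (· ≤ ·) := Multiset.pairwise_sort _ _
  rw [← hs] at h
  clear_value L
  by_contra! hlt
  match L, hp, h, hlt with
  | [], _, h, _ => simp at h
  | [a], _, h, _ =>
    have := (Multiset.card_le_card (Multiset.filter_le (· ≤ t) (([a] : List ℝ) : Multiset ℝ)))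
    simp at this h
    omega
  | a :: b :: L', hp, h, hlt =>
    simp only [List.getD_cons_succ, List.getD_cons_zero] at hlt
    have hb : ∀ x ∈ b :: L', t < x := by
      intro x hx
      rcases List.mem_cons.mp hx with rfl | hx
      · exact hlt
      · exact hlt.trans_le ((List.pairwise_cons.mp (List.pairwise_cons.mp hp).2).1 x hx)
    have h0 : (b :: L').filter (fun x => decide (x ≤ t)) = [] := by
      rw [List.filter_eq_nil_iff]
      intro x hx
      simpa using hb x hx
    rw [Multiset.filter_coe, Multiset.coe_card, List.filter_cons] at h
    split_ifs at h
    · rw [h0] at h; simp at h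
    · rw [h0] at h; simp at h

theorem two_le_of_sort_getD_one_lt {s : Multiset ℝ} {t : ℝ} (hs : 2 ≤ s.card)
    (h : (s.sort (· ≤ ·)).getD 1 0 < t) : 2 ≤ (s.filter (· < t)).card := by
  set L := s.sort (· ≤ ·) with hL
  have hs' : (L : Multiset ℝ) = s := Multiset.sort_eq _ _
  have hp : L.Pairwise (· ≤ ·) := Multiset.pairwise_sort _ _
  rw [← hs'] at hs ⊢
  clear_value L
  match L, hp, h, hs with
  | [], _, h, hs => simp at hs
  | [a], _, h, hs => simp at hs
  | a :: b :: L', hp, h, hs =>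
    simp only [List.getD_cons_succ, List.getD_cons_zero] at h
    have ha : a < t := ((List.pairwise_cons.mp hp).1 b (by simp)).trans_lt h
    rw [Multiset.filter_coe, Multiset.coe_card, List.filter_cons, List.filter_cons]
    simp [ha, h]

theorem card_filter_map (l : Fin n → ℝ) (P : ℝ → Prop) :
    ((Finset.univ.val.map l).filter P).card = (Finset.univ.filter fun i => P (l i)).card := by
  rw [Multiset.filter_map, Multiset.card_map]
  rfl

theorem exists_combination_eq_zero (x y : ℝ) :
    ∃ a c : ℝ, 0 < a ^ 2 + c ^ 2 ∧ a * x + c * y = 0 := by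
  by_cases h : x = 0
  · exact ⟨1, 0, by norm_num, by simp [h]⟩
  · exact ⟨-y, x, by positivity, by ring⟩

/-- In the span of two eigenvectors there is a nonzero vector orthogonal to a given vector. -/
theorem IsEigenbasis.exists_combination {M : Matrix (Fin n) (Fin n) ℝ} {b : Fin n → Fin n → ℝ}
    {l : Fin n → ℝ} (hb : IsEigenbasis M b l) {i j : Fin n} (hij : i ≠ j) (f : Fin n → ℝ) :
    ∃ a c : ℝ, 0 < a ^ 2 + c ^ 2 ∧ (a • b i + c • b j) ⬝ᵥ f = 0 ∧
      (a • b i + c • b j) ⬝ᵥ (a • b i + c • b j) = a ^ 2 + c ^ 2 ∧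
      (a • b i + c • b j) ⬝ᵥ M *ᵥ (a • b i + c • b j) = l i * a ^ 2 + l j * c ^ 2 := by
  obtain ⟨a, c, hac, h0⟩ := exists_combination_eq_zero (b i ⬝ᵥ f) (b j ⬝ᵥ f)
  have hji : j ≠ i := hij.symm
  refine ⟨a, c, hac, ?_, ?_, ?_⟩
  · simpa [add_dotProduct] using h0
  · simp [add_dotProduct, dotProduct_add, hb.orthonormal, hij, hji]; ring
  · simp [add_dotProduct, dotProduct_add, mulVec_add, mulVec_smul, hb.mulVec_eq,
      hb.orthonormal, hij, hji]; ring

/-- Upper bound for the second eigenvalue from a two-dimensional test space. -/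
theorem eig_one_le {M : Matrix (Fin n) (Fin n) ℝ} (hM : M.IsSymm) {t : ℝ}
    (f g : Fin n → ℝ) (hfg : ∀ a b : ℝ, a • f + b • g = 0 → a = 0 ∧ b = 0)
    (h : ∀ a b : ℝ, (a • f + b • g) ⬝ᵥ M *ᵥ (a • f + b • g) ≤
      t * ((a • f + b • g) ⬝ᵥ (a • f + b • g))) :
    eig M 1 ≤ t := by
  obtain ⟨b, l, hb⟩ := exists_isEigenbasis hM
  unfold eig
  apply sort_getD_one_le
  rw [hb.roots_eq, card_filter_map]
  by_contra! hlt
  have h1 : (Finset.univ.filter fun i => l i ≤ t).card ≤ 1 := by omega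
  have h2 : ∃ e : Fin n → ℝ, ∀ i, l i ≤ t → b i = e := by
    by_cases hne : ∃ i, l i ≤ t
    · obtain ⟨i, hi⟩ := hne
      refine ⟨b i, fun j hj => ?_⟩
      rw [Finset.card_le_one.mp h1 j (by simpa using hj) i (by simpa using hi)]
    · exact ⟨0, fun i hi => (hne ⟨i, hi⟩).elim⟩
  obtain ⟨e, he⟩ := h2
  obtain ⟨a, c, hac, h0⟩ := exists_combination_eq_zero (f ⬝ᵥ e) (g ⬝ᵥ e)
  have hz : a • f + c • g ≠ 0 := by
    intro hz
    obtain ⟨rfl, rfl⟩ := hfg a c hz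
    norm_num at hac
  have hze : (a • f + c • g) ⬝ᵥ e = 0 := by simpa [add_dotProduct] using h0
  have hle := h a c
  generalize a • f + c • g = z at *
  have hpos := dot_self_pos hz
  rw [hb.form_eq hM, hb.dot_eq z z, Finset.mul_sum] at hle
  rw [hb.dot_eq z z] at hpos
  obtain ⟨i, -, hi⟩ := Finset.exists_lt_of_sum_lt (s := Finset.univ) (f := fun _ => (0 : ℝ))
    (g := fun i => z ⬝ᵥ b i * z ⬝ᵥ b i) (by simpa using hpos)
  refine absurd hle (not_le.mpr (Finset.sum_lt_sum (fun k _ => ?_) ⟨i, Finset.mem_univ _, ?_⟩))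
  · by_cases hk : l k ≤ t
    · rw [he k hk, hze]; simp
    · nlinarith [sq_nonneg (z ⬝ᵥ b k)]
  · by_cases hk : l i ≤ t
    · rw [he i hk, hze] at hi; simp at hi
    · nlinarith

/-- Lower bound for the second eigenvalue from a codimension-one test space. -/
theorem le_eig_one (hn : 2 ≤ n) {M : Matrix (Fin n) (Fin n) ℝ} (hM : M.IsSymm) {t : ℝ}
    (f : Fin n → ℝ) (h : ∀ z, z ⬝ᵥ f = 0 → t * (z ⬝ᵥ z) ≤ z ⬝ᵥ M *ᵥ z) :
    t ≤ eig M 1 := by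
  obtain ⟨b, l, hb⟩ := exists_isEigenbasis hM
  by_contra! hlt
  unfold eig at hlt
  have h2 := two_le_of_sort_getD_one_lt (by rw [hb.roots_eq]; simpa using hn) hlt
  rw [hb.roots_eq, card_filter_map] at h2
  obtain ⟨i, hi, j, hj, hij⟩ := Finset.one_lt_card.mp h2
  simp only [Finset.mem_filter, Finset.mem_univ, true_and] at hi hj
  obtain ⟨a, c, hac, h0, h1, h2⟩ := hb.exists_combination hij f
  have := h _ h0
  rw [h1, h2] at this
  rcases eq_or_ne a 0 with rfl | ha
  · nlinarith
  · nlinarith [mul_pos (sub_pos.mpr hi) (sq_pos_of_ne_zero ha),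
      mul_nonneg (sub_pos.mpr hj).le (sq_nonneg c)]

theorem l2_nonneg (x : Fin n → ℝ) : 0 ≤ l2 x := Real.sqrt_nonneg _

theorem l2_sq (x : Fin n → ℝ) : l2 x ^ 2 = x ⬝ᵥ x := by
  rw [l2, Real.sq_sqrt (Finset.sum_nonneg fun _ _ => sq_nonneg _)]
  exact Finset.sum_congr rfl fun _ _ => sq _

theorem abs_dot_le (x y : Fin n → ℝ) : |x ⬝ᵥ y| ≤ l2 x * l2 y := by
  apply abs_le_of_sq_le_sq _ (mul_nonneg (l2_nonneg x) (l2_nonneg y))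
  rw [mul_pow, l2_sq, l2_sq]
  have := Finset.sum_mul_sq_le_sq_mul_sq Finset.univ x y
  simpa [dotProduct, sq] using this

theorem abs_apply_le_l2 (x : Fin n → ℝ) (v : Fin n) : |x v| ≤ l2 x := by
  apply abs_le_of_sq_le_sq _ (l2_nonneg x)
  rw [l2_sq, sq]
  exact Finset.single_le_sum (f := fun v => x v * x v) (fun i _ => mul_self_nonneg (x i))
    (Finset.mem_univ v)

theorem l2_le_of_sq_le {x : Fin n → ℝ} {t : ℝ} (ht : 0 ≤ t) (h : x ⬝ᵥ x ≤ t ^ 2) : l2 x ≤ t := by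
  refine (abs_le_of_sq_le_sq' ?_ ht).2
  rwa [l2_sq]

theorem l2_smul (a : ℝ) (x : Fin n → ℝ) : l2 (a • x) = |a| * l2 x := by
  rw [← sq_eq_sq₀ (l2_nonneg _) (mul_nonneg (abs_nonneg _) (l2_nonneg _)), mul_pow, l2_sq, l2_sq,
    sq_abs]
  simp; ring

namespace IsEigenbasis

variable {M : Matrix (Fin n) (Fin n) ℝ} {b : Fin n → Fin n → ℝ} {l : Fin n → ℝ}

theorem pow_mulVec_dot (h : IsEigenbasis M b l) (hM : M.IsSymm) (m : ℕ) (x : Fin n → ℝ)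
    (i : Fin n) : ((M ^ m) *ᵥ x) ⬝ᵥ b i = l i ^ m * (x ⬝ᵥ b i) := by
  induction m with
  | zero => simp
  | succ m ih => rw [pow_succ', ← mulVec_mulVec, h.mulVec_dot hM, ih]; ring

theorem trace_pow (h : IsEigenbasis M b l) (hM : M.IsSymm) (m : ℕ) :
    (M ^ m).trace = ∑ i, l i ^ m := by
  have h1 : ∀ v, (M ^ m) v v = ∑ i, l i ^ m * (b i v * b i v) := by
    intro v
    have : (M ^ m) v v = ((M ^ m) *ᵥ Pi.single v 1) ⬝ᵥ Pi.single v 1 := by simp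
    rw [this, h.dot_eq]
    refine Finset.sum_congr rfl fun i _ => ?_
    rw [h.pow_mulVec_dot hM]
    simp [mul_assoc]
  simp only [Matrix.trace, Matrix.diag, h1]
  rw [Finset.sum_comm]
  refine Finset.sum_congr rfl fun i _ => ?_
  rw [← Finset.mul_sum]
  have := h.orthonormal i i
  simp only [dotProduct, if_true] at this
  rw [this, mul_one]

theorem l2_sq_eq (h : IsEigenbasis M b l) (x : Fin n → ℝ) : l2 x ^ 2 = ∑ i, (x ⬝ᵥ b i) ^ 2 := by
  rw [l2_sq, h.dot_eq]
  exact Finset.sum_congr rfl fun _ _ => (sq _).symm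

end IsEigenbasis

/-- A bound on an even moment of the spectrum bounds the bilinear form. -/
theorem abs_dot_mulVec_le_of_trace {M : Matrix (Fin n) (Fin n) ℝ} (hM : M.IsSymm) {k : ℕ}
    (hk : k ≠ 0) {t : ℝ} (ht : 0 ≤ t) (h : (M ^ (2 * k)).trace ≤ t ^ (2 * k))
    (x y : Fin n → ℝ) : |x ⬝ᵥ M *ᵥ y| ≤ t * (l2 x * l2 y) := by
  obtain ⟨b, l, hb⟩ := exists_isEigenbasis hM
  rw [hb.trace_pow hM] at h
  have hl : ∀ i, l i ^ 2 ≤ t ^ 2 := by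
    intro i
    have h1 : l i ^ (2 * k) ≤ t ^ (2 * k) :=
      (Finset.single_le_sum (f := fun i => l i ^ (2 * k))
        (fun i _ => (even_two_mul k).pow_nonneg (l i)) (Finset.mem_univ i)).trans h
    rw [pow_mul, pow_mul] at h1
    exact (pow_le_pow_iff_left₀ (sq_nonneg _) (sq_nonneg _) hk).mp h1
  have hMy : l2 (M *ᵥ y) ≤ t * l2 y := by
    refine l2_le_of_sq_le (mul_nonneg ht (l2_nonneg _)) ?_
    rw [← l2_sq, hb.l2_sq_eq, mul_pow, hb.l2_sq_eq, Finset.mul_sum]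
    refine Finset.sum_le_sum fun i _ => ?_
    rw [hb.mulVec_dot hM, mul_pow]
    exact mul_le_mul_of_nonneg_right (hl i) (sq_nonneg _)
  calc |x ⬝ᵥ M *ᵥ y| ≤ l2 x * l2 (M *ᵥ y) := abs_dot_le _ _
    _ ≤ l2 x * (t * l2 y) := mul_le_mul_of_nonneg_left hMy (l2_nonneg _)
    _ = t * (l2 x * l2 y) := by ring

/-- `y` spans all approximate eigenvectors of `M` with approximate eigenvalue near `g`. -/
def CapturesNear (M : Matrix (Fin n) (Fin n) ℝ) (g ρ : ℝ) (y : Fin n → ℝ) : Prop :=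
  ∀ t : ℝ, |t - g| ≤ ρ / 2 → ∀ x : Fin n → ℝ, ∃ a : ℝ,
    ρ / 2 * l2 (x - a • y) ≤ l2 (M *ᵥ x - t • x)

theorem exists_capturesNear {M : Matrix (Fin n) (Fin n) ℝ} (hM : M.IsSymm) {b : Fin n → Fin n → ℝ}
    {l : Fin n → ℝ} (hb : IsEigenbasis M b l) {g ρ : ℝ} (hρ : 0 < ρ)
    (huniq : ∀ i j, |l i - g| < ρ → |l j - g| < ρ → i = j) :
    ∃ y, CapturesNear M g ρ y := by
  have h1 : ∃ y, (∀ i, |l i - g| < ρ → y = b i) ∧ (y = 0 ∨ ∃ i, |l i - g| < ρ ∧ y = b i) := by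
    by_cases hne : ∃ i, |l i - g| < ρ
    · obtain ⟨i, hi⟩ := hne
      exact ⟨b i, fun j hj => by rw [huniq i j hi hj], Or.inr ⟨i, hi, rfl⟩⟩
    · exact ⟨0, fun i hi => (hne ⟨i, hi⟩).elim, Or.inl rfl⟩
  obtain ⟨y, hy, hy'⟩ := h1
  refine ⟨y, fun t ht x => ⟨x ⬝ᵥ y, ?_⟩⟩
  have hres : ∀ i, (M *ᵥ x - t • x) ⬝ᵥ b i = (l i - t) * (x ⬝ᵥ b i) := by
    intro i
    rw [sub_dotProduct, hb.mulVec_dot hM, smul_dotProduct, smul_eq_mul]; ring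
  refine (abs_le_of_sq_le_sq' ?_ (l2_nonneg _)).2
  rw [mul_pow, hb.l2_sq_eq, hb.l2_sq_eq, Finset.mul_sum]
  refine Finset.sum_le_sum fun i _ => ?_
  rw [hres, mul_pow]
  by_cases hi : |l i - g| < ρ
  · rw [hy i hi]
    have : (x - (x ⬝ᵥ b i) • b i) ⬝ᵥ b i = 0 := by
      simp [sub_dotProduct, hb.orthonormal]
    rw [this]
    nlinarith [mul_nonneg (sq_nonneg (l i - t)) (sq_nonneg (x ⬝ᵥ b i))]
  · have h2 : y ⬝ᵥ b i = 0 := by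
      rcases hy' with rfl | ⟨j, hj, rfl⟩
      · simp
      · rw [hb.orthonormal, if_neg]
        rintro rfl
        exact hi hj
    have h3 : (x - (x ⬝ᵥ y) • y) ⬝ᵥ b i = x ⬝ᵥ b i := by
      rw [sub_dotProduct, smul_dotProduct, h2]; simp
    rw [h3]
    refine mul_le_mul_of_nonneg_right ?_ (sq_nonneg _)
    have h4 : ρ / 2 ≤ |l i - t| := by
      have := abs_sub_abs_le_abs_sub (l i - g) (t - g)
      rw [show l i - g - (t - g) = l i - t by ring] at this
      linarith [not_lt.mp hi]
    rw [← sq_abs (l i - t)]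
    exact pow_le_pow_left₀ (by positivity) h4 2

/-- The pairs `v < w`. -/
def edgePairs (n : ℕ) : Finset (Fin n × Fin n) :=
  Finset.univ.filter fun e : Fin n × Fin n => e.1 < e.2

/-- Expectation of `f` under `μ`. -/
def expect (μ : PMF (SimpleGraph (Fin n))) (f : SimpleGraph (Fin n) → ℝ) : ℝ :=
  ∑ G, (μ G).toReal * f G

theorem mem_edgePairs {e : Fin n × Fin n} : e ∈ edgePairs n ↔ e.1 < e.2 := by
  simp [edgePairs]

theorem expect_mono (μ : PMF (SimpleGraph (Fin n))) {f g : SimpleGraph (Fin n) → ℝ}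
    (h : ∀ G, f G ≤ g G) : expect μ f ≤ expect μ g :=
  Finset.sum_le_sum fun G _ => mul_le_mul_of_nonneg_left (h G) ENNReal.toReal_nonneg

theorem expect_sum (μ : PMF (SimpleGraph (Fin n))) {ι : Type*} (s : Finset ι)
    (f : ι → SimpleGraph (Fin n) → ℝ) :
    expect μ (fun G => ∑ i ∈ s, f i G) = ∑ i ∈ s, expect μ (f i) := by
  simp only [expect, Finset.mul_sum]
  exact Finset.sum_comm

theorem expect_const_mul (μ : PMF (SimpleGraph (Fin n))) (c : ℝ) (f : SimpleGraph (Fin n) → ℝ) :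
    expect μ (fun G => c * f G) = c * expect μ f := by
  simp only [expect, Finset.mul_sum]
  exact Finset.sum_congr rfl fun _ _ => by ring

theorem expect_one (μ : PMF (SimpleGraph (Fin n))) : expect μ (fun _ => 1) = 1 := by
  simp only [expect, mul_one]
  rw [← ENNReal.toReal_sum fun G _ => μ.apply_ne_top G]
  have := μ.tsum_coe
  rw [tsum_fintype] at this
  rw [this, ENNReal.toReal_one]

theorem sum_prod_edgePairs (f g : Fin n × Fin n → ℝ) :
    ∑ G : SimpleGraph (Fin n), ∏ e ∈ edgePairs n, (if G.Adj e.1 e.2 then f e else g e) =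
      ∏ e ∈ edgePairs n, (f e + g e) := by
  rw [Finset.prod_add]
  refine Finset.sum_bij' (fun G _ => (edgePairs n).filter fun e => G.Adj e.1 e.2)
    (fun t _ => SimpleGraph.mk (fun v w => v ≠ w ∧ (min v w, max v w) ∈ t)
      ⟨fun v w h => ⟨h.1.symm, by rw [min_comm, max_comm]; exact h.2⟩⟩
      ⟨fun v h => h.1 rfl⟩) ?_ ?_ ?_ ?_ ?_
  · intro G _
    simp
  · intro t _
    simp
  · intro G _
    ext v w
    simp only [Finset.mem_filter, mem_edgePairs]
    rcases lt_trichotomy v w with h | h | h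
    · simp [h.ne, min_eq_left h.le, max_eq_right h.le, h]
    · simp [h]
    · simp [h.ne', min_eq_right h.le, max_eq_left h.le, h, G.adj_comm]
  · intro t ht
    ext e
    have hsub := Finset.mem_powerset.mp ht
    simp only [Finset.mem_filter, mem_edgePairs]
    constructor
    · rintro ⟨h, -, h2⟩
      simpa [min_eq_left h.le, max_eq_right h.le] using h2
    · intro h
      have h1 := mem_edgePairs.mp (hsub h)
      exact ⟨h1, h1.ne, by simpa [min_eq_left h1.le, max_eq_right h1.le] using h⟩
  · intro G _
    rw [Finset.prod_ite, Finset.filter_not]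

theorem expect_prod {P : Fin n → Fin n → ℝ} {μ : PMF (SimpleGraph (Fin n))}
    (hμ : IsEdgeProduct P μ) (h0 : ∀ v w, 0 ≤ P v w) (h1 : ∀ v w, P v w ≤ 1)
    (f g : Fin n × Fin n → ℝ) :
    expect μ (fun G => ∏ e ∈ edgePairs n, if G.Adj e.1 e.2 then f e else g e) =
      ∏ e ∈ edgePairs n, (P e.1 e.2 * f e + (1 - P e.1 e.2) * g e) := by
  rw [← sum_prod_edgePairs, expect]
  refine Finset.sum_congr rfl fun G _ => ?_
  rw [hμ G, ENNReal.toReal_prod, ← edgePairs, ← Finset.prod_mul_distrib]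
  refine Finset.prod_congr rfl fun e _ => ?_
  split_ifs
  · rw [ENNReal.toReal_ofReal (h0 _ _)]
  · rw [ENNReal.toReal_ofReal (by linarith [h1 e.1 e.2])]

/-- Centred adjacency matrix. -/
def centred (P : Fin n → Fin n → ℝ) (G : SimpleGraph (Fin n)) : Matrix (Fin n) (Fin n) ℝ :=
  adjM G - offP P

theorem centred_self (P : Fin n → Fin n → ℝ) (G : SimpleGraph (Fin n)) (v : Fin n) :
    centred P G v v = 0 := by
  simp [centred, adjM, offP]

theorem centred_apply (P : Fin n → Fin n → ℝ) (G : SimpleGraph (Fin n)) {v w : Fin n}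
    (h : v ≠ w) : centred P G v w = if G.Adj v w then 1 - P v w else -P v w := by
  simp [centred, adjM, offP, h]
  split_ifs <;> ring

theorem centred_comm {P : Fin n → Fin n → ℝ} (hP : ∀ v w, P v w = P w v)
    (G : SimpleGraph (Fin n)) (v w : Fin n) : centred P G v w = centred P G w v := by
  by_cases h : v = w
  · rw [h]
  · rw [centred_apply P G h, centred_apply P G (Ne.symm h), G.adj_comm, hP]

/-- The coefficient of the pair `e` in the row sum at `v` weighted by `x`. -/
def rowCoeff (v : Fin n) (x : Fin n → ℝ) (e : Fin n × Fin n) : ℝ :=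
  (if e.1 = v then x e.2 else 0) + if e.2 = v then x e.1 else 0

theorem sum_row_eq {S : Matrix (Fin n) (Fin n) ℝ} (hS : ∀ v w, S v w = S w v)
    (hd : ∀ v, S v v = 0) (v : Fin n) (x : Fin n → ℝ) :
    ∑ w, S v w * x w = ∑ e ∈ edgePairs n, S e.1 e.2 * rowCoeff v x e := by
  have hA : ∀ φ : Fin n × Fin n → ℝ, ∑ e ∈ edgePairs n, φ e =
      ∑ a, ∑ b, if a < b then φ (a, b) else 0 := by
    intro φ
    rw [edgePairs, Finset.sum_filter, Fintype.sum_prod_type]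
  rw [hA]
  simp only [rowCoeff, mul_add, ite_add_zero, mul_ite, mul_zero]
  simp only [Finset.sum_add_distrib]
  have h1 : ∑ a, ∑ b, (if a < b then if a = v then S a b * x b else 0 else 0) =
      ∑ w, if v < w then S v w * x w else 0 := by
    rw [Finset.sum_eq_single v]
    · simp
    · intro a _ ha; simp [ha]
    · simp
  have h2 : ∑ a, ∑ b, (if a < b then if b = v then S a b * x a else 0 else 0) =
      ∑ w, if w < v then S v w * x w else 0 := by
    refine Finset.sum_congr rfl fun a _ => ?_
    rw [Finset.sum_eq_single v]
    · simp [hS a v]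
    · intro a _ ha; simp [ha]
    · simp
  rw [h1, h2, ← Finset.sum_add_distrib]
  refine Finset.sum_congr rfl fun w _ => ?_
  rcases lt_trichotomy v w with h | h | h
  · simp [h, h.not_gt]
  · subst h; simp [hd]
  · simp [h, h.not_gt]

/-- The graph `G` with all edges at `v` deleted. -/
def isolate (G : SimpleGraph (Fin n)) (v : Fin n) : SimpleGraph (Fin n) where
  Adj a b := G.Adj a b ∧ a ≠ v ∧ b ≠ v
  symm := ⟨fun _ _ h => ⟨h.1.symm, h.2.2, h.2.1⟩⟩
  loopless := ⟨fun a h => G.loopless.irrefl a h.1⟩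

theorem exp_le_quadratic {y : ℝ} (hy : |y| ≤ 1) : Real.exp y ≤ 1 + y + y ^ 2 := by
  have := Real.abs_exp_sub_one_sub_id_le hy
  linarith [(abs_le.mp this).2]

theorem bernoulli_mgf_le {p y : ℝ} (hp0 : 0 ≤ p) (hp1 : p ≤ 1) (hy : |y| ≤ 1) :
    p * Real.exp (y * (1 - p)) + (1 - p) * Real.exp (y * -p) ≤ Real.exp (y ^ 2 * p) := by
  have h1 := exp_le_quadratic (y := y * (1 - p)) (by
    rw [abs_mul]; exact mul_le_one₀ hy (abs_nonneg _) (abs_le.mpr ⟨by linarith, by linarith⟩))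
  have h2 := exp_le_quadratic (y := y * -p) (by
    rw [abs_mul]; exact mul_le_one₀ hy (abs_nonneg _) (abs_le.mpr ⟨by linarith, by linarith⟩))
  have h3 := Real.add_one_le_exp (y ^ 2 * p)
  have h4 := mul_le_mul_of_nonneg_left h1 hp0
  have h5 := mul_le_mul_of_nonneg_left h2 (sub_nonneg.mpr hp1)
  nlinarith [mul_nonneg (sq_nonneg y) (sq_nonneg p)]

theorem isolate_not_adj (G : SimpleGraph (Fin n)) (v w : Fin n) : ¬ (isolate G v).Adj v w :=
  fun h => h.2.1 rfl

/-- Indicator that a pair away from `v` has adjacency status `s` in `H`. -/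
def matchCoeff (H : SimpleGraph (Fin n)) (v : Fin n) (s : Prop) (e : Fin n × Fin n) : ℝ :=
  if e.1 = v ∨ e.2 = v then 1 else if (H.Adj e.1 e.2 ↔ s) then 1 else 0

theorem matchCoeff_nonneg (H : SimpleGraph (Fin n)) (v : Fin n) (s : Prop) (e : Fin n × Fin n) :
    0 ≤ matchCoeff H v s e := by
  unfold matchCoeff; split_ifs <;> norm_num

theorem indicator_isolate_eq {H : SimpleGraph (Fin n)} {v : Fin n} (hH : ∀ w, ¬ H.Adj v w)
    (G : SimpleGraph (Fin n)) :
    (if isolate G v = H then (1 : ℝ) else 0) = ∏ e ∈ edgePairs n,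
      if G.Adj e.1 e.2 then matchCoeff H v True e else matchCoeff H v False e := by
  have hH' : ∀ w, ¬ H.Adj w v := fun w h => hH w h.symm
  split_ifs with h
  · symm
    apply Finset.prod_eq_one
    intro e _
    subst h
    simp only [matchCoeff, isolate]
    by_cases h1 : e.1 = v <;> by_cases h2 : e.2 = v <;> by_cases h3 : G.Adj e.1 e.2 <;>
      simp [h1, h2, h3]
  · symm
    by_contra! hne
    rw [Finset.prod_ne_zero_iff] at hne
    apply h
    have key : ∀ a b : Fin n, a < b → a ≠ v → b ≠ v → (G.Adj a b ↔ H.Adj a b) := by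
      intro a b hab ha hb
      have := hne (a, b) (mem_edgePairs.mpr hab)
      by_cases h3 : G.Adj a b <;> by_cases h4 : H.Adj a b <;>
        simp_all [matchCoeff]
    ext a b
    simp only [isolate]
    by_cases ha : a = v
    · subst ha; simp [hH]
    by_cases hb : b = v
    · subst hb; simp [hH']
    rcases lt_trichotomy a b with hab | hab | hab
    · simp [ha, hb, key a b hab ha hb]
    · simp [hab]
    · simp [ha, hb, G.adj_comm a b, H.adj_comm a b, key b a hab hb ha]

theorem abs_rowCoeff_le {v : Fin n} {x : Fin n → ℝ} (hx : ∀ w, |x w| ≤ 1) {e : Fin n × Fin n}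
    (he : e.1 ≠ e.2) : |rowCoeff v x e| ≤ 1 := by
  unfold rowCoeff
  by_cases h1 : e.1 = v
  · have h2 : e.2 ≠ v := fun h => he (h1.trans h.symm)
    simpa [h1, h2] using hx e.2
  · by_cases h2 : e.2 = v
    · simpa [h1, h2] using hx e.1
    · simp [h1, h2]

theorem expect_isolate_le {P : Fin n → Fin n → ℝ} {μ : PMF (SimpleGraph (Fin n))}
    (hμ : IsEdgeProduct P μ) (hP : ∀ v w, P v w = P w v) (h0 : ∀ v w, 0 ≤ P v w)
    (h1 : ∀ v w, P v w ≤ 1) {θ : ℝ} (hθ : |θ| ≤ 1) (v : Fin n) {x : Fin n → ℝ}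
    (hx : ∀ w, |x w| ≤ 1) (H : SimpleGraph (Fin n)) :
    expect μ (fun G => (if isolate G v = H then 1 else 0) *
        Real.exp (θ * ∑ w, centred P G v w * x w)) ≤
      Real.exp (θ ^ 2 * ∑ w, offP P v w) *
        expect μ (fun G => if isolate G v = H then 1 else 0) := by
  by_cases hH : ∀ w, ¬ H.Adj v w
  swap
  · have : ∀ G, isolate G v ≠ H := by
      rintro G rfl
      exact hH (isolate_not_adj G v)
    simp [this, expect]
  have hL : ∀ G, (if isolate G v = H then (1 : ℝ) else 0) *
      Real.exp (θ * ∑ w, centred P G v w * x w) = ∏ e ∈ edgePairs n,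
        if G.Adj e.1 e.2 then
          matchCoeff H v True e * Real.exp (θ * rowCoeff v x e * (1 - P e.1 e.2))
        else matchCoeff H v False e * Real.exp (θ * rowCoeff v x e * -P e.1 e.2) := by
    intro G
    rw [sum_row_eq (centred_comm hP G) (centred_self P G), Finset.mul_sum, Real.exp_sum,
      indicator_isolate_eq hH, ← Finset.prod_mul_distrib]
    refine Finset.prod_congr rfl fun e he => ?_
    rw [centred_apply P G (mem_edgePairs.mp he).ne]
    split_ifs
    · congr 2; ring
    · congr 2; ring
  have hR : ∑ w, offP P v w = ∑ e ∈ edgePairs n, P e.1 e.2 * rowCoeff v 1 e := by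
    have := sum_row_eq (S := offP P) (by
      intro a b
      simp only [offP, of_apply]
      by_cases h : a = b
      · rw [h]
      · rw [if_neg h, if_neg (Ne.symm h), hP]) (by simp [offP]) v 1
    simp only [Pi.one_apply, mul_one] at this
    rw [this]
    refine Finset.sum_congr rfl fun e he => ?_
    simp [offP, (mem_edgePairs.mp he).ne]
  rw [funext hL, funext (indicator_isolate_eq hH)]
  rw [expect_prod hμ h0 h1, expect_prod hμ h0 h1, hR, Finset.mul_sum, Real.exp_sum,
    ← Finset.prod_mul_distrib]
  refine Finset.prod_le_prod (fun e _ => ?_) (fun e he => ?_)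
  · have := sub_nonneg.mpr (h1 e.1 e.2)
    have := h0 e.1 e.2
    have := matchCoeff_nonneg H v True e
    have := matchCoeff_nonneg H v False e
    positivity
  · have hne := (mem_edgePairs.mp he).ne
    by_cases hev : e.1 = v ∨ e.2 = v
    · have hξ := abs_rowCoeff_le (v := v) hx hne
      have h1' : rowCoeff v 1 e = 1 := by
        rcases hev with h | h
        · have : e.2 ≠ v := fun h' => hne (h.trans h'.symm)
          simp [rowCoeff, h, this]
        · have : e.1 ≠ v := fun h' => hne (h'.trans h.symm)
          simp [rowCoeff, h, this]
      have hm : ∀ s, matchCoeff H v s e = 1 := fun s => by simp [matchCoeff, hev]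
      rw [hm, hm, h1']
      have hy : |θ * rowCoeff v x e| ≤ 1 := by
        rw [abs_mul]; exact mul_le_one₀ hθ (abs_nonneg _) hξ
      have := bernoulli_mgf_le (h0 e.1 e.2) (h1 e.1 e.2) hy
      have h5 : (θ * rowCoeff v x e) ^ 2 ≤ θ ^ 2 := by
        rw [mul_pow, ← sq_abs (rowCoeff v x e)]
        exact mul_le_of_le_one_right (sq_nonneg θ) (pow_le_one₀ (abs_nonneg _) hξ)
      have h6 : Real.exp ((θ * rowCoeff v x e) ^ 2 * P e.1 e.2) ≤
          Real.exp (θ ^ 2 * (P e.1 e.2 * 1)) := by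
        apply Real.exp_le_exp.mpr
        nlinarith [h0 e.1 e.2]
      simp only [one_mul, mul_one] at this h6 ⊢
      linarith
    · have hz : ∀ y : Fin n → ℝ, rowCoeff v y e = 0 := by
        intro y
        rw [not_or] at hev
        simp [rowCoeff, hev.1, hev.2]
      simp [hz]

theorem expect_exp_row_le {P : Fin n → Fin n → ℝ} {μ : PMF (SimpleGraph (Fin n))}
    (hμ : IsEdgeProduct P μ) (hP : ∀ v w, P v w = P w v) (h0 : ∀ v w, 0 ≤ P v w)
    (h1 : ∀ v w, P v w ≤ 1) {θ : ℝ} (hθ : |θ| ≤ 1) (v : Fin n)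
    {x : SimpleGraph (Fin n) → Fin n → ℝ} (hx : ∀ H w, |x H w| ≤ 1) :
    expect μ (fun G => Real.exp (θ * ∑ w, centred P G v w * x (isolate G v) w)) ≤
      Real.exp (θ ^ 2 * ∑ w, offP P v w) := by
  have h : ∀ G, Real.exp (θ * ∑ w, centred P G v w * x (isolate G v) w) =
      ∑ H, (if isolate G v = H then 1 else 0) * Real.exp (θ * ∑ w, centred P G v w * x H w) := by
    intro G; simp
  simp only [h]
  rw [expect_sum]
  calc _ ≤ ∑ H, Real.exp (θ ^ 2 * ∑ w, offP P v w) *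
        expect μ (fun G => if isolate G v = H then 1 else 0) :=
        Finset.sum_le_sum fun H _ => expect_isolate_le hμ hP h0 h1 hθ v (hx H) H
    _ = Real.exp (θ ^ 2 * ∑ w, offP P v w) *
        expect μ (fun G => ∑ H, if isolate G v = H then 1 else 0) := by
        rw [expect_sum, ← Finset.mul_sum]
    _ = _ := by simp [expect_one]

/-- Probability of a property of a random graph, as a real number. -/
def prob (μ : PMF (SimpleGraph (Fin n))) (S : SimpleGraph (Fin n) → Prop) : ℝ :=
  expect μ fun G => if S G then 1 else 0

theorem prob_mono (μ : PMF (SimpleGraph (Fin n))) {S T : SimpleGraph (Fin n) → Prop}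
    (h : ∀ G, S G → T G) : prob μ S ≤ prob μ T := by
  refine expect_mono μ fun G => ?_
  by_cases hS : S G
  · simp [hS, h G hS]
  · simp only [hS, if_false]; split_ifs <;> norm_num

theorem prob_or_le (μ : PMF (SimpleGraph (Fin n))) (S T : SimpleGraph (Fin n) → Prop) :
    prob μ (fun G => S G ∨ T G) ≤ prob μ S + prob μ T := by
  have : prob μ S + prob μ T = expect μ
      (fun G => (if S G then (1 : ℝ) else 0) + if T G then 1 else 0) := by
    simp only [prob, expect, mul_add, Finset.sum_add_distrib]
  rw [this]
  refine expect_mono μ fun G => ?_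
  by_cases hS : S G <;> by_cases hT : T G <;> simp [hS, hT]

theorem prob_exists_le (μ : PMF (SimpleGraph (Fin n))) {ι : Type*} [Fintype ι]
    (S : ι → SimpleGraph (Fin n) → Prop) :
    prob μ (fun G => ∃ i, S i G) ≤ ∑ i, prob μ (S i) := by
  unfold prob
  rw [← expect_sum]
  refine expect_mono μ fun G => ?_
  split_ifs with h
  · obtain ⟨i, hi⟩ := h
    have := Finset.single_le_sum (f := fun i => if S i G then (1 : ℝ) else 0)
      (fun i _ => by split_ifs <;> norm_num) (Finset.mem_univ i)
    simpa [hi] using this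
  · exact Finset.sum_nonneg fun i _ => by split_ifs <;> norm_num

theorem one_sub_le_toMeasure {μ : PMF (SimpleGraph (Fin n))} {S : SimpleGraph (Fin n) → Prop}
    (h : prob μ (fun G => ¬ S G) ≤ 1 / n) :
    1 - 1 / (n : ℝ≥0∞) ≤ μ.toMeasure {G | S G} := by
  have hc : μ.toMeasure {G | S G}ᶜ ≤ 1 / (n : ℝ≥0∞) := by
    rw [PMF.toMeasure_apply_fintype]
    rcases Nat.eq_zero_or_pos n with rfl | hn
    · simp
    have e1 : (∑ G, ({G | S G}ᶜ).indicator (⇑μ) G) =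
        ENNReal.ofReal (prob μ (fun G => ¬ S G)) := by
      rw [prob, expect, ENNReal.ofReal_sum_of_nonneg]
      · refine Finset.sum_congr rfl fun G _ => ?_
        by_cases hG : S G
        · simp [hG]
        · simp [hG, ENNReal.ofReal_toReal (μ.apply_ne_top G)]
      · intro G _
        split_ifs <;> simp
    rw [e1]
    calc ENNReal.ofReal (prob μ (fun G => ¬ S G)) ≤ ENNReal.ofReal (1 / n) :=
          ENNReal.ofReal_le_ofReal h
      _ = 1 / (n : ℝ≥0∞) := by
          rw [ENNReal.ofReal_div_of_pos (by exact_mod_cast hn)]; simp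
  have h2 := prob_compl_eq_one_sub (μ := μ.toMeasure) (s := {G | S G}ᶜ) (by trivial)
  rw [compl_compl] at h2
  rw [h2]
  exact tsub_le_tsub_left hc 1

theorem prob_lt_row_le {P : Fin n → Fin n → ℝ} {μ : PMF (SimpleGraph (Fin n))}
    (hμ : IsEdgeProduct P μ) (hP : ∀ v w, P v w = P w v) (h0 : ∀ v w, 0 ≤ P v w)
    (h1 : ∀ v w, P v w ≤ 1) {θ : ℝ} (hθ : |θ| ≤ 1) (v : Fin n) {B : ℝ}
    (hB : ∑ w, offP P v w ≤ B) {x : SimpleGraph (Fin n) → Fin n → ℝ} (hx : ∀ H w, |x H w| ≤ 1)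
    (t : ℝ) :
    prob μ (fun G => t < θ * ∑ w, centred P G v w * x (isolate G v) w) ≤
      Real.exp (θ ^ 2 * B - t) := by
  have h2 := expect_exp_row_le hμ hP h0 h1 hθ v hx
  calc prob μ _ ≤ expect μ (fun G => Real.exp (-t) *
        Real.exp (θ * ∑ w, centred P G v w * x (isolate G v) w)) := by
        refine expect_mono μ fun G => ?_
        rw [← Real.exp_add]
        split_ifs with h
        · exact Real.one_le_exp (by linarith)
        · positivity
    _ = Real.exp (-t) * _ := expect_const_mul _ _ _
    _ ≤ Real.exp (-t) * Real.exp (θ ^ 2 * B) := by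
        refine mul_le_mul_of_nonneg_left (h2.trans (Real.exp_le_exp.mpr ?_)) (Real.exp_pos _).le
        exact mul_le_mul_of_nonneg_left hB (sq_nonneg _)
    _ = _ := by rw [← Real.exp_add]; ring_nf

theorem prob_lt_abs_row_le {P : Fin n → Fin n → ℝ} {μ : PMF (SimpleGraph (Fin n))}
    (hμ : IsEdgeProduct P μ) (hP : ∀ v w, P v w = P w v) (h0 : ∀ v w, 0 ≤ P v w)
    (h1 : ∀ v w, P v w ≤ 1) {θ : ℝ} (hθ0 : 0 < θ) (hθ : θ ≤ 1) (v : Fin n) {B : ℝ}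
    (hB : ∑ w, offP P v w ≤ B) (x : SimpleGraph (Fin n) → Fin n → ℝ) (t : ℝ) :
    prob μ (fun G => t * ‖x (isolate G v)‖ < |∑ w, centred P G v w * x (isolate G v) w|) ≤
      2 * Real.exp (θ ^ 2 * B - θ * t) := by
  set x' : SimpleGraph (Fin n) → Fin n → ℝ := fun H => ‖x H‖⁻¹ • x H with hx'
  have hx1 : ∀ H w, |x' H w| ≤ 1 := by
    intro H w
    simp only [hx', Pi.smul_apply, smul_eq_mul, abs_mul, abs_inv, abs_norm]
    rw [← Real.norm_eq_abs]
    rcases eq_or_lt_of_le (norm_nonneg (x H)) with h | h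
    · rw [← h]; simp
    · rw [inv_mul_le_iff₀ h, mul_one]; exact norm_le_pi_norm _ _
  have ha := prob_lt_row_le hμ hP h0 h1 (θ := θ) (by rwa [abs_of_pos hθ0]) v hB hx1 (θ * t)
  have hb := prob_lt_row_le hμ hP h0 h1 (θ := -θ) (by rwa [abs_neg, abs_of_pos hθ0]) v hB hx1
    (θ * t)
  rw [neg_sq] at hb
  have hor := prob_or_le μ
    (fun G => θ * t < θ * ∑ w, centred P G v w * x' (isolate G v) w)
    (fun G => θ * t < -θ * ∑ w, centred P G v w * x' (isolate G v) w)
  refine le_trans (prob_mono μ fun G hG => ?_) (hor.trans (by linarith))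
  set H := isolate G v
  have hsum : ∑ w, centred P G v w * x' H w = ‖x H‖⁻¹ * ∑ w, centred P G v w * x H w := by
    rw [Finset.mul_sum]
    refine Finset.sum_congr rfl fun w _ => ?_
    simp only [hx', Pi.smul_apply, smul_eq_mul]; ring
  have hpos : 0 < ‖x H‖ := by
    rcases eq_or_lt_of_le (norm_nonneg (x H)) with h | h
    · have : x H = 0 := norm_eq_zero.mp h.symm
      simp [this] at hG
    · exact h
  have : t < |∑ w, centred P G v w * x' H w| := by
    rw [hsum, abs_mul, abs_inv, abs_norm, lt_inv_mul_iff₀ hpos]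
    linarith
  rcases lt_abs.mp this with h | h
  · left; exact mul_lt_mul_of_pos_left h hθ0
  · right; nlinarith

/-- The monomial with exponents `c` in the entries of the centred adjacency matrix. -/
def monomial (P : Fin n → Fin n → ℝ) (c : Fin n × Fin n → ℕ) (G : SimpleGraph (Fin n)) : ℝ :=
  ∏ e ∈ edgePairs n, centred P G e.1 e.2 ^ c e

/-- Bound for the `k`-th moment of one entry of the centred adjacency matrix. -/
def momentBound (s a : ℝ) (k : ℕ) : ℝ := if k = 0 then 1 else s ^ k * a

theorem momentBound_nonneg {s a : ℝ} (hs : 0 ≤ s) (ha : 0 ≤ a) (k : ℕ) :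
    0 ≤ momentBound s a k := by
  unfold momentBound; split_ifs <;> positivity

theorem momentBound_succ (s a : ℝ) (k : ℕ) :
    momentBound s a (k + 1) = momentBound s a k * (s * if k = 0 then a else 1) := by
  unfold momentBound
  by_cases h : k = 0
  · simp [h]
  · simp [h, pow_succ]; ring

theorem abs_bernoulli_moment_le {p s a : ℝ} (hp0 : 0 ≤ p) (hp1 : p ≤ 1) (hs : 1 ≤ s)
    (ha : 0 ≤ a) (hpa : p ≤ s ^ 2 * a) (k : ℕ) :
    |p * (1 - p) ^ k + (1 - p) * (-p) ^ k| ≤ momentBound s a k := by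
  have hq0 : 0 ≤ 1 - p := by linarith
  unfold momentBound
  rcases k with _ | _ | k
  · simp
  · simp only [zero_add, pow_one, one_ne_zero, if_false]
    have : p * (1 - p) + (1 - p) * -p = 0 := by ring
    rw [this, abs_zero]; positivity
  · rw [if_neg (by omega)]
    calc |p * (1 - p) ^ (k + 2) + (1 - p) * (-p) ^ (k + 2)|
        ≤ |p * (1 - p) ^ (k + 2)| + |(1 - p) * (-p) ^ (k + 2)| := abs_add_le _ _
      _ = p * (1 - p) ^ (k + 2) + (1 - p) * p ^ (k + 2) := by
          rw [abs_mul, abs_mul, abs_pow, abs_pow, abs_neg, abs_of_nonneg hp0, abs_of_nonneg hq0]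
      _ ≤ p * (1 - p) ^ 2 + (1 - p) * p ^ 2 := by
          gcongr ?_ * ?_ + ?_ * ?_
          · exact pow_le_pow_of_le_one hq0 (by linarith) (by omega)
          · exact pow_le_pow_of_le_one hp0 hp1 (by omega)
      _ ≤ s ^ 2 * a := by nlinarith
      _ ≤ s ^ (k + 2) * a := by
          gcongr
          omega

theorem abs_expect_monomial_le {P : Fin n → Fin n → ℝ} {μ : PMF (SimpleGraph (Fin n))}
    (hμ : IsEdgeProduct P μ) (h0 : ∀ v w, 0 ≤ P v w) (h1 : ∀ v w, P v w ≤ 1) {s a : ℝ}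
    (hs : 1 ≤ s) (ha : 0 ≤ a) (hpa : ∀ v w, P v w ≤ s ^ 2 * a) (c : Fin n × Fin n → ℕ) :
    |expect μ (monomial P c)| ≤ ∏ e ∈ edgePairs n, momentBound s a (c e) := by
  have h : monomial P c = fun G => ∏ e ∈ edgePairs n,
      if G.Adj e.1 e.2 then (1 - P e.1 e.2) ^ c e else (-P e.1 e.2) ^ c e := by
    funext G
    refine Finset.prod_congr rfl fun e he => ?_
    rw [centred_apply P G (mem_edgePairs.mp he).ne]
    split_ifs <;> rfl
  rw [h, expect_prod hμ h0 h1, Finset.abs_prod]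
  exact Finset.prod_le_prod (fun _ _ => abs_nonneg _) fun e _ =>
    abs_bernoulli_moment_le (h0 _ _) (h1 _ _) hs ha (hpa _ _) _

/-- The pair `{u, w}` in increasing order. -/
def sortedPair (u w : Fin n) : Fin n × Fin n := (min u w, max u w)

theorem sortedPair_mem {u w : Fin n} (h : u ≠ w) : sortedPair u w ∈ edgePairs n := by
  rw [mem_edgePairs, sortedPair]
  exact min_lt_max.mpr h

theorem sortedPair_injective (u : Fin n) : Function.Injective (sortedPair u) := by
  intro w w' h
  simp only [sortedPair, Prod.mk.injEq] at h
  obtain ⟨h1, h2⟩ := h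
  rcases le_total u w with a | a <;> rcases le_total u w' with b | b <;>
    simp only [min_eq_left, max_eq_right, min_eq_right, max_eq_left, a, b] at h1 h2 <;> grind

theorem monomial_add_single (P : Fin n → Fin n → ℝ) (c : Fin n × Fin n → ℕ) {e : Fin n × Fin n}
    (he : e ∈ edgePairs n) (G : SimpleGraph (Fin n)) :
    monomial P (c + Pi.single e 1) G = monomial P c G * centred P G e.1 e.2 := by
  simp only [monomial, Pi.add_apply, pow_add, Finset.prod_mul_distrib]
  congr 1
  rw [Finset.prod_eq_single e]
  · simp
  · intro b _ hb; simp [Pi.single_eq_of_ne hb]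
  · exact fun h => absurd he h

theorem prod_momentBound_add_single (s a : ℝ) (c : Fin n × Fin n → ℕ) {e : Fin n × Fin n}
    (he : e ∈ edgePairs n) :
    ∏ e' ∈ edgePairs n, momentBound s a ((c + Pi.single e 1 : Fin n × Fin n → ℕ) e') =
      (∏ e' ∈ edgePairs n, momentBound s a (c e')) * (s * if c e = 0 then a else 1) := by
  have h : ∀ e', momentBound s a ((c + Pi.single e 1 : Fin n × Fin n → ℕ) e') =
      momentBound s a (c e') *
      if e' = e then (s * if c e = 0 then a else 1) else 1 := by
    intro e'
    by_cases h : e' = e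
    · subst h; simp [momentBound_succ]
    · simp [h]
  simp only [h, Finset.prod_mul_distrib]
  rw [Finset.prod_ite_eq' (edgePairs n) e, if_pos he]

theorem card_used_le (c : Fin n × Fin n → ℕ) (u : Fin n) :
    ((Finset.univ.filter fun w => u ≠ w ∧ c (sortedPair u w) ≠ 0).card : ℕ) ≤
      ∑ e ∈ edgePairs n, c e := by
  rw [Finset.card_eq_sum_ones]
  calc ∑ w ∈ Finset.univ.filter (fun w => u ≠ w ∧ c (sortedPair u w) ≠ 0), 1
      ≤ ∑ w ∈ Finset.univ.filter (fun w => u ≠ w ∧ c (sortedPair u w) ≠ 0),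
          c (sortedPair u w) := by
        refine Finset.sum_le_sum fun w hw => ?_
        exact Nat.one_le_iff_ne_zero.mpr (Finset.mem_filter.mp hw).2.2
    _ = ∑ e ∈ (Finset.univ.filter (fun w => u ≠ w ∧ c (sortedPair u w) ≠ 0)).image
          (sortedPair u), c e := by
        rw [Finset.sum_image (fun _ _ _ _ h => sortedPair_injective u h)]
    _ ≤ _ := by
        refine Finset.sum_le_sum_of_subset fun e he => ?_
        obtain ⟨w, hw, rfl⟩ := Finset.mem_image.mp he
        exact sortedPair_mem (Finset.mem_filter.mp hw).2.1

theorem abs_expect_monomial_mul_pow_le {P : Fin n → Fin n → ℝ} {μ : PMF (SimpleGraph (Fin n))}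
    (hμ : IsEdgeProduct P μ) (hP : ∀ v w, P v w = P w v) (h0 : ∀ v w, 0 ≤ P v w)
    (h1 : ∀ v w, P v w ≤ 1) {s a : ℝ} (hs : 1 ≤ s) (ha : 0 ≤ a)
    (hpa : ∀ v w, P v w ≤ s ^ 2 * a) {N : ℕ} (m : ℕ) (c : Fin n × Fin n → ℕ) (u v : Fin n)
    (hN : ∑ e ∈ edgePairs n, c e + m ≤ N) :
    |expect μ (fun G => monomial P c G * (centred P G ^ m) u v)| ≤
      (∏ e ∈ edgePairs n, momentBound s a (c e)) * (s * (n * a + N)) ^ m := by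
  have hs0 : 0 ≤ s := by linarith
  induction m generalizing c u with
  | zero =>
    simp only [pow_zero, mul_one]
    by_cases h : u = v
    · subst h
      simpa using abs_expect_monomial_le hμ h0 h1 hs ha hpa c
    · simp only [Matrix.one_apply_ne h, mul_zero, expect, Finset.sum_const_zero, abs_zero]
      exact Finset.prod_nonneg fun e _ => momentBound_nonneg hs0 ha _
  | succ m ih =>
    set b := ∏ e ∈ edgePairs n, momentBound s a (c e) with hb
    have hb0 : 0 ≤ b := Finset.prod_nonneg fun e _ => momentBound_nonneg hs0 ha _
    set X := s * (n * a + N) with hX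
    have hX0 : 0 ≤ X := by positivity
    have hexp : (fun G => monomial P c G * (centred P G ^ (m + 1)) u v) = fun G =>
        ∑ w, monomial P c G * (centred P G u w * (centred P G ^ m) w v) := by
      funext G
      rw [pow_succ', Matrix.mul_apply, Finset.mul_sum]
    rw [hexp, expect_sum]
    have hterm : ∀ w, |expect μ (fun G =>
        monomial P c G * (centred P G u w * (centred P G ^ m) w v))| ≤
        b * X ^ m * s * (a + if u ≠ w ∧ c (sortedPair u w) ≠ 0 then 1 else 0) := by
      intro w
      by_cases huw : u = w
      · subst huw
        simp only [centred_self, zero_mul, mul_zero, expect, Finset.sum_const_zero, abs_zero]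
        have : (0 : ℝ) ≤ if u ≠ u ∧ c (sortedPair u u) ≠ 0 then 1 else 0 := by
          split_ifs <;> norm_num
        positivity
      · have hmem := sortedPair_mem huw
        have heq : (fun G => monomial P c G * (centred P G u w * (centred P G ^ m) w v)) =
            fun G => monomial P (c + Pi.single (sortedPair u w) 1) G *
              (centred P G ^ m) w v := by
          funext G
          rw [monomial_add_single P c hmem]
          have : centred P G (sortedPair u w).1 (sortedPair u w).2 = centred P G u w := by
            rcases lt_or_ge u w with h | h
            · simp [sortedPair, h.le]
            · simp only [sortedPair, min_eq_right h, max_eq_left h]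
              exact centred_comm hP G _ _
          rw [this]; ring
        rw [heq]
        have hdeg : ∑ e ∈ edgePairs n,
            (c + Pi.single (sortedPair u w) 1 : Fin n × Fin n → ℕ) e + m ≤ N := by
          simp only [Pi.add_apply, Finset.sum_add_distrib]
          rw [Finset.sum_pi_single' ]
          rw [if_pos hmem]; omega
        refine (ih _ w hdeg).trans ?_
        rw [prod_momentBound_add_single s a c hmem, ← hb]
        have : (if c (sortedPair u w) = 0 then a else 1) ≤
            a + if u ≠ w ∧ c (sortedPair u w) ≠ 0 then 1 else 0 := by
          by_cases h : c (sortedPair u w) = 0 <;> simp [h, huw, ha]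
        have := mul_le_mul_of_nonneg_left this (show 0 ≤ b * X ^ m * s by positivity)
        linarith
    calc |∑ w, expect μ (fun G => monomial P c G * (centred P G u w * (centred P G ^ m) w v))|
        ≤ ∑ w, b * X ^ m * s * (a + if u ≠ w ∧ c (sortedPair u w) ≠ 0 then 1 else 0) :=
          (Finset.abs_sum_le_sum_abs _ _).trans (Finset.sum_le_sum fun w _ => hterm w)
      _ = b * X ^ m * s * (n * a +
          (Finset.univ.filter fun w => u ≠ w ∧ c (sortedPair u w) ≠ 0).card) := by
          rw [← Finset.mul_sum, Finset.sum_add_distrib, Finset.sum_boole]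
          simp
      _ ≤ b * X ^ m * s * (n * a + N) := by
          have : ((Finset.univ.filter fun w => u ≠ w ∧ c (sortedPair u w) ≠ 0).card : ℝ) ≤ N := by
            exact_mod_cast (card_used_le c u).trans (by omega)
          gcongr
      _ = b * X ^ (m + 1) := by rw [hX, pow_succ]; ring

theorem expect_trace_pow_le {P : Fin n → Fin n → ℝ} {μ : PMF (SimpleGraph (Fin n))}
    (hμ : IsEdgeProduct P μ) (hP : ∀ v w, P v w = P w v) (h0 : ∀ v w, 0 ≤ P v w)
    (h1 : ∀ v w, P v w ≤ 1) {B : ℝ} {k : ℕ} (hk : 0 < k) (hB : ∀ v w, n * P v w ≤ B)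
    (hkB : 2 * k ≤ B) (hn : 0 < n) :
    expect μ (fun G => (centred P G ^ (2 * k)).trace) ≤ n * (8 * k * B) ^ k := by
  have hk' : (0 : ℝ) < k := by exact_mod_cast hk
  have hn' : (0 : ℝ) < n := by exact_mod_cast hn
  set s := Real.sqrt (B / (2 * k)) with hs
  have hB0 : 0 < B := by linarith
  have hs2 : s ^ 2 = B / (2 * k) := Real.sq_sqrt (by positivity)
  have hs1 : 1 ≤ s := by
    rw [hs, Real.one_le_sqrt, le_div_iff₀ (by positivity)]; linarith
  set a : ℝ := 2 * k / n with ha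
  have hsa : ∀ v w, P v w ≤ s ^ 2 * a := by
    intro v w
    rw [hs2, ha]
    have : B / (2 * k) * (2 * k / n) = B / n := by field_simp
    rw [this, le_div_iff₀ hn', mul_comm]
    exact hB v w
  have hX : (s * (n * a + (2 * k : ℕ))) ^ (2 * k) = (8 * k * B) ^ k := by
    rw [pow_mul]
    congr 1
    have : (n : ℝ) * a = 2 * k := by rw [ha]; field_simp
    rw [this, mul_pow, hs2]
    push_cast
    field_simp
    ring
  have key : ∀ u, expect μ (fun G => (centred P G ^ (2 * k)) u u) ≤ (8 * k * B) ^ k := by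
    intro u
    have := abs_expect_monomial_mul_pow_le hμ hP h0 h1 hs1 (by positivity) hsa (N := 2 * k)
      (2 * k) 0 u u (by simp)
    rw [hX] at this
    simp only [monomial, Pi.zero_apply, pow_zero, Finset.prod_const_one, one_mul, momentBound,
      if_true] at this
    exact (le_abs_self _).trans this
  simp only [Matrix.trace, Matrix.diag_apply]
  rw [expect_sum]
  calc _ ≤ ∑ _u : Fin n, (8 * k * B) ^ k := Finset.sum_le_sum fun u _ => key u
    _ = _ := by simp

theorem trace_pow_nonneg {M : Matrix (Fin n) (Fin n) ℝ} (hM : M.IsSymm) (k : ℕ) :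
    0 ≤ (M ^ (2 * k)).trace := by
  have hT : (M ^ k)ᵀ = M ^ k := by rw [Matrix.transpose_pow, hM]
  have : M ^ (2 * k) = M ^ k * (M ^ k)ᵀ := by rw [hT, ← pow_add]; ring_nf
  rw [this, Matrix.trace]
  refine Finset.sum_nonneg fun i _ => ?_
  rw [Matrix.diag_apply, Matrix.mul_apply]
  exact Finset.sum_nonneg fun j _ => by
    rw [Matrix.transpose_apply]; exact mul_self_nonneg _

theorem prob_trace_le {P : Fin n → Fin n → ℝ} {μ : PMF (SimpleGraph (Fin n))}
    (hμ : IsEdgeProduct P μ) (hP : ∀ v w, P v w = P w v) (h0 : ∀ v w, 0 ≤ P v w)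
    (h1 : ∀ v w, P v w ≤ 1) {B t : ℝ} {k : ℕ} (hk : 0 < k) (hB : ∀ v w, n * P v w ≤ B)
    (hkB : 2 * k ≤ B) (hn : 0 < n) (ht : 0 < t) :
    prob μ (fun G => t ^ (2 * k) < (centred P G ^ (2 * k)).trace) ≤
      n * (8 * k * B / t ^ 2) ^ k := by
  have hE := expect_trace_pow_le hμ hP h0 h1 hk hB hkB hn
  have htk : 0 < t ^ (2 * k) := by positivity
  calc prob μ _ ≤ expect μ (fun G => (t ^ (2 * k))⁻¹ * (centred P G ^ (2 * k)).trace) := by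
        refine expect_mono μ fun G => ?_
        have hsymm : (centred P G).IsSymm := Matrix.IsSymm.ext fun i j => centred_comm hP G j i
        have := trace_pow_nonneg hsymm k
        split_ifs with h
        · rw [le_inv_mul_iff₀ htk]; linarith
        · positivity
    _ = (t ^ (2 * k))⁻¹ * _ := expect_const_mul _ _ _
    _ ≤ (t ^ (2 * k))⁻¹ * (n * (8 * k * B) ^ k) := by gcongr
    _ = _ := by rw [div_pow, ← pow_mul]; field_simp

/-- Indicator vector of `L₁`. -/
def indL1 (n : ℕ) : Fin n → ℝ := fun v => if inL1 n v then 1 else 0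

/-- Indicator vector of `L₂`. -/
def indL2 (n : ℕ) : Fin n → ℝ := fun v => if inL2 n v then 1 else 0

/-- Indicator vector of `R`. -/
def indR (n : ℕ) : Fin n → ℝ := fun v => if inP1 n v then 0 else 1

/-- The sign vector of the planted partition. -/
def planted (n : ℕ) : Fin n → ℝ := fun v => if inP1 n v then 1 else -1

theorem block_cases (v : Fin n) :
    (inL1 n v ∧ ¬ inL2 n v ∧ inP1 n v ∧ indL1 n v = 1 ∧ indL2 n v = 0 ∧ indR n v = 0 ∧
      planted n v = 1) ∨
    (¬ inL1 n v ∧ inL2 n v ∧ inP1 n v ∧ indL1 n v = 0 ∧ indL2 n v = 1 ∧ indR n v = 0 ∧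
      planted n v = 1) ∨
    (¬ inL1 n v ∧ ¬ inL2 n v ∧ ¬ inP1 n v ∧ indL1 n v = 0 ∧ indL2 n v = 0 ∧ indR n v = 1 ∧
      planted n v = -1) := by
  by_cases h1 : inL1 n v
  · have h2 : ¬ inL2 n v := by unfold inL1 inL2 at *; omega
    have h3 : inP1 n v := by unfold inL1 inP1 at *; omega
    simp [indL1, indL2, indR, planted, h1, h2, h3]
  · by_cases h2 : inL2 n v
    · have h3 : inP1 n v := by unfold inL2 inP1 at *; omega
      simp [indL1, indL2, indR, planted, h1, h2, h3]
    · have h3 : ¬ inP1 n v := by unfold inL1 inL2 inP1 at *; omega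
      simp [indL1, indL2, indR, planted, h1, h2, h3]

theorem nestedP_eq (p q K : ℝ) (v w : Fin n) : nestedP n p q K v w =
    indL1 n v * (K * p * indL1 n w + p * indL2 n w + q * indR n w) +
    indL2 n v * (p * indL1 n w + K * p * indL2 n w + q * indR n w) +
    indR n v * (q * indL1 n w + q * indL2 n w + p * indR n w) := by
  rcases block_cases v with ⟨h1, h2, h3, h4, h5, h6, -⟩ | ⟨h1, h2, h3, h4, h5, h6, -⟩ |
      ⟨h1, h2, h3, h4, h5, h6, -⟩ <;>
    rcases block_cases w with ⟨k1, k2, k3, k4, k5, k6, -⟩ | ⟨k1, k2, k3, k4, k5, k6, -⟩ |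
      ⟨k1, k2, k3, k4, k5, k6, -⟩ <;>
    simp [nestedP, h1, h2, h3, h4, h5, h6, k1, k2, k3, k4, k5, k6]

theorem nestedP_comm (p q K : ℝ) (v w : Fin n) : nestedP n p q K v w = nestedP n p q K w v := by
  rw [nestedP_eq, nestedP_eq]; ring

theorem planted_eq : planted n = indL1 n + indL2 n - indR n := by
  funext v
  rcases block_cases v with ⟨-, -, -, h4, h5, h6, h7⟩ | ⟨-, -, -, h4, h5, h6, h7⟩ |
      ⟨-, -, -, h4, h5, h6, h7⟩ <;> simp [h4, h5, h6, h7]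

theorem one_eq_ind : (1 : Fin n → ℝ) = indL1 n + indL2 n + indR n := by
  funext v
  rcases block_cases v with ⟨-, -, -, h4, h5, h6, -⟩ | ⟨-, -, -, h4, h5, h6, -⟩ |
      ⟨-, -, -, h4, h5, h6, -⟩ <;> simp [h4, h5, h6]

theorem card_val_lt {k : ℕ} (hk : k ≤ n) :
    (Finset.univ.filter fun v : Fin n => (v : ℕ) < k).card = k := by
  have : (Finset.univ.filter fun v : Fin n => (v : ℕ) < k) =
      Finset.univ.map (Fin.castLEEmb hk) := by
    ext v
    simp only [Finset.mem_filter, Finset.mem_univ, true_and, Finset.mem_map, Fin.castLEEmb_apply]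
    exact ⟨fun h => ⟨⟨v, h⟩, rfl⟩, by rintro ⟨w, rfl⟩; exact w.2⟩
  rw [this, Finset.card_map, Finset.card_univ, Fintype.card_fin]

theorem sum_planted_half : ∑ v, (indL1 n v + indL2 n v) = (n / 2 : ℕ) := by
  have : ∀ v, indL1 n v + indL2 n v = if (v : ℕ) < n / 2 then 1 else 0 := by
    intro v
    rcases block_cases v with ⟨-, -, h3, h4, h5, -⟩ | ⟨-, -, h3, h4, h5, -⟩ |
      ⟨-, -, h3, h4, h5, -⟩ <;> unfold inP1 at h3 <;> simp [h3, h4, h5]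
  simp only [this, Finset.sum_boole]
  rw [card_val_lt (by omega)]

theorem sum_indL1 (hn : 4 ∣ n) : ∑ v, indL1 n v = (n : ℝ) / 4 := by
  have : ∀ v, indL1 n v = if (v : ℕ) < n / 4 then 1 else 0 := fun v => by
    by_cases h : (v : ℕ) < n / 4 <;> simp [indL1, inL1, h]
  simp only [this, Finset.sum_boole]
  rw [card_val_lt (by omega), Nat.cast_div hn (by norm_num)]
  norm_num

theorem sum_indL2 (hn : 4 ∣ n) : ∑ v, indL2 n v = (n : ℝ) / 4 := by
  have h := sum_planted_half (n := n)
  rw [Finset.sum_add_distrib, sum_indL1 hn,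
    Nat.cast_div (dvd_trans (by norm_num) hn) (by norm_num)] at h
  push_cast at h
  linarith

theorem sum_indR (hn : 4 ∣ n) : ∑ v, indR n v = (n : ℝ) / 2 := by
  have h : ∑ v : Fin n, (1 : Fin n → ℝ) v = n := by simp
  rw [one_eq_ind] at h
  simp only [Pi.add_apply, Finset.sum_add_distrib, sum_indL1 hn, sum_indL2 hn] at h
  linarith

/-- Squared Euclidean mass of `x` weighted by `f`. -/
def mass (f x : Fin n → ℝ) : ℝ := ∑ v, f v * x v ^ 2

theorem mass_add_add (x : Fin n → ℝ) :
    mass (indL1 n) x + mass (indL2 n) x + mass (indR n) x = x ⬝ᵥ x := by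
  simp only [mass, dotProduct, ← Finset.sum_add_distrib]
  refine Finset.sum_congr rfl fun v _ => ?_
  have := congrFun (one_eq_ind (n := n)) v
  simp only [Pi.one_apply, Pi.add_apply] at this
  linear_combination (-(x v ^ 2)) * this

theorem sq_dot_le_mass {f : Fin n → ℝ} (hf : ∀ v, f v = 0 ∨ f v = 1) (x : Fin n → ℝ) :
    (f ⬝ᵥ x) ^ 2 ≤ (∑ v, f v) * mass f x := by
  have h := Finset.sum_mul_sq_le_sq_mul_sq Finset.univ f (fun v => f v * x v)
  have h1 : ∀ v, f v * (f v * x v) = f v * x v := by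
    intro v; rcases hf v with h | h <;> simp [h]
  have h2 : ∀ v, f v ^ 2 = f v := by intro v; rcases hf v with h | h <;> simp [h]
  have h3 : ∀ v, (f v * x v) ^ 2 = f v * x v ^ 2 := by intro v; rw [mul_pow, h2]
  simp only [h1, h2, h3] at h
  exact h

theorem indL1_zero_or (v : Fin n) : indL1 n v = 0 ∨ indL1 n v = 1 := by
  unfold indL1; split_ifs <;> simp

theorem indL2_zero_or (v : Fin n) : indL2 n v = 0 ∨ indL2 n v = 1 := by
  unfold indL2; split_ifs <;> simp

theorem indR_zero_or (v : Fin n) : indR n v = 0 ∨ indR n v = 1 := by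
  unfold indR; split_ifs <;> simp

/-- The full (diagonal included) edge-probability matrix, scaled by `n`: `T = np`, `g = nq`. -/
def nestedMat (n : ℕ) (T g K : ℝ) : Matrix (Fin n) (Fin n) ℝ :=
  Matrix.of (nestedP n (T / n) (g / n) K)

theorem nestedMat_mulVec (T g K : ℝ) (x : Fin n → ℝ) (v : Fin n) :
    (nestedMat n T g K *ᵥ x) v =
      indL1 n v * ((K * T * (indL1 n ⬝ᵥ x) + T * (indL2 n ⬝ᵥ x) + g * (indR n ⬝ᵥ x)) / n) +
      indL2 n v * ((T * (indL1 n ⬝ᵥ x) + K * T * (indL2 n ⬝ᵥ x) + g * (indR n ⬝ᵥ x)) / n) +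
      indR n v * ((g * (indL1 n ⬝ᵥ x) + g * (indL2 n ⬝ᵥ x) + T * (indR n ⬝ᵥ x)) / n) := by
  simp only [nestedMat, Matrix.mulVec, dotProduct, Matrix.of_apply, nestedP_eq, Finset.mul_sum,
    Finset.sum_div, ← Finset.sum_add_distrib]
  refine Finset.sum_congr rfl fun w _ => ?_
  ring

theorem dot_nestedMat_mulVec (T g K : ℝ) (x : Fin n → ℝ) :
    x ⬝ᵥ nestedMat n T g K *ᵥ x =
      (K * T * ((indL1 n ⬝ᵥ x) ^ 2 + (indL2 n ⬝ᵥ x) ^ 2) +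
        2 * T * ((indL1 n ⬝ᵥ x) * (indL2 n ⬝ᵥ x)) + T * (indR n ⬝ᵥ x) ^ 2 +
        2 * g * ((indL1 n ⬝ᵥ x) + (indL2 n ⬝ᵥ x)) * (indR n ⬝ᵥ x)) / n := by
  have h : nestedMat n T g K *ᵥ x =
      ((K * T * (indL1 n ⬝ᵥ x) + T * (indL2 n ⬝ᵥ x) + g * (indR n ⬝ᵥ x)) / n) • indL1 n +
      ((T * (indL1 n ⬝ᵥ x) + K * T * (indL2 n ⬝ᵥ x) + g * (indR n ⬝ᵥ x)) / n) • indL2 n +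
      ((g * (indL1 n ⬝ᵥ x) + g * (indL2 n ⬝ᵥ x) + T * (indR n ⬝ᵥ x)) / n) • indR n := by
    funext v
    rw [nestedMat_mulVec]
    simp only [Pi.add_apply, Pi.smul_apply, smul_eq_mul]
    ring
  rw [h]
  simp only [dotProduct_add, dotProduct_smul, smul_eq_mul]
  rw [dotProduct_comm x (indL1 n), dotProduct_comm x (indL2 n), dotProduct_comm x (indR n)]
  ring

theorem ind_dot_one (hn : 4 ∣ n) : indL1 n ⬝ᵥ 1 = (n : ℝ) / 4 ∧ indL2 n ⬝ᵥ 1 = (n : ℝ) / 4 ∧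
    indR n ⬝ᵥ 1 = (n : ℝ) / 2 := by
  simp only [dotProduct_one]
  exact ⟨sum_indL1 hn, sum_indL2 hn, sum_indR hn⟩

theorem ind_dot_planted (hn : 4 ∣ n) : indL1 n ⬝ᵥ planted n = (n : ℝ) / 4 ∧
    indL2 n ⬝ᵥ planted n = (n : ℝ) / 4 ∧ indR n ⬝ᵥ planted n = -((n : ℝ) / 2) := by
  rw [← sum_indL1 hn]
  nth_rewrite 2 [sum_indL1 hn]
  rw [← sum_indL2 hn, ← sum_indR hn, ← Finset.sum_neg_distrib]
  simp only [dotProduct]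
  refine ⟨Finset.sum_congr rfl fun v _ => ?_, Finset.sum_congr rfl fun v _ => ?_,
    Finset.sum_congr rfl fun v _ => ?_⟩ <;>
  rcases block_cases v with ⟨-, -, -, h4, h5, h6, h7⟩ | ⟨-, -, -, h4, h5, h6, h7⟩ |
      ⟨-, -, -, h4, h5, h6, h7⟩ <;> simp [h4, h5, h6, h7]

theorem planted_dot_self : planted n ⬝ᵥ planted n = n := by
  have : ∀ v, planted n v * planted n v = 1 := by
    intro v; unfold planted; split_ifs <;> norm_num
  simp [dotProduct, this]

theorem one_dot_planted (hn : 4 ∣ n) : (1 : Fin n → ℝ) ⬝ᵥ planted n = 0 := by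
  obtain ⟨h1, h2, h3⟩ := ind_dot_planted hn
  rw [one_eq_ind, add_dotProduct, add_dotProduct, h1, h2, h3]
  ring

/-- Expected degrees: `T (K + 1) / 4 + g / 2` on `L`, and `(T + g) / 2` on `R`. -/
def expDeg (n : ℕ) (T g K : ℝ) : Fin n → ℝ := fun v =>
  if inP1 n v then T * (K + 1) / 4 + g / 2 else (T + g) / 2

theorem nestedMat_mulVec_one (hn : 4 ∣ n) (hn0 : 0 < n) (T g K : ℝ) :
    nestedMat n T g K *ᵥ 1 = expDeg n T g K := by
  have hn' : (n : ℝ) ≠ 0 := by exact_mod_cast hn0.ne'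
  funext v
  obtain ⟨e1, e2, e3⟩ := ind_dot_one hn
  rw [nestedMat_mulVec, e1, e2, e3, expDeg]
  rcases block_cases v with ⟨-, -, h3, h4, h5, h6, h7⟩ | ⟨-, -, h3, h4, h5, h6, h7⟩ |
      ⟨-, -, h3, h4, h5, h6, h7⟩ <;> simp only [h3, h4, h5, h6, if_true, if_false] <;> field_simp <;>
      ring

theorem nestedMat_mulVec_planted (hn : 4 ∣ n) (hn0 : 0 < n) (T g K : ℝ) (v : Fin n) :
    (nestedMat n T g K *ᵥ planted n) v = (expDeg n T g K v - g) * planted n v := by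
  have hn' : (n : ℝ) ≠ 0 := by exact_mod_cast hn0.ne'
  obtain ⟨e1, e2, e3⟩ := ind_dot_planted hn
  rw [nestedMat_mulVec, e1, e2, e3, expDeg]
  rcases block_cases v with ⟨-, -, h3, h4, h5, h6, h7⟩ | ⟨-, -, h3, h4, h5, h6, h7⟩ |
      ⟨-, -, h3, h4, h5, h6, h7⟩ <;> simp only [h3, h4, h5, h6, h7, if_true, if_false] <;> field_simp <;>
      ring

theorem sum_expDeg_mul_sq (T g K : ℝ) (x : Fin n → ℝ) :
    ∑ v, expDeg n T g K v * x v ^ 2 =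
      (T * (K + 1) / 4 + g / 2) * (mass (indL1 n) x + mass (indL2 n) x) +
        (T + g) / 2 * mass (indR n) x := by
  simp only [mass, Finset.mul_sum, ← Finset.sum_add_distrib]
  refine Finset.sum_congr rfl fun v _ => ?_
  rw [expDeg]
  rcases block_cases v with ⟨-, -, h3, h4, h5, h6, h7⟩ | ⟨-, -, h3, h4, h5, h6, h7⟩ |
      ⟨-, -, h3, h4, h5, h6, h7⟩ <;> simp only [h3, h4, h5, h6, if_true, if_false] <;> ring

/-- Coercivity of the expected Laplacian off the constants. -/
theorem expected_form_ge (hn : 4 ∣ n) (hn0 : 0 < n) {T g K : ℝ} (hg : 0 ≤ g) (hgT : g ≤ T)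
    (hK : 1 ≤ K) {z : Fin n → ℝ} (hz : z ⬝ᵥ 1 = 0) :
    g * (z ⬝ᵥ z) ≤ ∑ v, expDeg n T g K v * z v ^ 2 - z ⬝ᵥ nestedMat n T g K *ᵥ z := by
  have hn' : (0 : ℝ) < n := by exact_mod_cast hn0
  have c1 := sq_dot_le_mass indL1_zero_or z
  have c2 := sq_dot_le_mass indL2_zero_or z
  have c3 := sq_dot_le_mass indR_zero_or z
  rw [sum_indL1 hn] at c1
  rw [sum_indL2 hn] at c2
  rw [sum_indR hn] at c3
  rw [dotProduct_comm, one_eq_ind, add_dotProduct, add_dotProduct] at hz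
  rw [sum_expDeg_mul_sq, dot_nestedMat_mulVec, ← mass_add_add]
  set a := indL1 n ⬝ᵥ z
  set b := indL2 n ⬝ᵥ z
  set c := indR n ⬝ᵥ z
  have hc : c = -(a + b) := by linarith
  rw [hc] at c3 ⊢
  have c1' : 4 * a ^ 2 / n ≤ mass (indL1 n) z := by rw [div_le_iff₀ hn']; linarith
  have c2' : 4 * b ^ 2 / n ≤ mass (indL2 n) z := by rw [div_le_iff₀ hn']; linarith
  have c3' : 2 * (-(a + b)) ^ 2 / n ≤ mass (indR n) z := by rw [div_le_iff₀ hn']; linarith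
  have hT : 0 ≤ T := hg.trans hgT
  have k1 := mul_le_mul_of_nonneg_left (add_le_add c1' c2')
    (show 0 ≤ T * (K + 1) / 4 - g / 2 by nlinarith)
  have k3 := mul_le_mul_of_nonneg_left c3' (show 0 ≤ (T - g) / 2 by linarith)
  have k4 : 0 ≤ (T - g) * (a - b) ^ 2 / n :=
    div_nonneg (mul_nonneg (sub_nonneg.mpr hgT) (sq_nonneg _)) hn'.le
  have e : (K * T * (a ^ 2 + b ^ 2) + 2 * T * (a * b) + T * (-(a + b)) ^ 2 +
      2 * g * (a + b) * -(a + b)) / n =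
      (T * (K + 1) / 4 - g / 2) * (4 * a ^ 2 / n + 4 * b ^ 2 / n) +
      (T - g) / 2 * (2 * (-(a + b)) ^ 2 / n) - (T - g) * (a - b) ^ 2 / n := by
    field_simp; ring
  rw [e]
  linarith

/-- Coercivity of the expected Laplacian off the span of the constants and the planted vector. -/
theorem expected_form_ge_of_dot_planted (hn : 4 ∣ n) (hn0 : 0 < n) {T g K : ℝ} (hg : 0 ≤ g)
    (hgT : g ≤ T) (hK : 1 ≤ K) {z : Fin n → ℝ} (hz : z ⬝ᵥ 1 = 0) (hz' : z ⬝ᵥ planted n = 0) :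
    (T + g) / 2 * (z ⬝ᵥ z) ≤
      ∑ v, expDeg n T g K v * z v ^ 2 - z ⬝ᵥ nestedMat n T g K *ᵥ z := by
  have hn' : (0 : ℝ) < n := by exact_mod_cast hn0
  have c1 := sq_dot_le_mass indL1_zero_or z
  have c2 := sq_dot_le_mass indL2_zero_or z
  rw [sum_indL1 hn] at c1
  rw [sum_indL2 hn] at c2
  rw [dotProduct_comm, one_eq_ind, add_dotProduct, add_dotProduct] at hz
  rw [dotProduct_comm, planted_eq, sub_dotProduct, add_dotProduct] at hz'
  rw [sum_expDeg_mul_sq, dot_nestedMat_mulVec, ← mass_add_add]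
  set a := indL1 n ⬝ᵥ z
  set b := indL2 n ⬝ᵥ z
  set c := indR n ⬝ᵥ z
  have hc : c = 0 := by linarith
  have hb : b = -a := by linarith
  rw [hb] at c2 ⊢
  rw [hc]
  have h : 2 * a ^ 2 / n ≤ (mass (indL1 n) z + mass (indL2 n) z) / 4 := by
    rw [div_le_iff₀ hn']; linarith
  have hT : 0 ≤ T := hg.trans hgT
  have k := mul_le_mul_of_nonneg_left h (mul_nonneg (sub_nonneg.mpr hK) hT)
  have e : (K * T * (a ^ 2 + (-a) ^ 2) + 2 * T * (a * -a) + T * 0 ^ 2 + 2 * g * (a + -a) * 0) / n =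
      (K - 1) * T * (2 * a ^ 2 / n) := by field_simp; ring
  rw [e]
  linarith

theorem adjM_comm (G : SimpleGraph (Fin n)) (v w : Fin n) : adjM G v w = adjM G w v := by
  simp [adjM, G.adj_comm]

theorem adjM_isSymm (G : SimpleGraph (Fin n)) : (adjM G).IsSymm :=
  Matrix.IsSymm.ext fun i j => adjM_comm G j i

theorem adjM_zero_or (G : SimpleGraph (Fin n)) (v w : Fin n) : adjM G v w = 0 ∨ adjM G v w = 1 := by
  by_cases h : G.Adj v w <;> simp [adjM, h]

theorem adjM_nonneg (G : SimpleGraph (Fin n)) (v w : Fin n) : 0 ≤ adjM G v w := by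
  rcases adjM_zero_or G v w with h | h <;> simp [h]

/-- The degrees of `G`, as a real vector. -/
def degVec (G : SimpleGraph (Fin n)) : Fin n → ℝ := adjM G *ᵥ 1

theorem degVec_apply (G : SimpleGraph (Fin n)) (v : Fin n) : degVec G v = ∑ w, adjM G v w := by
  simp [degVec, Matrix.mulVec, dotProduct]

theorem deg_eq_degVec (G : SimpleGraph (Fin n)) (v : Fin n) : (deg G v : ℝ) = degVec G v := by
  rw [degVec_apply]
  simp only [adjM, Matrix.of_apply, Finset.sum_boole, deg]
  rw [Nat.card_eq_fintype_card, Fintype.card_subtype]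

theorem lap_mulVec (G : SimpleGraph (Fin n)) (x : Fin n → ℝ) (v : Fin n) :
    (lap G *ᵥ x) v = degVec G v * x v - (adjM G *ᵥ x) v := by
  rw [lap, wlap, Matrix.sub_mulVec, Pi.sub_apply, Matrix.mulVec_diagonal, degVec_apply]

theorem lap_mulVec_eq_sum (G : SimpleGraph (Fin n)) (x : Fin n → ℝ) (v : Fin n) :
    (lap G *ᵥ x) v = ∑ w, adjM G v w * (x v - x w) := by
  rw [lap_mulVec, degVec_apply, Finset.sum_mul]
  simp only [Matrix.mulVec, dotProduct, mul_sub, Finset.sum_sub_distrib]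

theorem lap_isSymm (G : SimpleGraph (Fin n)) : (lap G).IsSymm := by
  rw [lap, wlap, Matrix.IsSymm, Matrix.transpose_sub, Matrix.diagonal_transpose,
    (adjM_isSymm G).eq]

theorem lap_mulVec_one (G : SimpleGraph (Fin n)) : lap G *ᵥ 1 = 0 := by
  funext v
  simp [lap_mulVec_eq_sum]

theorem lap_form (G : SimpleGraph (Fin n)) (x : Fin n → ℝ) :
    x ⬝ᵥ lap G *ᵥ x = ∑ v, degVec G v * x v ^ 2 - x ⬝ᵥ adjM G *ᵥ x := by
  simp only [dotProduct, lap_mulVec, ← Finset.sum_sub_distrib]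
  exact Finset.sum_congr rfl fun v _ => by ring

/-- Deviation of the adjacency matrix from the block probabilities. -/
def noise (T g K : ℝ) (G : SimpleGraph (Fin n)) : Matrix (Fin n) (Fin n) ℝ :=
  adjM G - nestedMat n T g K

/-- The deterministic properties of a typical graph of the nested block instance with
`T = np` and `g = nq`. -/
structure IsTypical (α K T g η : ℝ) (G : SimpleGraph (Fin n)) : Prop where
  four_dvd : 4 ∣ n
  n_pos : 0 < n
  g_pos : 0 < g
  T_eq : T = α * g
  two_le : 2 ≤ α
  le_K : 3 * α ≤ K
  eta_pos : 0 < η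
  eta_le : 4000 * K ^ 2 * η ≤ 1
  one_le : 1 ≤ η * T
  large : 256 * α ^ 2 * K ≤ T
  form_le : ∀ x y, |x ⬝ᵥ noise T g K G *ᵥ y| ≤ η * T * (l2 x * l2 y)
  row_one : ∀ v, |(noise T g K G *ᵥ 1) v| ≤ η * T
  row_planted : ∀ v, |(noise T g K G *ᵥ planted n) v| ≤ η * T
  row_capture : ∀ v, (∃ y, CapturesNear (lap (isolate G v)) g (g / 4) y) →
    ∃ y, CapturesNear (lap (isolate G v)) g (g / 4) y ∧ |(noise T g K G *ᵥ y) v| ≤ η * T * ‖y‖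

namespace IsTypical

variable {α K T g η : ℝ} {G : SimpleGraph (Fin n)}

theorem two_mul_le (h : IsTypical α K T g η G) : 2 * g ≤ T := by
  rw [h.T_eq]; nlinarith [h.two_le, h.g_pos]

theorem T_pos (h : IsTypical α K T g η G) : 0 < T := by
  linarith [h.two_mul_le, h.g_pos]

theorem six_le (h : IsTypical α K T g η G) : 6 ≤ K := by
  linarith [h.two_le, h.le_K]

/-- The error level is negligible with respect to `g`. -/
theorem eta_T_le (h : IsTypical α K T g η G) : 8000 * (η * T) ≤ g := by
  have hK := h.six_le
  have h1 := h.eta_le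
  have hα := h.two_le
  have h2 : 8000 * (α * η) ≤ 1 := by
    nlinarith [h.le_K, h.eta_pos, mul_pos h.eta_pos (show 0 < K by linarith)]
  rw [h.T_eq]
  nlinarith [mul_le_mul_of_nonneg_right h2 h.g_pos.le]

theorem eta_K_le (h : IsTypical α K T g η G) : 24000 * (K * η) ≤ 1 := by
  have hK := h.six_le
  have := h.eta_le
  nlinarith [mul_nonneg (show 0 ≤ K by linarith) h.eta_pos.le]

theorem adj_mulVec (T g K : ℝ) (G : SimpleGraph (Fin n)) (x : Fin n → ℝ) (v : Fin n) :
    (adjM G *ᵥ x) v = (nestedMat n T g K *ᵥ x) v + (noise T g K G *ᵥ x) v := by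
  rw [noise, Matrix.sub_mulVec, Pi.sub_apply]; ring

theorem degVec_eq (h : IsTypical α K T g η G) (v : Fin n) :
    degVec G v = expDeg n T g K v + (noise T g K G *ᵥ 1) v := by
  rw [degVec, adj_mulVec T g K, nestedMat_mulVec_one h.four_dvd h.n_pos]

theorem abs_degVec_sub_le (h : IsTypical α K T g η G) (v : Fin n) :
    |degVec G v - expDeg n T g K v| ≤ η * T := by
  rw [h.degVec_eq, add_sub_cancel_left]; exact h.row_one v

theorem expDeg_le (h : IsTypical α K T g η G) (v : Fin n) :
    expDeg n T g K v + η * T ≤ K * T := by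
  have := h.two_mul_le
  have := h.g_pos
  have := h.eta_T_le
  have := mul_le_mul_of_nonneg_right h.six_le h.T_pos.le
  rw [expDeg]; split_ifs <;> linarith

theorem le_expDeg (h : IsTypical α K T g η G) (v : Fin n) : (T + g) / 2 ≤ expDeg n T g K v := by
  have := h.two_mul_le
  have := h.g_pos
  have := mul_le_mul_of_nonneg_right h.six_le h.T_pos.le
  rw [expDeg]; split_ifs <;> linarith

theorem degVec_le (h : IsTypical α K T g η G) (v : Fin n) : degVec G v ≤ K * T := by
  linarith [h.expDeg_le v, (abs_le.mp (h.abs_degVec_sub_le v)).2]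

theorem le_degVec (h : IsTypical α K T g η G) (v : Fin n) : T / 2 ≤ degVec G v := by
  linarith [h.le_expDeg v, (abs_le.mp (h.abs_degVec_sub_le v)).1, h.g_pos, h.eta_T_le]

theorem abs_form_sub_le (h : IsTypical α K T g η G) (x : Fin n → ℝ) :
    |x ⬝ᵥ lap G *ᵥ x - (∑ v, expDeg n T g K v * x v ^ 2 - x ⬝ᵥ nestedMat n T g K *ᵥ x)| ≤
      2 * (η * T) * (x ⬝ᵥ x) := by
  have h1 : x ⬝ᵥ adjM G *ᵥ x = x ⬝ᵥ nestedMat n T g K *ᵥ x + x ⬝ᵥ noise T g K G *ᵥ x := by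
    rw [← dotProduct_add, ← Matrix.add_mulVec, noise, add_sub_cancel]
  have h2 : ∑ v, degVec G v * x v ^ 2 =
      ∑ v, expDeg n T g K v * x v ^ 2 + ∑ v, (noise T g K G *ᵥ 1) v * x v ^ 2 := by
    rw [← Finset.sum_add_distrib]
    exact Finset.sum_congr rfl fun v _ => by rw [h.degVec_eq]; ring
  have h3 : |∑ v, (noise T g K G *ᵥ 1) v * x v ^ 2| ≤ η * T * (x ⬝ᵥ x) := by
    refine (Finset.abs_sum_le_sum_abs _ _).trans ?_
    rw [dotProduct, Finset.mul_sum]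
    refine Finset.sum_le_sum fun v _ => ?_
    rw [abs_mul, abs_of_nonneg (sq_nonneg (x v)), ← sq]
    exact mul_le_mul_of_nonneg_right (h.row_one v) (sq_nonneg _)
  have h4 := h.form_le x x
  rw [← sq, l2_sq] at h4
  rw [lap_form, h1, h2]
  rw [abs_le] at *
  constructor <;> linarith [h3.1, h3.2, h4.1, h4.2]

theorem lap_form_ge (h : IsTypical α K T g η G) {z : Fin n → ℝ} (hz : z ⬝ᵥ 1 = 0) :
    (g - 2 * (η * T)) * (z ⬝ᵥ z) ≤ z ⬝ᵥ lap G *ᵥ z := by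
  have h1 := expected_form_ge h.four_dvd h.n_pos h.g_pos.le
    (show g ≤ T by linarith [h.two_mul_le, h.g_pos]) (show 1 ≤ K by linarith [h.six_le]) hz
  have h2 := (abs_le.mp (h.abs_form_sub_le z)).1
  linarith

theorem lap_form_ge_of_dot_planted (h : IsTypical α K T g η G) {z : Fin n → ℝ}
    (hz : z ⬝ᵥ 1 = 0) (hz' : z ⬝ᵥ planted n = 0) :
    ((T + g) / 2 - 2 * (η * T)) * (z ⬝ᵥ z) ≤ z ⬝ᵥ lap G *ᵥ z := by
  have h1 := expected_form_ge_of_dot_planted h.four_dvd h.n_pos h.g_pos.le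
    (show g ≤ T by linarith [h.two_mul_le, h.g_pos]) (show 1 ≤ K by linarith [h.six_le]) hz hz'
  have h2 := (abs_le.mp (h.abs_form_sub_le z)).1
  linarith

theorem abs_lap_planted_sub_le (h : IsTypical α K T g η G) (v : Fin n) :
    |(lap G *ᵥ planted n - g • planted n) v| ≤ 2 * (η * T) := by
  have e : (lap G *ᵥ planted n - g • planted n) v =
      (noise T g K G *ᵥ 1) v * planted n v - (noise T g K G *ᵥ planted n) v := by
    rw [Pi.sub_apply, lap_mulVec, adj_mulVec T g K, nestedMat_mulVec_planted h.four_dvd h.n_pos,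
      h.degVec_eq, Pi.smul_apply, smul_eq_mul]
    ring
  rw [e]
  have h1 := h.row_one v
  have h2 := h.row_planted v
  have h3 : |(noise T g K G *ᵥ 1) v * planted n v| = |(noise T g K G *ᵥ 1) v| := by
    unfold planted; split_ifs <;> simp
  linarith [abs_sub ((noise T g K G *ᵥ 1) v * planted n v) ((noise T g K G *ᵥ planted n) v)]

theorem l2_planted_residual_le (h : IsTypical α K T g η G) :
    l2 (lap G *ᵥ planted n - g • planted n) ≤ 2 * (η * T) * Real.sqrt n := by
  have hT := mul_nonneg h.eta_pos.le h.T_pos.le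
  refine l2_le_of_sq_le (by positivity) ?_
  rw [mul_pow, Real.sq_sqrt (Nat.cast_nonneg n), dotProduct]
  calc _ ≤ ∑ _v : Fin n, (2 * (η * T)) ^ 2 := Finset.sum_le_sum fun v _ => by
        rw [← sq, ← sq_abs]
        exact pow_le_pow_left₀ (abs_nonneg _) (h.abs_lap_planted_sub_le v) 2
    _ = _ := by simp; ring

theorem l2_planted : l2 (planted n) = Real.sqrt n := by
  rw [← Real.sqrt_sq (l2_nonneg (planted n)), l2_sq, planted_dot_self]

theorem le_eig (h : IsTypical α K T g η G) : g - 2 * (η * T) ≤ eig (lap G) 1 := by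
  have h4 := Nat.le_of_dvd h.n_pos h.four_dvd
  exact le_eig_one (by omega) (lap_isSymm G) 1 fun z hz => h.lap_form_ge hz

theorem eig_le (h : IsTypical α K T g η G) : eig (lap G) 1 ≤ g + 2 * (η * T) := by
  have hn : (0 : ℝ) < n := by exact_mod_cast h.n_pos
  have hT := mul_nonneg h.eta_pos.le h.T_pos.le
  have h11 : (1 : Fin n → ℝ) ⬝ᵥ 1 = n := by simp
  have h1s := one_dot_planted h.four_dvd
  have hs1 : planted n ⬝ᵥ 1 = 0 := by rw [dotProduct_comm, h1s]
  have hss := planted_dot_self (n := n)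
  refine eig_one_le (lap_isSymm G) 1 (planted n) ?_ ?_
  · intro a b hab
    have e1 := congrArg (· ⬝ᵥ (1 : Fin n → ℝ)) hab
    have e2 := congrArg (· ⬝ᵥ planted n) hab
    simp only [add_dotProduct, smul_dotProduct, h11, h1s, hs1, hss, smul_eq_mul,
      zero_dotProduct, mul_zero, add_zero, zero_add, mul_eq_zero, hn.ne', or_false] at e1 e2
    exact ⟨e1, e2⟩
  · intro a b
    have hL1 : ∀ y, (1 : Fin n → ℝ) ⬝ᵥ lap G *ᵥ y = 0 := by
      intro y; rw [← symm_dot (lap_isSymm G), lap_mulVec_one, zero_dotProduct]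
    have hss' : planted n ⬝ᵥ lap G *ᵥ planted n ≤ (g + 2 * (η * T)) * n := by
      have e : planted n ⬝ᵥ lap G *ᵥ planted n =
          planted n ⬝ᵥ (lap G *ᵥ planted n - g • planted n) + g * n := by
        rw [dotProduct_sub, dotProduct_smul, hss, smul_eq_mul]; ring
      have := (abs_le.mp (abs_dot_le (planted n) (lap G *ᵥ planted n - g • planted n))).2
      have h2 := mul_le_mul_of_nonneg_left h.l2_planted_residual_le (l2_nonneg (planted n))
      rw [l2_planted] at this h2
      have h3 := Real.mul_self_sqrt (Nat.cast_nonneg (α := ℝ) n)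
      rw [e]
      nlinarith
    simp only [Matrix.mulVec_add, Matrix.mulVec_smul, lap_mulVec_one, smul_zero, zero_add,
      add_dotProduct, smul_dotProduct, dotProduct_add, dotProduct_smul, h11, h1s, hs1, hss, hL1,
      smul_eq_mul, mul_zero, add_zero]
    have hpos : 0 ≤ g + 2 * (η * T) := by linarith [h.g_pos]
    have h5 := mul_le_mul_of_nonneg_left hss' (sq_nonneg b)
    have h6 : 0 ≤ (g + 2 * (η * T)) * (a ^ 2 * n) := by positivity
    linarith

end IsTypical

theorem adjM_isolate (G : SimpleGraph (Fin n)) (v a b : Fin n) :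
    adjM (isolate G v) a b = if a = v ∨ b = v then 0 else adjM G a b := by
  by_cases ha : a = v <;> by_cases hb : b = v <;> simp [adjM, isolate, ha, hb]

theorem lap_isolate_mulVec_self (G : SimpleGraph (Fin n)) (v : Fin n) (x : Fin n → ℝ) :
    (lap (isolate G v) *ᵥ x) v = 0 := by
  simp [lap_mulVec_eq_sum, adjM_isolate]

theorem lap_isolate_mulVec_of_ne (G : SimpleGraph (Fin n)) {v w : Fin n} (hw : w ≠ v)
    (x : Fin n → ℝ) :
    (lap (isolate G v) *ᵥ x) w = (lap G *ᵥ x) w - adjM G w v * (x w - x v) := by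
  rw [lap_mulVec_eq_sum, lap_mulVec_eq_sum, eq_sub_iff_add_eq]
  have : adjM G w v * (x w - x v) = ∑ w', if w' = v then adjM G w w' * (x w - x w') else 0 := by
    simp
  rw [this, ← Finset.sum_add_distrib]
  refine Finset.sum_congr rfl fun w' _ => ?_
  by_cases h : w' = v <;> simp [adjM_isolate, hw, h]

theorem lap_isolate_mulVec_congr (G : SimpleGraph (Fin n)) {v : Fin n} {x y : Fin n → ℝ}
    (h : ∀ w, w ≠ v → x w = y w) : lap (isolate G v) *ᵥ x = lap (isolate G v) *ᵥ y := by
  funext w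
  rw [lap_mulVec_eq_sum, lap_mulVec_eq_sum]
  refine Finset.sum_congr rfl fun w' _ => ?_
  by_cases h1 : w = v
  · simp [adjM_isolate, h1]
  by_cases h2 : w' = v
  · simp [adjM_isolate, h2]
  rw [h w h1, h w' h2]

theorem lap_isolate_form_ge (G : SimpleGraph (Fin n)) {v : Fin n} {z : Fin n → ℝ} (hz : z v = 0) :
    z ⬝ᵥ lap G *ᵥ z - z ⬝ᵥ z ≤ z ⬝ᵥ lap (isolate G v) *ᵥ z := by
  simp only [dotProduct, ← Finset.sum_sub_distrib]
  refine Finset.sum_le_sum fun w _ => ?_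
  by_cases h : w = v
  · simp [h, hz]
  · rw [lap_isolate_mulVec_of_ne G h, hz]
    rcases adjM_zero_or G w v with h | h <;> rw [h] <;> nlinarith [mul_self_nonneg (z w)]

theorem norm_le_l2 (x : Fin n → ℝ) : ‖x‖ ≤ l2 x :=
  (pi_norm_le_iff_of_nonneg (l2_nonneg x)).mpr fun v => abs_apply_le_l2 x v

namespace IsTypical

variable {α K T g η : ℝ} {G : SimpleGraph (Fin n)}

theorem exists_capturesNear_isolate (h : IsTypical α K T g η G) (v : Fin n) :
    ∃ y, CapturesNear (lap (isolate G v)) g (g / 4) y := by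
  have hg := h.g_pos
  have hS := lap_isSymm (isolate G v)
  obtain ⟨b, l, hb⟩ := exists_isEigenbasis hS
  refine exists_capturesNear hS hb (by positivity) fun i j hi hj => ?_
  by_contra hij
  have key : ∀ i, |l i - g| < g / 4 → b i ⬝ᵥ 1 = 0 ∧ b i v = 0 := by
    intro i hi
    have hl : l i ≠ 0 := by
      have := (abs_lt.mp hi).1
      intro h0; rw [h0] at this; linarith
    constructor
    · have h1 := symm_dot hS (b i) 1
      rw [lap_mulVec_one, hb.mulVec_eq, smul_dotProduct, dotProduct_zero, smul_eq_mul] at h1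
      exact (mul_eq_zero.mp h1).resolve_left hl
    · have h1 := lap_isolate_mulVec_self G v (b i)
      rw [hb.mulVec_eq, Pi.smul_apply, smul_eq_mul] at h1
      exact (mul_eq_zero.mp h1).resolve_left hl
  obtain ⟨a, c, hac, h0, hself, hform⟩ := hb.exists_combination hij (planted n)
  set z := a • b i + c • b j with hz
  have hz1 : z ⬝ᵥ 1 = 0 := by
    rw [hz, add_dotProduct, smul_dotProduct, smul_dotProduct, (key i hi).1, (key j hj).1]; simp
  have hzv : z v = 0 := by
    simp [hz, (key i hi).2, (key j hj).2]
  have h1 := h.lap_form_ge_of_dot_planted hz1 h0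
  have h2 := lap_isolate_form_ge G hzv
  rw [hself] at h1 h2
  rw [hform] at h2
  have hli := (abs_lt.mp hi).2
  have hlj := (abs_lt.mp hj).2
  have h3 := h.eta_T_le
  have h4 := h.one_le
  have h5 := h.two_mul_le
  have h6 : 5 / 4 * g ≤ (T + g) / 2 - 2 * (η * T) - 1 := by linarith
  have h7 := mul_le_mul_of_nonneg_right h6 hac.le
  have h8 : l i * a ^ 2 + l j * c ^ 2 ≤ 5 / 4 * g * (a ^ 2 + c ^ 2) := by
    nlinarith [sq_nonneg a, sq_nonneg c]
  have h9 : l i * a ^ 2 + l j * c ^ 2 < 5 / 4 * g * (a ^ 2 + c ^ 2) := by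
    rcases (sq_nonneg a).lt_or_eq with ha | ha
    · nlinarith [sq_nonneg c]
    · have hc : 0 < c ^ 2 := by linarith
      nlinarith
  linarith

theorem noise_row_dot_le (h : IsTypical α K T g η G) (v : Fin n) (e : Fin n → ℝ) :
    |(noise T g K G *ᵥ e) v| ≤ η * T * l2 e := by
  have h1 := h.form_le (Pi.single v 1) e
  have h2 : l2 (Pi.single v (1 : ℝ) : Fin n → ℝ) = 1 := by
    rw [← Real.sqrt_sq (l2_nonneg _), l2_sq]; simp
  rw [h2, one_mul] at h1
  simpa using h1

/-- Leave-one-out bound for the noise term of an eigenvector near the planted eigenvalue. -/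
theorem abs_noise_mulVec_le (h : IsTypical α K T g η G) {t : ℝ} (ht : |t - g| ≤ 2 * (η * T))
    {U : Fin n → ℝ} (hU : lap G *ᵥ U = t • U) (v : Fin n) :
    |(noise T g K G *ᵥ U) v| ≤ 4 * (η * T * ‖U‖) := by
  have hg := h.g_pos
  have hT := h.T_pos
  have hK := h.six_le
  obtain ⟨y, hy, hyv⟩ := h.row_capture v (h.exists_capturesNear_isolate v)
  set X := ‖U‖ with hX
  have hX0 : 0 ≤ X := norm_nonneg _
  have hUX : ∀ w, |U w| ≤ X := fun w => norm_le_pi_norm U w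
  set x : Fin n → ℝ := fun w => if w = v then 0 else U w with hx
  have hxX : ‖x‖ ≤ X := by
    refine (pi_norm_le_iff_of_nonneg hX0).mpr fun w => ?_
    simp only [hx]
    split_ifs
    · simpa using hX0
    · exact hUX w
  have ht' : |t - g| ≤ g / 4 / 2 := by linarith [h.eta_T_le]
  obtain ⟨a, ha⟩ := hy t ht' x
  have hres : ∀ w, (lap (isolate G v) *ᵥ x - t • x) w =
      if w = v then 0 else -(adjM G v w * (U w - U v)) := by
    intro w
    rw [Pi.sub_apply, Pi.smul_apply, smul_eq_mul]
    by_cases hw : w = v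
    · subst hw
      rw [lap_isolate_mulVec_self]; simp [hx]
    · have : lap (isolate G v) *ᵥ x = lap (isolate G v) *ᵥ U :=
        lap_isolate_mulVec_congr G fun w hw => by simp [hx, hw]
      rw [this, lap_isolate_mulVec_of_ne G hw, hU, Pi.smul_apply, smul_eq_mul, adjM_comm]
      simp only [hx, hw, if_false]; ring
  have hres2 : l2 (lap (isolate G v) *ᵥ x - t • x) ≤ 2 * X * Real.sqrt (K * T) := by
    refine l2_le_of_sq_le (by positivity) ?_
    rw [mul_pow, Real.sq_sqrt (by positivity), dotProduct]
    calc _ ≤ ∑ w, (2 * X) ^ 2 * adjM G v w := by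
          refine Finset.sum_le_sum fun w _ => ?_
          rw [hres w]
          split_ifs
          · have := adjM_nonneg G v w
            simp only [mul_zero]; positivity
          · rcases adjM_zero_or G v w with h0 | h0 <;> rw [h0]
            · simp
            · have : |U w - U v| ≤ 2 * X := by
                linarith [abs_sub (U w) (U v), hUX w, hUX v]
              have := sq_le_sq' (by linarith [(abs_le.mp this).1]) (abs_le.mp this).2
              linarith
      _ = (2 * X) ^ 2 * degVec G v := by rw [← Finset.mul_sum, degVec_apply]
      _ ≤ _ := mul_le_mul_of_nonneg_left (h.degVec_le v) (sq_nonneg _)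
  have hsqrt : Real.sqrt (K * T) ≤ g / 16 := by
    rw [Real.sqrt_le_left (by positivity)]
    have h1 := mul_le_mul_of_nonneg_right h.large hT.le
    have h2 : T * T = α ^ 2 * g ^ 2 := by rw [h.T_eq]; ring
    have hα : 0 < α ^ 2 := by have := h.two_le; positivity
    have h3 : α ^ 2 * (256 * (K * T)) ≤ α ^ 2 * g ^ 2 := by linarith
    have := le_of_mul_le_mul_left h3 hα
    linarith
  set e := x - a • y with he
  have hle : l2 e ≤ X := by
    have h1 := mul_le_mul_of_nonneg_left hsqrt (show 0 ≤ 2 * X by positivity)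
    have h2 : g / 8 * l2 e ≤ g / 8 * X := by linarith
    exact le_of_mul_le_mul_left h2 (by positivity)
  have hay : |a| * ‖y‖ ≤ 2 * X := by
    rw [← Real.norm_eq_abs, ← norm_smul]
    have : a • y = x - e := by rw [he]; abel
    rw [this]
    linarith [norm_sub_le x e, norm_le_l2 e]
  have hηT := mul_pos h.eta_pos hT
  have hMy : |a * (noise T g K G *ᵥ y) v| ≤ 2 * (η * T * X) := by
    rw [abs_mul]
    have := mul_le_mul_of_nonneg_left hyv (abs_nonneg a)
    have := mul_le_mul_of_nonneg_left hay hηT.le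
    linarith
  have hMe := (h.noise_row_dot_le v e).trans (mul_le_mul_of_nonneg_left hle hηT.le)
  have hsingle : |U v * (noise T g K G *ᵥ Pi.single v 1) v| ≤ η * T * X := by
    have h1 := h.noise_row_dot_le v (Pi.single v 1)
    have h2 : l2 (Pi.single v (1 : ℝ) : Fin n → ℝ) = 1 := by
      rw [← Real.sqrt_sq (l2_nonneg _), l2_sq]; simp
    rw [h2, mul_one] at h1
    rw [abs_mul, mul_comm]
    exact mul_le_mul h1 (hUX v) (abs_nonneg _) hηT.le
  have hdec : U = a • y + e + U v • Pi.single v 1 := by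
    funext w
    simp only [he, hx, Pi.add_apply, Pi.sub_apply, Pi.smul_apply, smul_eq_mul]
    by_cases hw : w = v
    · subst hw; simp
    · simp [hw]
  have hM : (noise T g K G *ᵥ U) v = a * (noise T g K G *ᵥ y) v + (noise T g K G *ᵥ e) v +
      U v * (noise T g K G *ᵥ Pi.single v 1) v := by
    conv_lhs => rw [hdec]
    simp only [Matrix.mulVec_add, Matrix.mulVec_smul, Pi.add_apply, Pi.smul_apply, smul_eq_mul]
  rw [hM]
  refine (abs_add_three _ _ _).trans ?_
  linarith

/-- An eigenvector for the second eigenvalue is a multiple of a vector close to `planted n`. -/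
theorem exists_eigenvector_eq (h : IsTypical α K T g η G) {u : Fin n → ℝ}
    (hu : IsUnitEigenvector (lap G) (eig (lap G) 1) u) :
    ∃ (a : ℝ) (δ : Fin n → ℝ), a ≠ 0 ∧ u = a • (planted n + δ) ∧
      l2 δ ≤ 16 * η * Real.sqrt n := by
  obtain ⟨huL, hu1⟩ := hu
  set t := eig (lap G) 1
  have hg := h.g_pos
  have hn : (0 : ℝ) < n := by exact_mod_cast h.n_pos
  have hηT := mul_pos h.eta_pos h.T_pos
  have h8 := h.eta_T_le
  have htl := h.le_eig
  have htu := h.eig_le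
  have h2T := h.two_mul_le
  have hS := lap_isSymm G
  have hu10 : u ⬝ᵥ 1 = 0 := by
    have h1 := symm_dot hS u 1
    rw [lap_mulVec_one, huL, smul_dotProduct, dotProduct_zero, smul_eq_mul] at h1
    exact (mul_eq_zero.mp h1).resolve_left (by linarith)
  have hss := planted_dot_self (n := n)
  set a := (u ⬝ᵥ planted n) / n with ha
  set w := u - a • planted n with hw
  have hw1 : w ⬝ᵥ 1 = 0 := by
    rw [hw, sub_dotProduct, smul_dotProduct, hu10, dotProduct_comm (planted n),
      one_dot_planted h.four_dvd]; simp
  have hws : w ⬝ᵥ planted n = 0 := by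
    rw [hw, sub_dotProduct, smul_dotProduct, hss, ha, smul_eq_mul]; field_simp; ring
  set r := lap G *ᵥ planted n - g • planted n with hr
  have hrl := h.l2_planted_residual_le
  rw [← hr] at hrl
  have hwL : w ⬝ᵥ lap G *ᵥ w = t * (w ⬝ᵥ w) - a * (w ⬝ᵥ r) := by
    have e1 : lap G *ᵥ w = t • u - a • lap G *ᵥ planted n := by
      rw [hw, Matrix.mulVec_sub, huL, Matrix.mulVec_smul]
    have e2 : lap G *ᵥ planted n = r + g • planted n := by rw [hr]; abel
    have e3 : u = w + a • planted n := by rw [hw]; abel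
    rw [e1, e2]
    conv_lhs => rw [e3]
    simp only [dotProduct_sub, dotProduct_add, dotProduct_smul, hws, smul_eq_mul]
    ring
  have hge := h.lap_form_ge_of_dot_planted hw1 hws
  rw [hwL] at hge
  have hcs := (abs_le.mp (abs_dot_le w r)).1
  have hlw := l2_nonneg w
  have hmain : T / 8 * l2 w ^ 2 ≤ |a| * (l2 w * (2 * (η * T) * Real.sqrt n)) := by
    rw [l2_sq]
    have e1 : T / 8 * (w ⬝ᵥ w) ≤ ((T + g) / 2 - 2 * (η * T) - t) * (w ⬝ᵥ w) :=
      mul_le_mul_of_nonneg_right (by linarith) (dot_self_nonneg w)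
    have e2 : -(a * (w ⬝ᵥ r)) ≤ |a| * (l2 w * l2 r) := by
      have := neg_abs_le (a * (w ⬝ᵥ r))
      rw [abs_mul] at this
      have := mul_le_mul_of_nonneg_left (abs_dot_le w r) (abs_nonneg a)
      linarith
    have e3 : |a| * (l2 w * l2 r) ≤ |a| * (l2 w * (2 * (η * T) * Real.sqrt n)) := by gcongr
    linarith
  have hwle : l2 w ≤ |a| * (16 * η * Real.sqrt n) := by
    rcases hlw.eq_or_lt with h0 | h0
    · rw [← h0]
      have := h.eta_pos
      positivity
    · have e1 : T / 8 * l2 w * l2 w ≤ T / 8 * (|a| * (16 * η * Real.sqrt n)) * l2 w := by linarith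
      have e2 := le_of_mul_le_mul_right e1 h0
      exact le_of_mul_le_mul_left e2 (by linarith [h.T_pos])
  have ha0 : a ≠ 0 := by
    intro h0
    rw [h0, abs_zero, zero_mul] at hwle
    have hw0 : l2 w = 0 := le_antisymm hwle hlw
    have : u ⬝ᵥ u = 0 := by
      have e3 : u = w := by rw [hw, h0]; simp
      rw [e3, ← l2_sq, hw0]; norm_num
    have h1 : u ⬝ᵥ u = 1 := by
      rw [← hu1, dotProduct]
      exact Finset.sum_congr rfl fun _ _ => (sq _).symm
    rw [this] at h1; norm_num at h1
  refine ⟨a, a⁻¹ • w, ha0, ?_, ?_⟩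
  · rw [smul_add, smul_smul, mul_inv_cancel₀ ha0, one_smul, hw]; abel
  · rw [l2_smul, abs_inv, inv_mul_le_iff₀ (abs_pos.mpr ha0)]
    exact hwle

theorem abs_nestedMat_mulVec_le (h : IsTypical α K T g η G) (x : Fin n → ℝ) (v : Fin n) :
    |(nestedMat n T g K *ᵥ x) v| ≤ K * T * l2 x / Real.sqrt n := by
  have hn : (0 : ℝ) < n := by exact_mod_cast h.n_pos
  have hT := h.T_pos
  have hg := h.g_pos
  have hK := h.six_le
  have hTg := h.two_mul_le
  have hTK := mul_le_mul_of_nonneg_right hK hT.le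
  have hrow : (nestedMat n T g K *ᵥ x) v = (fun w => nestedMat n T g K v w) ⬝ᵥ x := rfl
  have hl : l2 (fun w => nestedMat n T g K v w) ≤ K * T / Real.sqrt n := by
    refine l2_le_of_sq_le (by positivity) ?_
    have hentry : ∀ w, 0 ≤ nestedMat n T g K v w ∧ nestedMat n T g K v w ≤ K * T / n := by
      intro w
      have h1 : 0 ≤ K * T / n := by positivity
      have h2 : T / n ≤ K * T / n := by gcongr; linarith
      have h3 : g / n ≤ K * T / n := by gcongr; linarith
      have h4 : 0 ≤ T / n := by positivity
      have h5 : 0 ≤ g / n := by positivity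
      simp only [nestedMat, Matrix.of_apply, nestedP]
      split_ifs
      · rw [← mul_div_assoc]; exact ⟨h1, le_rfl⟩
      all_goals constructor <;> assumption
    calc _ ≤ ∑ _w : Fin n, (K * T / n) ^ 2 := Finset.sum_le_sum fun w _ => by
          rw [← sq]; exact pow_le_pow_left₀ (hentry w).1 (hentry w).2 2
      _ = _ := by
          rw [div_pow, div_pow, Real.sq_sqrt hn.le]
          simp
          field_simp
  rw [hrow]
  calc _ ≤ l2 (fun w => nestedMat n T g K v w) * l2 x := abs_dot_le _ _
    _ ≤ K * T / Real.sqrt n * l2 x := mul_le_mul_of_nonneg_right hl (l2_nonneg x)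
    _ = _ := by ring

/-- Unnormalized spectral bisection recovers the planted partition of a typical graph. -/
theorem bisectCorrect (h : IsTypical α K T g η G) : BisectCorrect n (lap G) := by
  intro u hu
  obtain ⟨a, δ, ha, hua, hδ⟩ := h.exists_eigenvector_eq hu
  set t := eig (lap G) 1 with ht
  have hn : (0 : ℝ) < n := by exact_mod_cast h.n_pos
  have hT := h.T_pos
  have hg := h.g_pos
  have hηT := mul_pos h.eta_pos hT
  have h8 := h.eta_T_le
  have htl := h.le_eig
  have htu := h.eig_le
  rw [← ht] at htl htu
  have h2T := h.two_mul_le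
  have hK := h.six_le
  have hηK := h.eta_K_le
  set U := planted n + δ with hUdef
  have hU : lap G *ᵥ U = t • U := by
    have := hu.1
    rw [hua, Matrix.mulVec_smul, smul_comm] at this
    exact smul_right_injective _ ha this
  have hnoise := h.abs_noise_mulVec_le (t := t) (abs_le.mpr ⟨by linarith, by linarith⟩) hU
  have hPδ : ∀ v, |(nestedMat n T g K *ᵥ δ) v| ≤ 16 * (K * η) * T := by
    intro v
    refine (h.abs_nestedMat_mulVec_le δ v).trans ?_
    have hs : 0 < Real.sqrt n := Real.sqrt_pos.mpr hn
    rw [div_le_iff₀ hs]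
    have := mul_le_mul_of_nonneg_left hδ (show 0 ≤ K * T by positivity)
    linarith
  have heq : ∀ v, (degVec G v - t) * U v = (expDeg n T g K v - g) * planted n v +
      (nestedMat n T g K *ᵥ δ) v + (noise T g K G *ᵥ U) v := by
    intro v
    have h1 := congrFun hU v
    have h2 : (nestedMat n T g K *ᵥ U) v =
        (nestedMat n T g K *ᵥ planted n) v + (nestedMat n T g K *ᵥ δ) v := by
      rw [hUdef, Matrix.mulVec_add, Pi.add_apply]
    rw [lap_mulVec, adj_mulVec T g K, h2, nestedMat_mulVec_planted h.four_dvd h.n_pos,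
      Pi.smul_apply, smul_eq_mul] at h1
    linarith
  have hdeg : ∀ v, T / 8 ≤ degVec G v - t := by
    intro v
    linarith [h.le_expDeg v, (abs_le.mp (h.abs_degVec_sub_le v)).1]
  set X := ‖U‖ with hX
  have hX0 : 0 ≤ X := norm_nonneg _
  have hηTX : η * T * X ≤ T / 144000 * X := by
    refine mul_le_mul_of_nonneg_right ?_ hX0
    nlinarith [h.eta_pos]
  have hXK : X ≤ 32 * K := by
    have hbd : ∀ v, |U v| ≤ 16 * K + X / 2 := by
      intro v
      have hpa : |planted n v| = 1 := by unfold planted; split_ifs <;> simp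
      have h1 : |(degVec G v - t) * U v| ≤ K * T + 16 * (K * η) * T + 4 * (η * T * X) := by
        rw [heq v]
        refine (abs_add_three _ _ _).trans (add_le_add (add_le_add ?_ (hPδ v)) (hnoise v))
        rw [abs_mul, hpa, mul_one, abs_le]
        constructor <;> linarith [h.le_expDeg v, h.expDeg_le v, mul_le_mul_of_nonneg_right hK hT.le]
      rw [abs_mul, abs_of_pos (by linarith [hdeg v])] at h1
      have h2 := mul_le_mul_of_nonneg_right (hdeg v) (abs_nonneg (U v))
      have h3 := mul_le_mul_of_nonneg_right hηK hT.le
      have h4 := mul_le_mul_of_nonneg_right hK hT.le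
      have h5 : T / 8 * |U v| ≤ T / 8 * (16 * K + X / 2) := by
        have := mul_nonneg hT.le hX0
        linarith
      exact le_of_mul_le_mul_left h5 (by positivity)
    have : ‖U‖ ≤ 16 * K + X / 2 :=
      (pi_norm_le_iff_of_nonneg (by positivity)).mpr fun v => hbd v
    linarith
  have hsign : ∀ v, 0 < planted n v * U v := by
    intro v
    have h1 := heq v
    have hp : planted n v * planted n v = 1 := by unfold planted; split_ifs <;> norm_num
    have hpa : |planted n v| = 1 := by unfold planted; split_ifs <;> simp
    have h2 : (degVec G v - t) * (planted n v * U v) = (expDeg n T g K v - g) +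
        planted n v * ((nestedMat n T g K *ᵥ δ) v) + planted n v * ((noise T g K G *ᵥ U) v) := by
      linear_combination planted n v * h1 + (expDeg n T g K v - g) * hp
    have h3 : |planted n v * ((nestedMat n T g K *ᵥ δ) v)| ≤ 16 * (K * η) * T := by
      rw [abs_mul, hpa, one_mul]; exact hPδ v
    have h4 : |planted n v * ((noise T g K G *ᵥ U) v)| ≤ 128 * (K * η) * T := by
      rw [abs_mul, hpa, one_mul]
      refine (hnoise v).trans ?_
      have := mul_le_mul_of_nonneg_left hXK hηT.le
      linarith
    have h5 := h.le_expDeg v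
    have h6 := mul_le_mul_of_nonneg_right hηK hT.le
    have h7 : 0 < (degVec G v - t) * (planted n v * U v) := by
      rw [h2]
      linarith [(abs_le.mp h3).1, (abs_le.mp h4).1]
    exact (pos_iff_pos_of_mul_pos h7).mp (by linarith [hdeg v])
  have hval : ∀ v, u v = a * U v := fun v => by rw [hua]; rfl
  rcases lt_or_gt_of_ne ha with h0 | h0
  · left
    ext v
    simp only [Set.mem_ofPred_eq, hval]
    have h1 := hsign v
    by_cases hv : inP1 n v
    · simp only [planted, hv, if_true, one_mul] at h1
      exact iff_of_true (mul_neg_of_neg_of_pos h0 h1) hv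
    · simp only [planted, hv, if_false] at h1
      refine iff_of_false (not_lt.mpr (mul_nonneg_of_nonpos_of_nonpos h0.le (by linarith))) hv
  · right
    ext v
    simp only [Set.mem_ofPred_eq, hval]
    have h1 := hsign v
    by_cases hv : inP1 n v
    · simp only [planted, hv, if_true, one_mul] at h1
      exact iff_of_false (not_lt.mpr (mul_nonneg h0.le h1.le)) (not_not.mpr hv)
    · simp only [planted, hv, if_false] at h1
      exact iff_of_true (mul_neg_of_pos_of_neg h0 (by linarith)) hv

end IsTypical

/-- The square roots of the degrees of `G`. -/
def sqrtDeg (G : SimpleGraph (Fin n)) : Fin n → ℝ := fun v => Real.sqrt (degVec G v)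

theorem lapSym_eq (G : SimpleGraph (Fin n)) : lapSym G =
    1 - Matrix.diagonal (fun v => 1 / sqrtDeg G v) * adjM G *
      Matrix.diagonal (fun v => 1 / sqrtDeg G v) := by
  simp only [lapSym, sqrtDeg, deg_eq_degVec]

theorem lapRW_eq (G : SimpleGraph (Fin n)) : lapRW G =
    1 - Matrix.diagonal (fun v => (degVec G v)⁻¹) * adjM G := by
  simp only [lapRW, deg_eq_degVec]

theorem lapSym_isSymm (G : SimpleGraph (Fin n)) : (lapSym G).IsSymm := by
  rw [lapSym_eq, Matrix.IsSymm, Matrix.transpose_sub, Matrix.transpose_one, Matrix.transpose_mul,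
    Matrix.transpose_mul, Matrix.diagonal_transpose, (adjM_isSymm G).eq, Matrix.mul_assoc]

section PositiveDegrees

variable {G : SimpleGraph (Fin n)}

theorem sqrtDeg_pos (hd : ∀ v, 0 < degVec G v) (v : Fin n) : 0 < sqrtDeg G v :=
  Real.sqrt_pos.mpr (hd v)

theorem sqrtDeg_mul_self (hd : ∀ v, 0 < degVec G v) (v : Fin n) :
    sqrtDeg G v * sqrtDeg G v = degVec G v :=
  Real.mul_self_sqrt (hd v).le

theorem lapSym_mulVec (hd : ∀ v, 0 < degVec G v) (y : Fin n → ℝ) :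
    lapSym G *ᵥ (sqrtDeg G * y) = fun v => (lap G *ᵥ y) v / sqrtDeg G v := by
  have h1 : Matrix.diagonal (fun v => 1 / sqrtDeg G v) *ᵥ (sqrtDeg G * y) = y := by
    funext v
    have := (sqrtDeg_pos hd v).ne'
    rw [Matrix.mulVec_diagonal, Pi.mul_apply]
    field_simp
  funext v
  have h2 := (sqrtDeg_pos hd v).ne'
  rw [lapSym_eq, Matrix.sub_mulVec, Matrix.one_mulVec, ← Matrix.mulVec_mulVec, h1,
    ← Matrix.mulVec_mulVec, Pi.sub_apply, Matrix.mulVec_diagonal, Pi.mul_apply, lap_mulVec,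
    ← sqrtDeg_mul_self hd]
  field_simp

theorem sqrtDeg_mul_dot (hd : ∀ v, 0 < degVec G v) (x y : Fin n → ℝ) :
    (sqrtDeg G * x) ⬝ᵥ (sqrtDeg G * y) = ∑ v, degVec G v * (x v * y v) := by
  refine Finset.sum_congr rfl fun v _ => ?_
  rw [← sqrtDeg_mul_self hd, Pi.mul_apply, Pi.mul_apply]
  ring

theorem lapSym_form (hd : ∀ v, 0 < degVec G v) (y : Fin n → ℝ) :
    (sqrtDeg G * y) ⬝ᵥ lapSym G *ᵥ (sqrtDeg G * y) = y ⬝ᵥ lap G *ᵥ y := by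
  rw [lapSym_mulVec hd]
  refine Finset.sum_congr rfl fun v _ => ?_
  have := (sqrtDeg_pos hd v).ne'
  rw [Pi.mul_apply]
  field_simp

theorem exists_eq_sqrtDeg_mul (hd : ∀ v, 0 < degVec G v) (x : Fin n → ℝ) : ∃ y, x = sqrtDeg G * y :=
  ⟨fun v => x v / sqrtDeg G v, funext fun v => by
    rw [Pi.mul_apply, mul_div_cancel₀ _ (sqrtDeg_pos hd v).ne']⟩

/-- Eigenvectors of the symmetric normalized Laplacian solve a generalized eigenproblem. -/
theorem lap_mulVec_of_lapSym (hd : ∀ v, 0 < degVec G v) {t : ℝ} {y : Fin n → ℝ}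
    (h : lapSym G *ᵥ (sqrtDeg G * y) = t • (sqrtDeg G * y)) (v : Fin n) :
    (lap G *ᵥ y) v = t * (degVec G v * y v) := by
  have h1 := congrFun h v
  rw [lapSym_mulVec hd, div_eq_iff (sqrtDeg_pos hd v).ne', Pi.smul_apply, smul_eq_mul,
    Pi.mul_apply] at h1
  rw [h1, ← sqrtDeg_mul_self hd]
  ring

/-- The two normalized Laplacians are conjugate. -/
theorem lapRW_mulVec (hd : ∀ v, 0 < degVec G v) (y : Fin n → ℝ) (v : Fin n) :
    (lapRW G *ᵥ y) v = (lap G *ᵥ y) v / degVec G v := by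
  have := (hd v).ne'
  rw [lapRW_eq, Matrix.sub_mulVec, Matrix.one_mulVec, ← Matrix.mulVec_mulVec, Pi.sub_apply,
    Matrix.mulVec_diagonal, lap_mulVec]
  field_simp

theorem eig_lapRW (hd : ∀ v, 0 < degVec G v) (k : ℕ) : eig (lapRW G) k = eig (lapSym G) k := by
  set S := Matrix.diagonal (sqrtDeg G) with hS
  set S' := Matrix.diagonal (fun v => 1 / sqrtDeg G v) with hS'
  have h1 : S * S' = 1 := by
    rw [hS, hS', Matrix.diagonal_mul_diagonal, ← Matrix.diagonal_one]
    congr 1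
    funext v
    exact mul_one_div_cancel (sqrtDeg_pos hd v).ne'
  have h2 : S' * S' = Matrix.diagonal (fun v => (degVec G v)⁻¹) := by
    rw [hS', Matrix.diagonal_mul_diagonal]
    congr 1
    funext v
    rw [← sqrtDeg_mul_self hd, mul_inv, one_div]
  have h3 : lapRW G = S' * lapSym G * S := by
    have h1' : S' * S = 1 := mul_eq_one_comm.mp h1
    rw [lapRW_eq, lapSym_eq, ← hS', Matrix.mul_sub, Matrix.sub_mul, Matrix.mul_one, h1', ← h2]
    congr 1
    simp only [Matrix.mul_assoc, h1', Matrix.mul_one]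
  have h4 : (lapRW G).charpoly = (lapSym G).charpoly := by
    rw [h3, Matrix.mul_assoc, Matrix.charpoly_mul_comm, Matrix.mul_assoc, h1, Matrix.mul_one]
  rw [eig, eig, h4]

end PositiveDegrees

/-- The vector with value `a` on `L₁`, `b` on `L₂` and `c` on `R`. -/
def blockVec (n : ℕ) (a b c : ℝ) : Fin n → ℝ := a • indL1 n + b • indL2 n + c • indR n

theorem blockVec_apply (a b c : ℝ) (v : Fin n) :
    blockVec n a b c v = a * indL1 n v + b * indL2 n v + c * indR n v := rfl

theorem blockVec_dot (a b c : ℝ) (x : Fin n → ℝ) : blockVec n a b c ⬝ᵥ x =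
    a * (indL1 n ⬝ᵥ x) + b * (indL2 n ⬝ᵥ x) + c * (indR n ⬝ᵥ x) := by
  simp only [blockVec, add_dotProduct, smul_dotProduct, smul_eq_mul]

theorem blockVec_mul (a b c a' b' c' : ℝ) (v : Fin n) :
    blockVec n a b c v * blockVec n a' b' c' v = blockVec n (a * a') (b * b') (c * c') v := by
  simp only [blockVec_apply]
  rcases block_cases v with ⟨-, -, -, h4, h5, h6, -⟩ | ⟨-, -, -, h4, h5, h6, -⟩ |
    ⟨-, -, -, h4, h5, h6, -⟩ <;> simp [h4, h5, h6]

theorem indL1_eq : indL1 n = blockVec n 1 0 0 := by simp [blockVec]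
theorem indL2_eq : indL2 n = blockVec n 0 1 0 := by simp [blockVec]
theorem indR_eq : indR n = blockVec n 0 0 1 := by simp [blockVec]

theorem sum_blockVec (hn : 4 ∣ n) (a b c : ℝ) :
    ∑ v, blockVec n a b c v = (n : ℝ) / 4 * (a + b + 2 * c) := by
  simp only [blockVec_apply, Finset.sum_add_distrib, ← Finset.mul_sum, sum_indL1 hn,
    sum_indL2 hn, sum_indR hn]
  ring

theorem blockVec_dot_blockVec (hn : 4 ∣ n) (a b c a' b' c' : ℝ) :
    blockVec n a b c ⬝ᵥ blockVec n a' b' c' = (n : ℝ) / 4 * (a * a' + b * b' + 2 * (c * c')) := by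
  rw [dotProduct]
  simp only [blockVec_mul, sum_blockVec hn]

theorem expDeg_eq (T g K : ℝ) : expDeg n T g K =
    blockVec n (T * (K + 1) / 4 + g / 2) (T * (K + 1) / 4 + g / 2) ((T + g) / 2) := by
  funext v
  rw [blockVec_apply, expDeg]
  rcases block_cases v with ⟨-, -, h3, h4, h5, h6, -⟩ | ⟨-, -, h3, h4, h5, h6, -⟩ |
    ⟨-, -, h3, h4, h5, h6, -⟩ <;> simp [h3, h4, h5, h6]

theorem nestedMat_mulVec_eq (T g K : ℝ) (x : Fin n → ℝ) : nestedMat n T g K *ᵥ x = blockVec n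
    ((K * T * (indL1 n ⬝ᵥ x) + T * (indL2 n ⬝ᵥ x) + g * (indR n ⬝ᵥ x)) / n)
    ((T * (indL1 n ⬝ᵥ x) + K * T * (indL2 n ⬝ᵥ x) + g * (indR n ⬝ᵥ x)) / n)
    ((g * (indL1 n ⬝ᵥ x) + g * (indL2 n ⬝ᵥ x) + T * (indR n ⬝ᵥ x)) / n) := by
  funext v
  rw [nestedMat_mulVec, blockVec_apply]
  ring

/-- A set that contains a quarter of the vertices up to an error of small mass is large. -/
theorem card_ge_of_mass {f w : Fin n → ℝ} (hf : ∀ v, f v = 0 ∨ f v = 1)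
    (hsum : ∑ v, f v = (n : ℝ) / 4) (hw : w ⬝ᵥ w ≤ (n : ℝ) / 100) {S : Set (Fin n)}
    (h : ∀ v, f v = 1 → v ∉ S → 1 ≤ w v ^ 2) : 24 / 100 * (n : ℝ) ≤ S.ncard := by
  have h1 : (S.ncard : ℝ) = ∑ v, if v ∈ S then (1 : ℝ) else 0 := by
    rw [Finset.sum_boole, Set.ncard_eq_toFinset_card']
    congr 2
    ext v
    simp
  have h2 : ∑ v, f v ≤ ∑ v, ((if v ∈ S then (1 : ℝ) else 0) + w v * w v) := by
    refine Finset.sum_le_sum fun v _ => ?_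
    have hs := mul_self_nonneg (w v)
    by_cases hv : v ∈ S
    · rw [if_pos hv]; rcases hf v with e | e <;> rw [e] <;> linarith
    · rw [if_neg hv]
      rcases hf v with e | e
      · rw [e]; linarith
      · have := h v e hv
        rw [e]; nlinarith
  rw [Finset.sum_add_distrib, ← h1, hsum] at h2
  rw [dotProduct] at hw
  linarith

theorem le_misclassRate (hn : 0 < n) {S : Set (Fin n)} {r : ℝ}
    (h1 : r * n ≤ (symmDiff S {v : Fin n | inP1 n v}).ncard)
    (h2 : r * n ≤ (symmDiff S {v : Fin n | ¬ inP1 n v}).ncard) : r ≤ misclassRate n S := by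
  have hn' : (0 : ℝ) < n := by exact_mod_cast hn
  rw [misclassRate, le_div_iff₀ hn']
  push_cast
  exact le_min h1 h2

/-- A vector close to one that separates `L₁` from `L₂` has a large misclassification rate. -/
theorem le_misclassRate_of_blockVec (hn : 4 ∣ n) (hn0 : 0 < n) {Y : Fin n → ℝ} {a b c : ℝ}
    (hab : 1 ≤ a ∧ b ≤ -1 ∨ a ≤ -1 ∧ 1 ≤ b)
    (hw : (Y - blockVec n a b c) ⬝ᵥ (Y - blockVec n a b c) ≤ (n : ℝ) / 100) :
    24 / 100 ≤ misclassRate n {v | Y v < 0} := by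
  have key : ∀ v, (indL1 n v = 1 → inP1 n v ∧ (Y - blockVec n a b c) v = Y v - a) ∧
      (indL2 n v = 1 → inP1 n v ∧ (Y - blockVec n a b c) v = Y v - b) := by
    intro v
    rw [Pi.sub_apply, blockVec_apply]
    rcases block_cases v with ⟨-, -, h3, h4, h5, h6, -⟩ | ⟨-, -, h3, h4, h5, h6, -⟩ |
      ⟨-, -, h3, h4, h5, h6, -⟩ <;> simp [h3, h4, h5, h6]
  have mem1 : ∀ v, inP1 n v → v ∉ symmDiff {v | Y v < 0} {v : Fin n | inP1 n v} → Y v < 0 := by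
    intro v hv h
    by_contra hY
    exact h (Or.inr ⟨hv, hY⟩)
  have mem2 : ∀ v, inP1 n v → v ∉ symmDiff {v | Y v < 0} {v : Fin n | ¬ inP1 n v} → 0 ≤ Y v := by
    intro v hv h
    by_contra! hY
    exact h (Or.inl ⟨hY, fun h' => h' hv⟩)
  rcases hab with ⟨ha, hb⟩ | ⟨ha, hb⟩
  · refine le_misclassRate hn0 (card_ge_of_mass indL1_zero_or (sum_indL1 hn) hw fun v e hv => ?_)
      (card_ge_of_mass indL2_zero_or (sum_indL2 hn) hw fun v e hv => ?_)
    · obtain ⟨hP, e1⟩ := (key v).1 e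
      have := mem1 v hP hv
      rw [e1]; nlinarith
    · obtain ⟨hP, e1⟩ := (key v).2 e
      have := mem2 v hP hv
      rw [e1]; nlinarith
  · refine le_misclassRate hn0 (card_ge_of_mass indL2_zero_or (sum_indL2 hn) hw fun v e hv => ?_)
      (card_ge_of_mass indL1_zero_or (sum_indL1 hn) hw fun v e hv => ?_)
    · obtain ⟨hP, e1⟩ := (key v).2 e
      have := mem1 v hP hv
      rw [e1]; nlinarith
    · obtain ⟨hP, e1⟩ := (key v).1 e
      have := mem2 v hP hv
      rw [e1]; nlinarith

namespace IsTypical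

variable {α K T g η : ℝ} {G : SimpleGraph (Fin n)}

theorem degVec_pos (h : IsTypical α K T g η G) (v : Fin n) : 0 < degVec G v := by
  linarith [h.le_degVec v, h.T_pos]

theorem eig_lapSym_pos (h : IsTypical α K T g η G) : 0 < eig (lapSym G) 1 := by
  have h4 := Nat.le_of_dvd h.n_pos h.four_dvd
  have hn : (0 : ℝ) < n := by exact_mod_cast h.n_pos
  have hKT : 0 < K * T := mul_pos (by linarith [h.six_le]) h.T_pos
  have hg := h.g_pos
  have h8 := h.eta_T_le
  refine lt_of_lt_of_le (show 0 < g / (2 * (K * T)) by positivity)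
    (le_eig_one (by omega) (lapSym_isSymm G) (sqrtDeg G * 1) fun x hx => ?_)
  obtain ⟨w, rfl⟩ := exists_eq_sqrtDeg_mul h.degVec_pos x
  rw [lapSym_form h.degVec_pos, sqrtDeg_mul_dot h.degVec_pos]
  rw [sqrtDeg_mul_dot h.degVec_pos] at hx
  simp only [Pi.one_apply, mul_one] at hx
  set m := (w ⬝ᵥ 1) / n with hm
  set z := w - m • (1 : Fin n → ℝ) with hz
  have hz1 : z ⬝ᵥ 1 = 0 := by
    have h11 : (1 : Fin n → ℝ) ⬝ᵥ 1 = n := by simp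
    rw [hz, sub_dotProduct, smul_dotProduct, h11, smul_eq_mul, hm, div_mul_cancel₀ _ hn.ne',
      sub_self]
  have hform : w ⬝ᵥ lap G *ᵥ w = z ⬝ᵥ lap G *ᵥ z := by
    have e : lap G *ᵥ z = lap G *ᵥ w := by
      rw [hz, Matrix.mulVec_sub, Matrix.mulVec_smul, lap_mulVec_one, smul_zero, sub_zero]
    rw [e, hz, sub_dotProduct, smul_dotProduct, ← symm_dot (lap_isSymm G) 1, lap_mulVec_one,
      zero_dotProduct, smul_zero, sub_zero]
  have hmass : ∑ v, degVec G v * (w v * w v) ≤ K * T * (z ⬝ᵥ z) := by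
    calc ∑ v, degVec G v * (w v * w v)
        ≤ ∑ v, degVec G v * (w v * w v) + m ^ 2 * ∑ v, degVec G v :=
          le_add_of_nonneg_right (mul_nonneg (sq_nonneg m)
            (Finset.sum_nonneg fun v _ => (h.degVec_pos v).le))
      _ = ∑ v, degVec G v * (z v * z v) := by
          have e : ∀ v, degVec G v * (z v * z v) = degVec G v * (w v * w v) +
              m ^ 2 * degVec G v - 2 * m * (degVec G v * w v) := by
            intro v
            simp only [hz, Pi.sub_apply, Pi.smul_apply, Pi.one_apply, smul_eq_mul]
            ring
          simp only [e, Finset.sum_add_distrib, Finset.sum_sub_distrib, ← Finset.mul_sum, hx]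
          ring
      _ ≤ _ := by
          rw [dotProduct, Finset.mul_sum]
          exact Finset.sum_le_sum fun v _ =>
            mul_le_mul_of_nonneg_right (h.degVec_le v) (mul_self_nonneg _)
  have h1 := h.lap_form_ge hz1
  have h2 := mul_le_mul_of_nonneg_left hmass (show 0 ≤ g / (2 * (K * T)) by positivity)
  have h3 : g / (2 * (K * T)) * (K * T * (z ⬝ᵥ z)) = g / 2 * (z ⬝ᵥ z) := by
    generalize K * T = x at hKT ⊢
    field_simp
  have h5 := mul_le_mul_of_nonneg_right h8 (dot_self_nonneg z)
  have h6 := mul_nonneg hg.le (dot_self_nonneg z)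
  rw [hform]
  linarith

/-- The partition of `L` into `L₁` and `L₂` bounds the second normalized eigenvalue. -/
theorem eig_lapSym_le (h : IsTypical α K T g η G) :
    eig (lapSym G) 1 * (T * (K + 1) / 4 + g / 2 - η * T) ≤ (T + g) / 2 + 2 * (η * T) := by
  have hn : (0 : ℝ) < n := by exact_mod_cast h.n_pos
  have hT := h.T_pos
  have hg := h.g_pos
  have hηT := mul_pos h.eta_pos hT
  have h8 := h.eta_T_le
  have hKT := mul_le_mul_of_nonneg_right h.six_le hT.le
  have h2T := h.two_mul_le
  have hden : 0 < T * (K + 1) / 4 + g / 2 - η * T := by linarith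
  rw [← le_div_iff₀ hden]
  set γ := blockVec n 1 (-1) 0 with hγ
  have hone : (1 : Fin n → ℝ) = blockVec n 1 1 1 := by
    rw [one_eq_ind]; simp [blockVec]
  have hcomb : ∀ a b : ℝ, a • (sqrtDeg G * 1) + b • (sqrtDeg G * γ) =
      sqrtDeg G * (a • 1 + b • γ) := by
    intro a b
    rw [mul_add, mul_smul_comm, mul_smul_comm]
  have hcomb' : ∀ a b : ℝ, a • (1 : Fin n → ℝ) + b • γ = blockVec n (a + b) (a - b) a := by
    intro a b
    funext v
    rw [hone, hγ]
    simp only [Pi.add_apply, Pi.smul_apply, blockVec_apply, smul_eq_mul]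
    ring
  have hγL : γ ⬝ᵥ lap G *ᵥ γ ≤ (n : ℝ) / 2 * ((T + g) / 2 + 2 * (η * T)) := by
    have h1 := (abs_le.mp (h.abs_form_sub_le γ)).2
    have e1 : ∑ v, expDeg n T g K v * γ v ^ 2 = (n : ℝ) / 2 * (T * (K + 1) / 4 + g / 2) := by
      simp only [expDeg_eq, hγ, sq, blockVec_mul, sum_blockVec h.four_dvd]
      ring
    have e2 : γ ⬝ᵥ γ = (n : ℝ) / 2 := by
      rw [hγ, blockVec_dot_blockVec h.four_dvd]; ring
    have e3 : γ ⬝ᵥ nestedMat n T g K *ᵥ γ = (n : ℝ) / 2 * (T * (K - 1) / 4) := by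
      rw [dot_nestedMat_mulVec, indL1_eq, indL2_eq, indR_eq, hγ]
      simp only [blockVec_dot_blockVec h.four_dvd]
      field_simp
      ring
    rw [e1, e2, e3] at h1
    linarith
  refine eig_one_le (lapSym_isSymm G) (sqrtDeg G * 1) (sqrtDeg G * γ) ?_ ?_
  · intro a b hab
    rw [hcomb, hcomb'] at hab
    have h0 : ∀ v, blockVec n (a + b) (a - b) a v = 0 := by
      intro v
      have := congrFun hab v
      rw [Pi.mul_apply, Pi.zero_apply] at this
      exact (mul_eq_zero.mp this).resolve_left (sqrtDeg_pos h.degVec_pos v).ne'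
    have h1 : blockVec n (a + b) (a - b) a ⬝ᵥ blockVec n (a + b) (a - b) a = 0 := by
      rw [dotProduct]; simp only [h0, mul_zero, Finset.sum_const_zero]
    rw [blockVec_dot_blockVec h.four_dvd] at h1
    have h2 := (mul_eq_zero.mp h1).resolve_left (by positivity)
    constructor <;> nlinarith [sq_nonneg a, sq_nonneg b]
  · intro a b
    rw [hcomb, lapSym_form h.degVec_pos, sqrtDeg_mul_dot h.degVec_pos]
    have e1 : (a • (1 : Fin n → ℝ) + b • γ) ⬝ᵥ lap G *ᵥ (a • 1 + b • γ) =
        b ^ 2 * (γ ⬝ᵥ lap G *ᵥ γ) := by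
      rw [Matrix.mulVec_add, Matrix.mulVec_smul, lap_mulVec_one, smul_zero, zero_add,
        add_dotProduct, smul_dotProduct, Matrix.mulVec_smul, dotProduct_smul,
        ← symm_dot (lap_isSymm G) 1, lap_mulVec_one, zero_dotProduct, smul_dotProduct,
        dotProduct_smul]
      simp only [smul_eq_mul]
      ring
    have e2 : (n : ℝ) / 2 * (T * (K + 1) / 4 + g / 2 - η * T) * b ^ 2 ≤
        ∑ v, degVec G v * ((a • (1 : Fin n → ℝ) + b • γ) v * (a • 1 + b • γ) v) := by
      have e3 : ∑ v, blockVec n (T * (K + 1) / 4 + g / 2 - η * T)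
          (T * (K + 1) / 4 + g / 2 - η * T) 0 v *
            (blockVec n (a + b) (a - b) a v * blockVec n (a + b) (a - b) a v) =
          (n : ℝ) / 2 * (T * (K + 1) / 4 + g / 2 - η * T) * (a ^ 2 + b ^ 2) := by
        simp only [blockVec_mul, sum_blockVec h.four_dvd]
        ring
      calc _ ≤ (n : ℝ) / 2 * (T * (K + 1) / 4 + g / 2 - η * T) * (a ^ 2 + b ^ 2) :=
            mul_le_mul_of_nonneg_left (by linarith [sq_nonneg a]) (by positivity)
        _ ≤ _ := by
            rw [← e3, hcomb']
            refine Finset.sum_le_sum fun v _ => mul_le_mul_of_nonneg_right ?_ (mul_self_nonneg _)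
            have h1 := (abs_le.mp (h.abs_degVec_sub_le v)).1
            have h2 := h.degVec_pos v
            rw [expDeg_eq] at h1
            rw [blockVec_apply] at h1 ⊢
            rcases block_cases v with ⟨-, -, -, h4, h5, h6, -⟩ | ⟨-, -, -, h4, h5, h6, -⟩ |
              ⟨-, -, -, h4, h5, h6, -⟩ <;> rw [h4, h5, h6] at h1 ⊢ <;> linarith
    rw [e1]
    have hr : 0 ≤ ((T + g) / 2 + 2 * (η * T)) / (T * (K + 1) / 4 + g / 2 - η * T) := by positivity
    refine le_trans ?_ (mul_le_mul_of_nonneg_left e2 hr)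
    have e4 : ((T + g) / 2 + 2 * (η * T)) / (T * (K + 1) / 4 + g / 2 - η * T) *
        ((n : ℝ) / 2 * (T * (K + 1) / 4 + g / 2 - η * T) * b ^ 2) =
        b ^ 2 * ((n : ℝ) / 2 * ((T + g) / 2 + 2 * (η * T))) := by
      generalize T * (K + 1) / 4 + g / 2 - η * T = x at hden ⊢
      field_simp
    rw [e4]
    exact mul_le_mul_of_nonneg_left hγL (sq_nonneg b)

end IsTypical

theorem abs_dot_mul_le {f : Fin n → ℝ} {t : ℝ} (hf : ∀ v, |f v| ≤ t) (x y : Fin n → ℝ) :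
    |x ⬝ᵥ (f * y)| ≤ t * (l2 x * l2 y) := by
  rcases isEmpty_or_nonempty (Fin n) with hn | ⟨⟨v₀⟩⟩
  · simp [dotProduct, l2]
  have ht : 0 ≤ t := (abs_nonneg _).trans (hf v₀)
  have habs : ∀ z : Fin n → ℝ, l2 (fun v => |z v|) = l2 z := fun z => by simp [l2]
  calc |x ⬝ᵥ (f * y)| ≤ ∑ v, |x v * (f v * y v)| := Finset.abs_sum_le_sum_abs _ _
    _ ≤ ∑ v, t * (|x v| * |y v|) := Finset.sum_le_sum fun v _ => by
        rw [abs_mul, abs_mul]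
        have := mul_le_mul_of_nonneg_right (hf v) (mul_nonneg (abs_nonneg (x v)) (abs_nonneg (y v)))
        linarith
    _ = t * ((fun v => |x v|) ⬝ᵥ fun v => |y v|) := by rw [dotProduct, Finset.mul_sum]
    _ ≤ _ := by
        refine mul_le_mul_of_nonneg_left ?_ ht
        have := (abs_le.mp (abs_dot_le (fun v => |x v|) fun v => |y v|)).2
        rwa [habs, habs] at this

namespace IsTypical

variable {α K T g η : ℝ} {G : SimpleGraph (Fin n)} {Y : Fin n → ℝ}

theorem eig_lapSym_le_three_quarters (h : IsTypical α K T g η G) :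
    eig (lapSym G) 1 ≤ 3 / 4 := by
  have h1 := h.eig_lapSym_le
  have hT := h.T_pos
  have hg := h.g_pos
  have h8 := h.eta_T_le
  have hKT := mul_le_mul_of_nonneg_right h.six_le hT.le
  have h2T := h.two_mul_le
  have hden : 0 < T * (K + 1) / 4 + g / 2 - η * T := by linarith [mul_pos h.eta_pos hT]
  by_contra! hlt
  have h2 := mul_lt_mul_of_pos_right hlt hden
  linarith [mul_pos h.eta_pos hT]

/-- The sum of a generalized eigenvector, weighted by the degrees, vanishes. -/
theorem sum_degVec_mul (h : IsTypical α K T g η G)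
    (hE : ∀ v, (lap G *ᵥ Y) v = eig (lapSym G) 1 * (degVec G v * Y v)) :
    ∑ v, degVec G v * Y v = 0 := by
  have h1 : (1 : Fin n → ℝ) ⬝ᵥ lap G *ᵥ Y = 0 := by
    rw [← symm_dot (lap_isSymm G), lap_mulVec_one, zero_dotProduct]
  have h2 : (1 : Fin n → ℝ) ⬝ᵥ lap G *ᵥ Y = eig (lapSym G) 1 * ∑ v, degVec G v * Y v := by
    rw [Finset.mul_sum, dotProduct]
    exact Finset.sum_congr rfl fun v _ => by rw [Pi.one_apply, one_mul, hE]
  rw [h1] at h2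
  exact (mul_eq_zero.mp h2.symm).resolve_left h.eig_lapSym_pos.ne'

/-- Weak form of the perturbed eigenvalue equation on the expected graph. -/
theorem abs_weak_equation_le (h : IsTypical α K T g η G)
    (hE : ∀ v, (lap G *ᵥ Y) v = eig (lapSym G) 1 * (degVec G v * Y v)) (x : Fin n → ℝ) :
    |x ⬝ᵥ ((1 - eig (lapSym G) 1) • (expDeg n T g K * Y) - nestedMat n T g K *ᵥ Y)| ≤
      2 * (η * T) * (l2 x * l2 Y) := by
  have hpos := h.eig_lapSym_pos
  have hle := h.eig_lapSym_le_three_quarters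
  set t := eig (lapSym G) 1
  have e : (1 - t) • (expDeg n T g K * Y) - nestedMat n T g K *ᵥ Y =
      noise T g K G *ᵥ Y - (1 - t) • ((noise T g K G *ᵥ 1) * Y) := by
    funext v
    have h1 := hE v
    rw [lap_mulVec, adj_mulVec T g K, h.degVec_eq] at h1
    simp only [Pi.sub_apply, Pi.smul_apply, Pi.mul_apply, smul_eq_mul]
    linarith
  have h1 := h.form_le x Y
  have h2 := abs_dot_mul_le h.row_one x Y
  have h3 : |(1 - t) * (x ⬝ᵥ ((noise T g K G *ᵥ 1) * Y))| ≤ η * T * (l2 x * l2 Y) := by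
    rw [abs_mul, abs_of_nonneg (by linarith : 0 ≤ 1 - t)]
    have := mul_le_mul_of_nonneg_right (show 1 - t ≤ 1 by linarith)
      (abs_nonneg (x ⬝ᵥ ((noise T g K G *ᵥ 1) * Y)))
    linarith
  rw [e, dotProduct_sub, dotProduct_smul, smul_eq_mul]
  refine (abs_sub _ _).trans ?_
  linarith

theorem coefficient_ge (h : IsTypical α K T g η G) : T ^ 2 / 16 ≤
    (T * (K + 1) / 4 + g / 2) * ((1 - eig (lapSym G) 1) * (T + g) - T) + g * ((T + g) / 2) := by
  have h1 := h.eig_lapSym_le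
  have hpos := h.eig_lapSym_pos
  have hle := h.eig_lapSym_le_three_quarters
  set t := eig (lapSym G) 1
  have hT := h.T_pos
  have hg := h.g_pos
  have hηT := mul_pos h.eta_pos hT
  have h8 := h.eta_T_le
  have h2T := h.two_mul_le
  have h2 := mul_le_mul_of_nonneg_right h1 (show 0 ≤ T + g by positivity)
  have h3 : t * (η * T) ≤ η * T := by nlinarith
  have h4 := mul_le_mul_of_nonneg_right h3 (show 0 ≤ T + g by positivity)
  have h5 : T ^ 2 / 8 ≤ g * (T * (K + 1) / 4 + g / 2) - T * ((T + g) / 2) := by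
    have hα := h.two_le
    have hK : 0 ≤ α * g ^ 2 * (K - 3 * α) :=
      mul_nonneg (mul_nonneg (by linarith) (sq_nonneg g)) (by linarith [h.le_K])
    have : 0 ≤ g ^ 2 * ((α - 1) ^ 2 + 3) := by positivity
    rw [h.T_eq]
    nlinarith
  have h6 : η * T * (T + g) * 3 ≤ T ^ 2 / 16 := by
    have h7 : η * T ≤ T / 16000 := by linarith
    have h9 : T + g ≤ 3 / 2 * T := by linarith
    have h10 := mul_le_mul h7 h9 (by positivity) (by positivity)
    nlinarith
  linarith

/-- Block averages of a normalized generalized eigenvector. -/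
theorem abs_block_averages_le (h : IsTypical α K T g η G)
    (hE : ∀ v, (lap G *ᵥ Y) v = eig (lapSym G) 1 * (degVec G v * Y v)) (hY : Y ⬝ᵥ Y = n) :
    |indR n ⬝ᵥ Y| ≤ (n : ℝ) / 500 ∧ |indL1 n ⬝ᵥ Y + indL2 n ⬝ᵥ Y| ≤ (n : ℝ) / 400 := by
  have hn : (0 : ℝ) < n := by exact_mod_cast h.n_pos
  have hT := h.T_pos
  have hg := h.g_pos
  have hηT := mul_pos h.eta_pos hT
  have h8 := h.eta_T_le
  have h2T := h.two_mul_le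
  have hK := h.six_le
  have hKT := mul_le_mul_of_nonneg_right hK hT.le
  have hηK := h.eta_K_le
  have hlY : l2 Y = Real.sqrt n := by rw [← Real.sqrt_sq (l2_nonneg Y), l2_sq, hY]
  have hs := Real.mul_self_sqrt hn.le
  have hRR : indR n ⬝ᵥ indR n = (n : ℝ) / 2 := by
    rw [indR_eq, blockVec_dot_blockVec h.four_dvd]; ring
  have hR : l2 (indR n) ≤ Real.sqrt n := l2_le_of_sq_le (Real.sqrt_nonneg _) (by
    rw [sq, hs, hRR]; linarith)
  have h1' : l2 (1 : Fin n → ℝ) = Real.sqrt n := by simp [l2]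
  have e3 := h.abs_weak_equation_le hE (indR n)
  have e4 := abs_dot_mul_le h.row_one 1 Y
  have hco := h.coefficient_ge
  have hd0 := h.sum_degVec_mul hE
  set t := eig (lapSym G) 1
  set ℓ := indL1 n ⬝ᵥ Y + indL2 n ⬝ᵥ Y with hℓ
  set r := indR n ⬝ᵥ Y with hr
  set D := T * (K + 1) / 4 + g / 2 with hD
  have hDK : D ≤ K * T / 2 := by linarith
  have hDT : 7 / 4 * T ≤ D := by linarith
  rw [h1', hlY, hs] at e4
  have e3' : |(1 - t) * ((T + g) / 2 * r) - (g * ℓ + T * r) / 2| ≤ 2 * (η * T) * n := by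
    have e5 : indR n ⬝ᵥ ((1 - t) • (expDeg n T g K * Y) - nestedMat n T g K *ᵥ Y) =
        (1 - t) * ((T + g) / 2 * r) - (g * ℓ + T * r) / 2 := by
      rw [dotProduct_sub, dotProduct_smul, smul_eq_mul]
      congr 2
      · rw [hr, dotProduct, dotProduct, Finset.mul_sum]
        refine Finset.sum_congr rfl fun v _ => ?_
        rw [Pi.mul_apply, expDeg_eq, blockVec_apply]
        rcases block_cases v with ⟨-, -, -, h4, h5, h6, -⟩ | ⟨-, -, -, h4, h5, h6, -⟩ |
          ⟨-, -, -, h4, h5, h6, -⟩ <;> simp [h4, h5, h6]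
      · rw [nestedMat_mulVec_eq, indR_eq, blockVec_dot_blockVec h.four_dvd, ← indR_eq, ← hr, hℓ]
        field_simp
        ring
    rw [← e5]
    refine e3.trans (mul_le_mul_of_nonneg_left ?_ (by positivity))
    rw [hlY]
    calc _ ≤ Real.sqrt n * Real.sqrt n := mul_le_mul_of_nonneg_right hR (Real.sqrt_nonneg _)
      _ = _ := hs
  have e4' : |D * ℓ + (T + g) / 2 * r| ≤ η * T * n := by
    have e5 : D * ℓ + (T + g) / 2 * r = -((1 : Fin n → ℝ) ⬝ᵥ ((noise T g K G *ᵥ 1) * Y)) := by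
      have e6 : D * ℓ + (T + g) / 2 * r = expDeg n T g K ⬝ᵥ Y := by
        rw [expDeg_eq, blockVec_dot]; ring
      have e7 : expDeg n T g K ⬝ᵥ Y + (1 : Fin n → ℝ) ⬝ᵥ ((noise T g K G *ᵥ 1) * Y) =
          ∑ v, degVec G v * Y v := by
        simp only [dotProduct, ← Finset.sum_add_distrib]
        refine Finset.sum_congr rfl fun v _ => ?_
        rw [h.degVec_eq, Pi.one_apply, Pi.mul_apply]; ring
      linarith
    rw [e5, abs_neg]
    exact e4
  have hDpos : 0 < D := by linarith
  have hrb : |r| * (T ^ 2 / 16) ≤ 3 * (K * η) * T ^ 2 * n := by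
    have e5 : r * (D * ((1 - t) * (T + g) - T) + g * ((T + g) / 2)) =
        2 * D * ((1 - t) * ((T + g) / 2 * r) - (g * ℓ + T * r) / 2) +
          g * (D * ℓ + (T + g) / 2 * r) := by ring
    have e6 : |r| * (T ^ 2 / 16) ≤ 2 * D * (2 * (η * T) * n) + g * (η * T * n) := by
      calc |r| * (T ^ 2 / 16) ≤ |r| * (D * ((1 - t) * (T + g) - T) + g * ((T + g) / 2)) :=
            mul_le_mul_of_nonneg_left hco (abs_nonneg r)
        _ = |r * (D * ((1 - t) * (T + g) - T) + g * ((T + g) / 2))| := by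
            rw [abs_mul, abs_of_nonneg ((by positivity : 0 ≤ T ^ 2 / 16).trans hco)]
        _ ≤ _ := by
            rw [e5]
            refine (abs_add_le _ _).trans (add_le_add ?_ ?_)
            · rw [abs_mul, abs_of_nonneg (by positivity : 0 ≤ 2 * D)]
              exact mul_le_mul_of_nonneg_left e3' (by positivity)
            · rw [abs_mul, abs_of_nonneg hg.le]
              exact mul_le_mul_of_nonneg_left e4' hg.le
    have hnn : 0 ≤ η * T * n := by positivity
    have e7 := mul_le_mul_of_nonneg_right hDK hnn
    have e8 := mul_le_mul_of_nonneg_right (show g ≤ K * T by linarith) hnn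
    nlinarith
  have hr1 : |r| ≤ (n : ℝ) / 500 := by
    have e5 := mul_le_mul_of_nonneg_right hηK (show 0 ≤ T ^ 2 * n by positivity)
    have e6 : |r| * (T ^ 2 / 16) ≤ (n : ℝ) / 500 * (T ^ 2 / 16) := by nlinarith
    exact le_of_mul_le_mul_right e6 (by positivity)
  refine ⟨hr1, ?_⟩
  have e5 : D * |ℓ| ≤ η * T * n + (T + g) / 2 * |r| := by
    have e6 : D * ℓ = (D * ℓ + (T + g) / 2 * r) - (T + g) / 2 * r := by ring
    calc D * |ℓ| = |D * ℓ| := by rw [abs_mul, abs_of_pos hDpos]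
      _ ≤ _ := by
        rw [e6]
        refine (abs_sub _ _).trans (add_le_add e4' (le_of_eq ?_))
        rw [abs_mul, abs_of_nonneg (by positivity)]
  have e6 := mul_le_mul_of_nonneg_right hDT (abs_nonneg ℓ)
  have e7 := mul_le_mul (show (T + g) / 2 ≤ 3 / 4 * T by linarith) hr1 (abs_nonneg r)
    (by positivity)
  have e8 := mul_le_mul_of_nonneg_right (show η * T ≤ T / 16000 by linarith) hn.le
  have e9 : T * |ℓ| ≤ T * ((n : ℝ) / 400) := by nlinarith
  exact le_of_mul_le_mul_left e9 hT

end IsTypical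

namespace IsTypical

variable {α K T g η : ℝ} {G : SimpleGraph (Fin n)} {Y : Fin n → ℝ}

theorem le_misclassRate_of_dot_self (h : IsTypical α K T g η G)
    (hE : ∀ v, (lap G *ᵥ Y) v = eig (lapSym G) 1 * (degVec G v * Y v)) (hY : Y ⬝ᵥ Y = n) :
    24 / 100 ≤ misclassRate n {v | Y v < 0} := by
  have hn : (0 : ℝ) < n := by exact_mod_cast h.n_pos
  have hT := h.T_pos
  have hηT := mul_pos h.eta_pos hT
  have hlY : l2 Y = Real.sqrt n := by rw [← Real.sqrt_sq (l2_nonneg Y), l2_sq, hY]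
  obtain ⟨hr, hℓ⟩ := h.abs_block_averages_le hE hY
  have hweak := h.abs_weak_equation_le hE
  have hle := h.eig_lapSym_le_three_quarters
  set t := eig (lapSym G) 1
  set a := 4 * (indL1 n ⬝ᵥ Y) / n with ha
  set b := 4 * (indL2 n ⬝ᵥ Y) / n with hb
  set c := 2 * (indR n ⬝ᵥ Y) / n with hc
  set B := blockVec n a b c with hB
  set w := Y - B with hw
  have hYw : Y = w + B := (sub_add_cancel Y B).symm
  have horth : ∀ x y z, w ⬝ᵥ blockVec n x y z = 0 := by
    intro x y z
    rw [hw, sub_dotProduct, dotProduct_comm Y, blockVec_dot, hB, blockVec_dot_blockVec h.four_dvd,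
      ha, hb, hc]
    field_simp
    ring
  have hwD : T / 8 * (w ⬝ᵥ w) ≤ (1 - t) * (w ⬝ᵥ (expDeg n T g K * w)) := by
    have h1 : T / 2 * (w ⬝ᵥ w) ≤ w ⬝ᵥ (expDeg n T g K * w) := by
      rw [dotProduct, dotProduct, Finset.mul_sum]
      refine Finset.sum_le_sum fun v _ => ?_
      have := mul_le_mul_of_nonneg_right
        (show T / 2 ≤ expDeg n T g K v by linarith [h.le_expDeg v, h.g_pos])
        (mul_self_nonneg (w v))
      rw [Pi.mul_apply]
      linarith
    have h2 : 0 ≤ T / 2 * (w ⬝ᵥ w) := mul_nonneg (by positivity) (dot_self_nonneg w)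
    have h3 := mul_le_mul (show 1 / 4 ≤ 1 - t by linarith) h1 h2 (by linarith)
    linarith
  have hwB : w ⬝ᵥ ((1 - t) • (expDeg n T g K * Y) - nestedMat n T g K *ᵥ Y) =
      (1 - t) * (w ⬝ᵥ (expDeg n T g K * w)) := by
    have e : expDeg n T g K * B = blockVec n ((T * (K + 1) / 4 + g / 2) * a)
        ((T * (K + 1) / 4 + g / 2) * b) ((T + g) / 2 * c) := by
      funext v
      rw [expDeg_eq, hB, Pi.mul_apply, blockVec_mul]
    rw [nestedMat_mulVec_eq, dotProduct_sub, horth, dotProduct_smul, hYw, mul_add, e,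
      dotProduct_add, horth, smul_eq_mul, add_zero, sub_zero]
  have hlw : l2 w ≤ 16 * η * Real.sqrt n := by
    have h1 := (abs_le.mp (hweak w)).2
    rw [hwB, hlY] at h1
    have h2 := hwD.trans h1
    rw [← l2_sq] at h2
    by_contra! hlt
    have h3 : 0 < l2 w :=
      lt_of_le_of_lt (mul_nonneg (by linarith [h.eta_pos]) (Real.sqrt_nonneg _)) hlt
    have h4 := mul_lt_mul_of_pos_left hlt (show 0 < T / 8 * l2 w by positivity)
    nlinarith
  have hww : w ⬝ᵥ w ≤ (n : ℝ) / 100 := by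
    have h1 := pow_le_pow_left₀ (l2_nonneg w) hlw 2
    rw [l2_sq, mul_pow, mul_pow, Real.sq_sqrt hn.le] at h1
    have h2 : η ≤ 1 / 1000 := by nlinarith [h.eta_K_le, h.six_le, h.eta_pos]
    have h3 : η ^ 2 ≤ (1 / 1000) ^ 2 := pow_le_pow_left₀ h.eta_pos.le h2 2
    have h4 := mul_le_mul_of_nonneg_right h3 hn.le
    linarith
  refine le_misclassRate_of_blockVec h.four_dvd h.n_pos (a := a) (b := b) (c := c) ?_ hww
  have hsum : (n : ℝ) / 4 * (a ^ 2 + b ^ 2 + 2 * c ^ 2) + w ⬝ᵥ w = n := by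
    have e : Y ⬝ᵥ Y = B ⬝ᵥ B + w ⬝ᵥ w := by
      have h1 := horth a b c
      rw [← hB] at h1
      rw [hYw, add_dotProduct, dotProduct_add, dotProduct_add, dotProduct_comm B w, h1]
      ring
    rw [e, hB, blockVec_dot_blockVec h.four_dvd] at hY
    linarith
  have hc1 : |c| ≤ 1 / 100 := by
    rw [hc, abs_div, abs_mul, abs_two, Nat.abs_cast, div_le_iff₀ hn]
    linarith
  have hab : |a + b| ≤ 1 / 100 := by
    rw [ha, hb, ← add_div, ← mul_add, abs_div, abs_mul, Nat.abs_cast, div_le_iff₀ hn,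
      abs_of_pos (by norm_num : (0 : ℝ) < 4)]
    linarith
  have hc2 : c ^ 2 ≤ (1 / 100) ^ 2 := by rw [← sq_abs]; exact pow_le_pow_left₀ (abs_nonneg _) hc1 2
  have hsq : 39 / 10 ≤ a ^ 2 + b ^ 2 := by
    have h1 : (n : ℝ) / 4 * (39 / 10) ≤ (n : ℝ) / 4 * (a ^ 2 + b ^ 2) := by
      have := mul_le_mul_of_nonneg_left hc2 hn.le
      linarith
    exact le_of_mul_le_mul_left h1 (by positivity)
  obtain ⟨hab1, hab2⟩ := abs_le.mp hab
  rcases le_total 0 a with h0 | h0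
  · left
    constructor <;> nlinarith
  · right
    constructor <;> nlinarith

/-- Generalized eigenvectors of a typical graph misclassify many vertices. -/
theorem le_misclassRate_of_generalized (h : IsTypical α K T g η G) {y : Fin n → ℝ} (hy : y ≠ 0)
    (hE : ∀ v, (lap G *ᵥ y) v = eig (lapSym G) 1 * (degVec G v * y v)) :
    24 / 100 ≤ misclassRate n {v | y v < 0} := by
  have hn : (0 : ℝ) < n := by exact_mod_cast h.n_pos
  have hyy := dot_self_pos hy
  set s := Real.sqrt (n / (y ⬝ᵥ y)) with hs
  have hs0 : 0 < s := Real.sqrt_pos.mpr (by positivity)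
  have hset : {v | y v < 0} = {v | (s • y) v < 0} := by
    ext v
    simp only [Set.mem_ofPred_eq, Pi.smul_apply, smul_eq_mul, mul_neg_iff, hs0, true_and,
      not_lt_of_gt hs0, false_and, or_false]
  rw [hset]
  refine h.le_misclassRate_of_dot_self (fun v => ?_) ?_
  · rw [Matrix.mulVec_smul, Pi.smul_apply, Pi.smul_apply, hE, smul_eq_mul, smul_eq_mul]
    ring
  · rw [smul_dotProduct, dotProduct_smul, smul_eq_mul, smul_eq_mul, ← mul_assoc, hs,
      Real.mul_self_sqrt (by positivity), div_mul_cancel₀ _ hyy.ne']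

theorem le_misclassRate_lapSym (h : IsTypical α K T g η G) {u : Fin n → ℝ}
    (hu : IsUnitEigenvector (lapSym G) (eig (lapSym G) 1) u) :
    24 / 100 ≤ misclassRate n {v | u v < 0} := by
  obtain ⟨y, rfl⟩ := exists_eq_sqrtDeg_mul h.degVec_pos u
  have hset : {v | (sqrtDeg G * y) v < 0} = {v | y v < 0} := by
    ext v
    have := sqrtDeg_pos h.degVec_pos v
    simp only [Set.mem_ofPred_eq, Pi.mul_apply, mul_neg_iff, this, true_and,
      not_lt_of_gt this, false_and, or_false]
  rw [hset]
  refine h.le_misclassRate_of_generalized ?_ (lap_mulVec_of_lapSym h.degVec_pos hu.1)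
  rintro rfl
  simpa using hu.2

theorem le_misclassRate_lapRW (h : IsTypical α K T g η G) {u : Fin n → ℝ}
    (hu : IsUnitEigenvector (lapRW G) (eig (lapRW G) 1) u) :
    24 / 100 ≤ misclassRate n {v | u v < 0} := by
  refine h.le_misclassRate_of_generalized ?_ fun v => ?_
  · rintro rfl
    simpa using hu.2
  · have h1 := congrFun hu.1 v
    have hd := h.degVec_pos
    rw [lapRW_mulVec hd, div_eq_iff (hd v).ne', eig_lapRW hd, Pi.smul_apply, smul_eq_mul] at h1
    rw [h1]
    ring

end IsTypical

theorem nestedP_nonneg {p q K : ℝ} (hp : 0 ≤ p) (hq : 0 ≤ q) (hK : 0 ≤ K) (v w : Fin n) :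
    0 ≤ nestedP n p q K v w := by
  unfold nestedP
  split_ifs <;> positivity

theorem nestedP_le {p q K : ℝ} (hp : 0 ≤ p) (hqp : q ≤ p) (hK : 1 ≤ K) (v w : Fin n) :
    nestedP n p q K v w ≤ K * p := by
  unfold nestedP
  split_ifs <;> nlinarith

theorem noise_eq (hn : 0 < n) (p q K : ℝ) (G : SimpleGraph (Fin n)) :
    noise (n * p) (n * q) K G =
      centred (nestedP n p q K) G - Matrix.diagonal fun v => nestedP n p q K v v := by
  have hn' : (n : ℝ) ≠ 0 := by exact_mod_cast hn.ne'
  ext v w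
  rw [noise, nestedMat, mul_div_cancel_left₀ _ hn', mul_div_cancel_left₀ _ hn', centred]
  by_cases h : v = w
  · subst h
    simp [Matrix.sub_apply, offP]
  · simp [Matrix.sub_apply, offP, h]

theorem noise_mulVec_eq (hn : 0 < n) (p q K : ℝ) (G : SimpleGraph (Fin n)) (x : Fin n → ℝ)
    (v : Fin n) : (noise (n * p) (n * q) K G *ᵥ x) v =
      ∑ w, centred (nestedP n p q K) G v w * x w - nestedP n p q K v v * x v := by
  rw [noise_eq hn, Matrix.sub_mulVec, Pi.sub_apply, Matrix.mulVec_diagonal]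
  rfl

theorem abs_noise_mulVec_le_of_centred (hn : 0 < n) {p q K : ℝ} (hp : 0 ≤ p) (hq : 0 ≤ q)
    (hqp : q ≤ p) (hK : 1 ≤ K) (hKp : K * p ≤ 1) {G : SimpleGraph (Fin n)} {x : Fin n → ℝ}
    {v : Fin n} {s t : ℝ} (hst : s + 1 ≤ t)
    (h : |∑ w, centred (nestedP n p q K) G v w * x w| ≤ s * ‖x‖) :
    |(noise (n * p) (n * q) K G *ᵥ x) v| ≤ t * ‖x‖ := by
  have h0 := nestedP_nonneg hp hq (zero_le_one.trans hK) v v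
  have h1 := (nestedP_le hp hqp hK v v).trans hKp
  have h2 : |nestedP n p q K v v * x v| ≤ 1 * ‖x‖ := by
    rw [abs_mul, abs_of_nonneg h0]
    exact mul_le_mul h1 (norm_le_pi_norm x v) (abs_nonneg _) zero_le_one
  have h3 := mul_le_mul_of_nonneg_right hst (norm_nonneg x)
  rw [noise_mulVec_eq hn]
  refine (abs_sub _ _).trans ?_
  linarith

/-- A choice, for each graph, of a vector that captures the eigenvectors near `g`. -/
def captureVec (g : ℝ) (H : SimpleGraph (Fin n)) : Fin n → ℝ :=
  if h : ∃ y, CapturesNear (lap H) g (g / 4) y then h.choose else 0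

theorem captureVec_spec {g : ℝ} {H : SimpleGraph (Fin n)}
    (h : ∃ y, CapturesNear (lap H) g (g / 4) y) :
    CapturesNear (lap H) g (g / 4) (captureVec g H) := by
  rw [captureVec, dif_pos h]
  exact h.choose_spec

/-- The event that the row `v` of the centred adjacency matrix is not small on `x`. -/
def rowDeviates (P : Fin n → Fin n → ℝ) (s : ℝ) (x : SimpleGraph (Fin n) → Fin n → ℝ)
    (v : Fin n) (G : SimpleGraph (Fin n)) : Prop :=
  s * ‖x (isolate G v)‖ < |∑ w, centred P G v w * x (isolate G v) w|

theorem norm_planted_le : ‖planted n‖ ≤ 1 :=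
  (pi_norm_le_iff_of_nonneg zero_le_one).mpr fun v => by
    rw [Real.norm_eq_abs]; unfold planted; split_ifs <;> simp

theorem norm_one_vec_le : ‖(1 : Fin n → ℝ)‖ ≤ 1 :=
  (pi_norm_le_iff_of_nonneg zero_le_one).mpr fun v => by simp

/-- A graph on which no deviation event occurs is typical. -/
theorem isTypical_of_not_deviates (hn : 0 < n) (h4 : 4 ∣ n) {α K p q η : ℝ} (hα : 2 ≤ α)
    (hK : 3 * α ≤ K) (hq : 0 < q) (hp : p = α * q) (hKp : K * p ≤ 1) (hη : 0 < η)
    (hηK : 4000 * K ^ 2 * η ≤ 1) (hηT : 2 ≤ η * (n * p)) (hT : 256 * α ^ 2 * K ≤ n * p)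
    {k : ℕ} (hk : k ≠ 0) {G : SimpleGraph (Fin n)}
    (htr : ¬ (η / 2 * (n * p)) ^ (2 * k) < (centred (nestedP n p q K) G ^ (2 * k)).trace)
    (h1 : ∀ v, ¬ rowDeviates (nestedP n p q K) (η / 2 * (n * p)) (fun _ => 1) v G)
    (h2 : ∀ v, ¬ rowDeviates (nestedP n p q K) (η / 2 * (n * p)) (fun _ => planted n) v G)
    (h3 : ∀ v, ¬ rowDeviates (nestedP n p q K) (η / 2 * (n * p)) (captureVec (n * q)) v G) :
    IsTypical α K (n * p) (n * q) η G := by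
  have hn' : (0 : ℝ) < n := by exact_mod_cast hn
  have hp0 : 0 ≤ p := by rw [hp]; positivity
  have hqp : q ≤ p := by rw [hp]; nlinarith
  have hK1 : 1 ≤ K := by linarith
  have hst : η / 2 * (n * p) + 1 ≤ η * (n * p) := by linarith
  have hrow : ∀ (x : Fin n → ℝ) (v : Fin n),
      |∑ w, centred (nestedP n p q K) G v w * x w| ≤ η / 2 * (n * p) * ‖x‖ →
      |(noise (n * p) (n * q) K G *ᵥ x) v| ≤ η * (n * p) * ‖x‖ := fun x v =>
    abs_noise_mulVec_le_of_centred hn hp0 hq.le hqp hK1 hKp hst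
  have hunit : ∀ x : Fin n → ℝ, ‖x‖ ≤ 1 → η * (n * p) * ‖x‖ ≤ η * (n * p) := fun x hx =>
    mul_le_of_le_one_right (by linarith) hx
  refine
    { four_dvd := h4, n_pos := hn, g_pos := by positivity, T_eq := by rw [hp]; ring, two_le := hα,
      le_K := hK, eta_pos := hη, eta_le := hηK, one_le := by linarith, large := hT,
      form_le := fun x y => ?_
      row_one := fun v => (hrow 1 v (not_lt.mp (h1 v))).trans (hunit _ norm_one_vec_le)
      row_planted := fun v => (hrow _ v (not_lt.mp (h2 v))).trans (hunit _ norm_planted_le)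
      row_capture := fun v hv =>
        ⟨_, captureVec_spec hv, hrow _ v (not_lt.mp (h3 v))⟩ }
  have hsymm : (centred (nestedP n p q K) G).IsSymm :=
    Matrix.IsSymm.ext fun i j => centred_comm (nestedP_comm p q K) G j i
  have e1 := abs_dot_mulVec_le_of_trace hsymm hk (by linarith) (not_lt.mp htr) x y
  have e2 : |x ⬝ᵥ ((fun v => nestedP n p q K v v) * y)| ≤ 1 * (l2 x * l2 y) :=
    abs_dot_mul_le (fun v => by
      rw [abs_of_nonneg (nestedP_nonneg hp0 hq.le (by linarith) v v)]
      exact (nestedP_le hp0 hqp hK1 v v).trans hKp) x y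
  have e3 : Matrix.diagonal (fun v => nestedP n p q K v v) *ᵥ y =
      (fun v => nestedP n p q K v v) * y := funext fun v => Matrix.mulVec_diagonal _ _ _
  have e4 := mul_le_mul_of_nonneg_right hst (mul_nonneg (l2_nonneg x) (l2_nonneg y))
  rw [noise_eq hn, Matrix.sub_mulVec, e3, dotProduct_sub]
  refine (abs_sub _ _).trans ?_
  linarith

section Probability

variable {α K p q η : ℝ} {μ : PMF (SimpleGraph (Fin n))}

theorem sum_offP_nestedP_le (hp : 0 ≤ p) (hqp : q ≤ p) (hK : 1 ≤ K) (v : Fin n) :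
    ∑ w, offP (nestedP n p q K) v w ≤ K * (n * p) := by
  calc _ ≤ ∑ _w : Fin n, K * p := Finset.sum_le_sum fun w _ => by
        rw [offP, Matrix.of_apply]
        split_ifs
        · positivity
        · exact nestedP_le hp hqp hK v w
    _ = _ := by simp; ring

theorem prob_rowDeviates_le (hμ : IsEdgeProduct (nestedP n p q K) μ) (hp : 0 ≤ p) (hq : 0 ≤ q)
    (hqp : q ≤ p) (hK : 1 ≤ K) (hKp : K * p ≤ 1) (hη : 0 < η) (hη1 : η ≤ 1) (hn : 0 < n)
    (hlog : 64 * K * Real.log n ≤ η ^ 2 * (n * p)) (x : SimpleGraph (Fin n) → Fin n → ℝ)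
    (v : Fin n) :
    prob μ (rowDeviates (nestedP n p q K) (η / 2 * (n * p)) x v) ≤ 2 * ((n : ℝ) ^ 4)⁻¹ := by
  have hn' : (0 : ℝ) < n := by exact_mod_cast hn
  have hK0 : 0 < K := by linarith
  have h := prob_lt_abs_row_le hμ (nestedP_comm p q K) (nestedP_nonneg hp hq hK0.le)
    (fun v w => (nestedP_le hp hqp hK v w).trans hKp) (θ := η / (4 * K)) (by positivity)
    ((div_le_one (by positivity)).mpr (by linarith)) v (sum_offP_nestedP_le hp hqp hK v) x
    (η / 2 * (n * p))
  refine h.trans (mul_le_mul_of_nonneg_left ?_ zero_le_two)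
  have e : (η / (4 * K)) ^ 2 * (K * (n * p)) - η / (4 * K) * (η / 2 * (n * p)) =
      -(η ^ 2 * (n * p) / (16 * K)) := by
    field_simp
    ring
  have e2 : ((n : ℝ) ^ 4)⁻¹ = Real.exp (-(4 * Real.log n)) := by
    rw [Real.exp_neg, show (4 : ℝ) * Real.log n = ((4 : ℕ) : ℝ) * Real.log n by norm_num,
      Real.exp_nat_mul, Real.exp_log hn']
  rw [e, e2, Real.exp_le_exp, neg_le_neg_iff, le_div_iff₀ (by positivity)]
  linarith

theorem prob_trace_nestedP_le (hμ : IsEdgeProduct (nestedP n p q K) μ) (hp : 0 < p) (hq : 0 ≤ q)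
    (hqp : q ≤ p) (hK : 1 ≤ K) (hKp : K * p ≤ 1) (hη : 0 < η) (hη1 : η ≤ 1) (hn : 0 < n)
    (hlog1 : 1 ≤ Real.log n) (hlog : 6000 * K * Real.log n ≤ η ^ 2 * (n * p)) :
    prob μ (fun G => (η / 2 * (n * p)) ^ (2 * ⌈Real.log n⌉₊) <
      (centred (nestedP n p q K) G ^ (2 * ⌈Real.log n⌉₊)).trace) ≤ n * ((n : ℝ) ^ 4)⁻¹ := by
  have hn' : (0 : ℝ) < n := by exact_mod_cast hn
  have hK0 : 0 < K := by linarith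
  set k := ⌈Real.log n⌉₊ with hk
  have hk0 : 0 < k := Nat.ceil_pos.mpr (by linarith)
  have hk1 : Real.log n ≤ k := Nat.le_ceil _
  have hk2 : (k : ℝ) ≤ 2 * Real.log n := by
    have := Nat.ceil_lt_add_one (show 0 ≤ Real.log n by linarith)
    linarith
  have hT : 0 < n * p := by positivity
  have hlogT : 6000 * K * Real.log n ≤ n * p := by
    have : η ^ 2 ≤ 1 := pow_le_one₀ hη.le hη1
    nlinarith
  have hKlog : Real.log n ≤ K * Real.log n := by nlinarith
  have h := prob_trace_le hμ (nestedP_comm p q K) (nestedP_nonneg hp.le hq hK0.le)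
    (fun v w => (nestedP_le hp.le hqp hK v w).trans hKp) (B := K * (n * p))
    (t := η / 2 * (n * p)) hk0 (fun v w => by
      have := mul_le_mul_of_nonneg_left (nestedP_le hp.le hqp hK v w) hn'.le
      linarith) (by nlinarith) hn (by positivity)
  refine h.trans (mul_le_mul_of_nonneg_left ?_ hn'.le)
  have hexp : Real.exp 4 ≤ 81 := by
    have h3 : Real.exp 1 ≤ 3 := by linarith [Real.exp_one_lt_d9]
    have := pow_le_pow_left₀ (Real.exp_pos 1).le h3 4
    rw [← Real.exp_nat_mul] at this
    norm_num at this
    exact this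
  have hbase : 8 * k * (K * (n * p)) / (η / 2 * (n * p)) ^ 2 ≤ Real.exp (-4) := by
    have e : 8 * k * (K * (n * p)) / (η / 2 * (n * p)) ^ 2 = 32 * k * K / (η ^ 2 * (n * p)) := by
      field_simp
      ring
    rw [e, div_le_iff₀ (by positivity), Real.exp_neg]
    have h5 : (81 : ℝ)⁻¹ ≤ (Real.exp 4)⁻¹ := inv_anti₀ (Real.exp_pos 4) hexp
    have h6 := mul_le_mul_of_nonneg_right h5 (show 0 ≤ η ^ 2 * (n * p) by positivity)
    have h7 := mul_le_mul_of_nonneg_right hk2 hK0.le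
    linarith
  calc _ ≤ Real.exp (-4) ^ k := pow_le_pow_left₀ (by positivity) hbase k
    _ = Real.exp (-(4 * k)) := by rw [← Real.exp_nat_mul]; ring_nf
    _ ≤ Real.exp (-(4 * Real.log n)) := Real.exp_le_exp.mpr (by linarith)
    _ = _ := by
      rw [Real.exp_neg, show (4 : ℝ) * Real.log n = ((4 : ℕ) : ℝ) * Real.log n by norm_num,
        Real.exp_nat_mul, Real.exp_log hn']

theorem prob_not_isTypical_le (hμ : IsEdgeProduct (nestedP n p q K) μ) (hn : 3 ≤ n) (h4 : 4 ∣ n)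
    (hα : 2 ≤ α) (hK : 3 * α ≤ K) (hq : 0 < q) (hp : p = α * q) (hKp : K * p ≤ 1) (hη : 0 < η)
    (hηK : 4000 * K ^ 2 * η ≤ 1) (hlog : 6000 * K * Real.log n ≤ η ^ 2 * (n * p)) :
    prob μ (fun G => ¬ IsTypical α K (n * p) (n * q) η G) ≤ 1 / n := by
  have hn0 : 0 < n := by omega
  have hn3 : (3 : ℝ) ≤ n := by exact_mod_cast hn
  have hp0 : 0 < p := by rw [hp]; positivity
  have hqp : q ≤ p := by rw [hp]; nlinarith
  have hK6 : 6 ≤ K := by linarith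
  have hη1 : η ≤ 1 / 1000 := by nlinarith [sq_nonneg K]
  have hlog1 : 1 ≤ Real.log n := by
    rw [Real.le_log_iff_exp_le (by linarith)]
    linarith [Real.exp_one_lt_d9]
  have hT : 0 < n * p := by positivity
  have hKlog : 6000 * K ≤ η ^ 2 * (n * p) := by nlinarith
  have hηT : 2 ≤ η * (n * p) := by nlinarith [mul_pos hη hT]
  have hlarge : 256 * α ^ 2 * K ≤ n * p := by
    have e1 : 6000 * K * (4000 * K ^ 2) ≤ η * (n * p) := by
      have := mul_le_mul_of_nonneg_left hKlog (show 0 ≤ 4000 * K ^ 2 by positivity)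
      have h2 := mul_le_mul_of_nonneg_right hηK (show 0 ≤ η * (n * p) by positivity)
      nlinarith
    have e2 : η * (n * p) ≤ n * p := by nlinarith
    have e3 : α ^ 2 ≤ K ^ 2 := pow_le_pow_left₀ (by linarith) (by linarith) 2
    have e4 := mul_le_mul_of_nonneg_right e3 (show 0 ≤ K by linarith)
    have e5 : 0 ≤ K ^ 2 * K := by positivity
    nlinarith
  have hrow := fun x => prob_rowDeviates_le hμ hp0.le hq.le hqp (by linarith) hKp hη
    (by linarith) hn0 (by nlinarith) x
  have htr := prob_trace_nestedP_le hμ hp0 hq.le hqp (by linarith) hKp hη (by linarith) hn0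
    hlog1 hlog
  set D := rowDeviates (nestedP n p q K) (η / 2 * (n * p)) with hD
  have hsum : ∀ x, prob μ (fun G => ∃ v, D x v G) ≤ n * (2 * ((n : ℝ) ^ 4)⁻¹) := by
    intro x
    refine (prob_exists_le μ (D x)).trans ((Finset.sum_le_sum fun v _ => hrow x v).trans ?_)
    simp
  calc _ ≤ prob μ (fun G => (((η / 2 * (n * p)) ^ (2 * ⌈Real.log n⌉₊) <
          (centred (nestedP n p q K) G ^ (2 * ⌈Real.log n⌉₊)).trace) ∨
        ∃ v, D (fun _ => 1) v G) ∨ ((∃ v, D (fun _ => planted n) v G) ∨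
          ∃ v, D (captureVec (n * q)) v G)) := by
        refine prob_mono μ fun G hG => ?_
        by_contra! hcon
        obtain ⟨⟨c1, c2⟩, c3, c4⟩ := hcon
        exact hG (isTypical_of_not_deviates hn0 h4 hα hK hq hp hKp hη hηK hηT hlarge
          (Nat.ceil_pos.mpr (by linarith)).ne' (not_lt.mpr c1) c2 c3 c4)
    _ ≤ (n * ((n : ℝ) ^ 4)⁻¹ + n * (2 * ((n : ℝ) ^ 4)⁻¹)) +
          (n * (2 * ((n : ℝ) ^ 4)⁻¹) + n * (2 * ((n : ℝ) ^ 4)⁻¹)) :=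
        (prob_or_le μ _ _).trans (add_le_add
          ((prob_or_le μ _ _).trans (add_le_add htr (hsum _)))
          ((prob_or_le μ _ _).trans (add_le_add (hsum _) (hsum _))))
    _ ≤ 1 / n := by
        have hn' : (0 : ℝ) < n := by linarith
        rw [show (n * ((n : ℝ) ^ 4)⁻¹ + n * (2 * ((n : ℝ) ^ 4)⁻¹)) +
          (n * (2 * ((n : ℝ) ^ 4)⁻¹) + n * (2 * ((n : ℝ) ^ 4)⁻¹)) = 7 / (n : ℝ) ^ 3 by
            field_simp; norm_num, div_le_div_iff₀ (by positivity) hn']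
        have h9 : (9 : ℝ) ≤ (n : ℝ) ^ 2 := by nlinarith
        nlinarith [mul_le_mul_of_nonneg_left h9 hn'.le]

end Probability

/-- **Theorem 3 (inconsistency of normalized spectral bisection).**
For every constant `α ≥ 2` and `K ≥ 3α` there are `c > 0` and `N` such that for every
`n ≥ N` divisible by `4` and parameters `p = αq ≥ c log n / n` (with `Kp ≤ 1`), the
nested block distribution is an NSSBM instance on which unnormalized spectral bisection
is strongly consistent, while normalized spectral bisection — with either `𝓛_sym` or
`𝓛_rw` — misclassifies at least `24%` of the vertices with probability at least `1 - 1/n`. -/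
theorem normalized_bisection_inconsistent :
    ∀ α K : ℝ, 2 ≤ α → 3 * α ≤ K → ∃ c : ℝ, 0 < c ∧ ∃ N : ℕ, ∀ n : ℕ, N ≤ n → 4 ∣ n →
      ∀ p q : ℝ, 0 < q → p = α * q → c * Real.log n / n ≤ p → K * p ≤ 1 →
      ∀ μ : PMF (SimpleGraph (Fin n)), IsEdgeProduct (nestedP n p q K) μ →
        (1 - 1 / (n : ℝ≥0∞) ≤ μ.toMeasure {G | BisectCorrect n (lap G)}) ∧
        (1 - 1 / (n : ℝ≥0∞) ≤ μ.toMeasure {G |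
          ∀ u : Fin n → ℝ, IsUnitEigenvector (lapSym G) (eig (lapSym G) 1) u →
            24 / 100 ≤ misclassRate n {v | u v < 0}}) ∧
        (1 - 1 / (n : ℝ≥0∞) ≤ μ.toMeasure {G |
          ∀ u : Fin n → ℝ, IsUnitEigenvector (lapRW G) (eig (lapRW G) 1) u →
            24 / 100 ≤ misclassRate n {v | u v < 0}}) := by
  intro α K hα hK
  have hK0 : 0 < K := by linarith
  set η := 1 / (4000 * K ^ 2) with hη
  have hη0 : 0 < η := by positivity
  refine ⟨6000 * K / η ^ 2, by positivity, 3, fun n hn h4 p q hq hp hc hKp μ hμ => ?_⟩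
  have hn0 : (0 : ℝ) < n := by exact_mod_cast (show 0 < n by omega)
  have hlog : 6000 * K * Real.log n ≤ η ^ 2 * (n * p) := by
    rw [div_le_iff₀ hn0, div_mul_eq_mul_div, div_le_iff₀ (by positivity)] at hc
    linarith
  have hηK : 4000 * K ^ 2 * η ≤ 1 := (mul_one_div_cancel (by positivity)).le
  have hprob := prob_not_isTypical_le hμ hn h4 hα hK hq hp hKp hη0 hηK hlog
  exact ⟨one_sub_le_toMeasure ((prob_mono μ fun G hG h => hG h.bisectCorrect).trans hprob),
    one_sub_le_toMeasure
      ((prob_mono μ fun G hG h => hG fun u hu => h.le_misclassRate_lapSym hu).trans hprob),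
    one_sub_le_toMeasure
      ((prob_mono μ fun G hG h => hG fun u hu => h.le_misclassRate_lapRW hu).trans hprob)⟩

end
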